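/- arXiv:1202.1786 — 4 statements merged into one kernel-verified Lean document; each statement's English description precedes it below -/
import Mathlib

section
/- Let K be a field and H a valuative subgroup of K^×. Then there exists a unique valuation subring O_H of K with O_H^× ⊆ H that is largest with this property: every valuation subring O of K with O^× ⊆ H satisfies O ⊆ O_H (i.e. the corresponding valuation v_H is the unique coarsest valuation of K whose unit group is contained in H, and every valuation v with O_v^× ⊆ H is a refinement of v_H). -/
/-!
The join `A ⊔ B` of two valuation subrings of `K` consists of the products `a * b` with `a ∈ A` and
`b ∈ B`: a multiplicative submonoid of `K` containing `A` is closed under addition, because for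
nonzero `x` and `y` one of `x / y`, `y / x` lies in `A`.

The key fact is that every unit of `A ⊔ B` is a unit of `A` times a unit of `B`. If `x ∈ A` and
`x⁻¹ ∈ B`, this is weak approximation: for `p ∈ A \ B` and `q ∈ B \ A`, the quotient
`(q + p * x) / (q + p)` is a unit of `A` and differs from `x` by a unit of `B`. If `x ∈ A` and
`x ∈ B`, write `x⁻¹ = a * b`; then `a⁻¹ = x * b ∈ B` and `b⁻¹ = x * a ∈ A`, so the previous case
applies to `a` and `b`. Up to inverting `x` and exchanging `A` and `B` there is no other case.

Hence the valuation subrings with unit group in `H` form a directed family, and their union is the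
largest of them.
-/

namespace ValuativeSubgroup

variable {K : Type*} [Field K] {A B : ValuationSubring K}

lemma mem_unitGroup_iff_mem_and_inv_mem {x : Kˣ} :
    x ∈ A.unitGroup ↔ (x : K) ∈ A ∧ (x : K)⁻¹ ∈ A := by
  have hx0 : 0 < A.valuation (x : K) := zero_lt_iff.mpr (A.valuation.ne_zero_iff.mpr x.ne_zero)
  rw [A.mem_unitGroup_iff, le_antisymm_iff, ← A.valuation_le_one_iff, ← A.valuation_le_one_iff,
    map_inv₀, inv_le_one₀ hx0]

lemma add_mem_of_toSubmonoid_le {S : Submonoid K} (hAS : A.toSubring.toSubmonoid ≤ S) {x y : K}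
    (hx : x ∈ S) (hy : y ∈ S) : x + y ∈ S := by
  have add_mem_of_div_mem {u v : K} (hv : v ∈ S) (hv0 : v ≠ 0) (huv : u / v ∈ A) :
      u + v ∈ S := by
    have hmul : (u / v + 1) * v ∈ S := mul_mem (hAS (A.add_mem _ _ huv A.one_mem)) hv
    rwa [add_one_mul, div_mul_cancel₀ u hv0] at hmul
  obtain rfl | hx0 := eq_or_ne x 0
  · rwa [zero_add]
  obtain rfl | hy0 := eq_or_ne y 0
  · rwa [add_zero]
  obtain hdiv | hdiv := A.mem_or_inv_mem (x / y)
  · exact add_mem_of_div_mem hy hy0 hdiv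
  · rw [inv_div] at hdiv
    rw [add_comm]
    exact add_mem_of_div_mem hx hx0 hdiv

/-- A multiplicative submonoid of `K` containing a valuation subring, regarded as a valuation
subring; it is used to describe joins of valuation subrings multiplicatively. -/
def ofSubmonoidLE (A : ValuationSubring K) (S : Submonoid K)
    (hAS : A.toSubring.toSubmonoid ≤ S) : ValuationSubring K where
  __ := S
  zero_mem' := hAS A.zero_mem
  add_mem' := add_mem_of_toSubmonoid_le hAS
  neg_mem' {x} hx := by
    have hmul : -1 * x ∈ S := mul_mem (hAS (A.neg_mem _ A.one_mem)) hx
    rwa [neg_one_mul] at hmul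
  mem_or_inv_mem' x := (A.mem_or_inv_mem x).imp (@hAS _) (@hAS _)

lemma mem_sup_iff_exists_mul_eq {x : K} : x ∈ A ⊔ B ↔ ∃ a ∈ A, ∃ b ∈ B, a * b = x := by
  constructor
  · intro hx
    have hle : A ⊔ B ≤ ofSubmonoidLE A (A.toSubring.toSubmonoid ⊔ B.toSubring.toSubmonoid)
        le_sup_left :=
      sup_le (le_sup_left : A.toSubring.toSubmonoid ≤ _ ⊔ B.toSubring.toSubmonoid)
        (le_sup_right : B.toSubring.toSubmonoid ≤ A.toSubring.toSubmonoid ⊔ _)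
    exact Submonoid.mem_sup.mp (hle hx)
  · rintro ⟨a, ha, b, hb, rfl⟩
    exact mul_mem (le_sup_left (b := B) ha) (le_sup_right (a := A) hb)

lemma exists_valuation_eq_one_and_valuation_eq (hAB : ¬ A ≤ B) (hBA : ¬ B ≤ A) {x : K}
    (hxA : x ∈ A) (hxB : x⁻¹ ∈ B) (hx0 : x ≠ 0) :
    ∃ y : K, A.valuation y = 1 ∧ B.valuation y = B.valuation x := by
  obtain ⟨p, hpA, hpB⟩ := SetLike.not_le_iff_exists.mp hAB
  obtain ⟨q, hqB, hqA⟩ := SetLike.not_le_iff_exists.mp hBA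
  have lt_of_mem_of_notMem {C : ValuationSubring K} {s t : K} (hs : s ∈ C) (ht : t ∉ C) :
      C.valuation s < C.valuation t :=
    ((C.valuation_le_one_iff s).mpr hs).trans_lt (not_le.mp (mt (C.valuation_le_one_iff t).mp ht))
  have hpxB : p * x ∉ B := fun h ↦ hpB (by simpa [hx0] using mul_mem h hxB)
  have hA_num : A.valuation (q + p * x) = A.valuation q :=
    A.valuation.map_add_eq_of_lt_left (lt_of_mem_of_notMem (mul_mem hpA hxA) hqA)
  have hA_den : A.valuation (q + p) = A.valuation q :=
    A.valuation.map_add_eq_of_lt_left (lt_of_mem_of_notMem hpA hqA)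
  have hB_num : B.valuation (q + p * x) = B.valuation (p * x) :=
    B.valuation.map_add_eq_of_lt_right (lt_of_mem_of_notMem hqB hpxB)
  have hB_den : B.valuation (q + p) = B.valuation p :=
    B.valuation.map_add_eq_of_lt_right (lt_of_mem_of_notMem hqB hpB)
  have hq0 : A.valuation q ≠ 0 := (zero_le.trans_lt (lt_of_mem_of_notMem hpA hqA)).ne'
  have hp0 : B.valuation p ≠ 0 := (zero_le.trans_lt (lt_of_mem_of_notMem hqB hpB)).ne'
  refine ⟨(q + p * x) / (q + p), ?_, ?_⟩
  · rw [map_div₀, hA_num, hA_den, div_self hq0]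
  · rw [map_div₀, hB_num, hB_den, map_mul, mul_div_cancel_left₀ _ hp0]

lemma mem_sup_unitGroup_of_mem_of_inv_mem {x : Kˣ} (hxA : (x : K) ∈ A) (hxB : (x : K)⁻¹ ∈ B) :
    x ∈ A.unitGroup ⊔ B.unitGroup := by
  by_cases hAB : A ≤ B
  · exact le_sup_right (a := A.unitGroup) (mem_unitGroup_iff_mem_and_inv_mem.mpr ⟨hAB hxA, hxB⟩)
  by_cases hBA : B ≤ A
  · exact le_sup_left (b := B.unitGroup) (mem_unitGroup_iff_mem_and_inv_mem.mpr ⟨hxA, hBA hxB⟩)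
  obtain ⟨y, hyA, hyB⟩ :=
    exists_valuation_eq_one_and_valuation_eq hAB hBA hxA hxB x.ne_zero
  have hy0 : y ≠ 0 := A.valuation.ne_zero_iff.mp (hyA ▸ one_ne_zero)
  let u : Kˣ := Units.mk0 y hy0
  have hxu : u⁻¹ * x ∈ B.unitGroup := by simp [u, hyB]
  exact Subgroup.mem_sup.mpr ⟨u, hyA, u⁻¹ * x, hxu, mul_inv_cancel_left u x⟩

lemma mem_sup_unitGroup_of_mem_of_mem_of_inv_mem_sup {x : Kˣ} (hxA : (x : K) ∈ A)
    (hxB : (x : K) ∈ B) (hx : (x : K)⁻¹ ∈ A ⊔ B) : x ∈ A.unitGroup ⊔ B.unitGroup := by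
  obtain ⟨a, ha, b, hb, hab⟩ := mem_sup_iff_exists_mul_eq.mp hx
  have hab0 : a * b ≠ 0 := hab ▸ inv_ne_zero x.ne_zero
  lift a to Kˣ using (left_ne_zero_of_mul hab0).isUnit
  lift b to Kˣ using (right_ne_zero_of_mul hab0).isUnit
  have habx : (a * b * x : K) = 1 := by rw [hab, inv_mul_cancel₀ x.ne_zero]
  have ha_inv : (a : K)⁻¹ = x * b := inv_eq_of_mul_eq_one_right (by linear_combination habx)
  have hb_inv : (b : K)⁻¹ = x * a := inv_eq_of_mul_eq_one_right (by linear_combination habx)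
  have ha_mem : a ∈ A.unitGroup ⊔ B.unitGroup :=
    mem_sup_unitGroup_of_mem_of_inv_mem ha (ha_inv ▸ mul_mem hxB hb)
  have hb_mem : b ∈ B.unitGroup ⊔ A.unitGroup :=
    mem_sup_unitGroup_of_mem_of_inv_mem hb (hb_inv ▸ mul_mem hxA ha)
  rw [sup_comm] at hb_mem
  have hx_inv : x⁻¹ = a * b := Units.ext (by simpa using hab.symm)
  rw [← inv_mem_iff, hx_inv]
  exact mul_mem ha_mem hb_mem

theorem unitGroup_sup : (A ⊔ B).unitGroup = A.unitGroup ⊔ B.unitGroup := by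
  refine le_antisymm (fun x hx ↦ ?_)
    (ValuationSubring.unitGroup_strictMono.monotone.le_map_sup A B)
  obtain ⟨hx_mem, hx_inv_mem⟩ := mem_unitGroup_iff_mem_and_inv_mem.mp hx
  obtain hxA | hxA := A.mem_or_inv_mem x <;> obtain hxB | hxB := B.mem_or_inv_mem x
  · exact mem_sup_unitGroup_of_mem_of_mem_of_inv_mem_sup hxA hxB hx_inv_mem
  · exact mem_sup_unitGroup_of_mem_of_inv_mem hxA hxB
  · rw [sup_comm]
    exact mem_sup_unitGroup_of_mem_of_inv_mem hxB hxA
  · rw [← inv_mem_iff]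
    rw [← Units.val_inv_eq_inv_val] at hxA hxB
    exact mem_sup_unitGroup_of_mem_of_mem_of_inv_mem_sup hxA hxB (by simpa using hx_mem)

section DirectedUnion

variable {S : Set (ValuationSubring K)}

lemma exists_forall_mem_iff_of_directedOn (hne : S.Nonempty) (hdir : DirectedOn (· ≤ ·) S) :
    ∃ V : ValuationSubring K, ∀ x, x ∈ V ↔ ∃ A ∈ S, x ∈ A := by
  obtain ⟨A, hA⟩ := hne
  have hdir_image : DirectedOn (· ≤ ·) (ValuationSubring.toSubring '' S) :=
    hdir.mono_comp fun _ _ h ↦ h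
  refine ⟨.ofLE A (sSup (ValuationSubring.toSubring '' S))
    (le_sSup (Set.mem_image_of_mem _ hA)), fun x ↦ ?_⟩
  exact (Subring.mem_sSup_of_directedOn ⟨_, Set.mem_image_of_mem _ hA⟩ hdir_image).trans
    Set.exists_mem_image

lemma exists_isLUB_forall_mem_unitGroup_iff_of_directedOn (hne : S.Nonempty)
    (hdir : DirectedOn (· ≤ ·) S) :
    ∃ V : ValuationSubring K, IsLUB S V ∧ ∀ x, x ∈ V.unitGroup ↔ ∃ A ∈ S, x ∈ A.unitGroup := by
  obtain ⟨V, hV⟩ := exists_forall_mem_iff_of_directedOn hne hdir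
  have le_V {A : ValuationSubring K} (hA : A ∈ S) : A ≤ V := fun x hx ↦ (hV x).mpr ⟨A, hA, hx⟩
  refine ⟨V, ⟨fun A hA ↦ le_V hA, fun W hW x hx ↦ ?_⟩, fun x ↦ ⟨fun hx ↦ ?_, ?_⟩⟩
  · obtain ⟨A, hA, hxA⟩ := (hV x).mp hx
    exact hW hA hxA
  · obtain ⟨hx_mem, hx_inv_mem⟩ := mem_unitGroup_iff_mem_and_inv_mem.mp hx
    obtain ⟨A, hA, hxA⟩ := (hV _).mp hx_mem
    obtain ⟨B, hB, hxB⟩ := (hV _).mp hx_inv_mem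
    obtain ⟨C, hC, hAC, hBC⟩ := hdir A hA B hB
    exact ⟨C, hC, mem_unitGroup_iff_mem_and_inv_mem.mpr ⟨hAC hxA, hBC hxB⟩⟩
  · rintro ⟨A, hA, hxA⟩
    exact ValuationSubring.unitGroup_le_unitGroup.mpr (le_V hA) hxA

end DirectedUnion

lemma supClosed_setOf_unitGroup_le (H : Subgroup Kˣ) :
    SupClosed {O : ValuationSubring K | O.unitGroup ≤ H} :=
  fun _ hA _ hB ↦ unitGroup_sup.trans_le (sup_le hA hB)

theorem exists_isGreatest_setOf_unitGroup_le {H : Subgroup Kˣ}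
    (hval : ∃ O : ValuationSubring K, O.unitGroup ≤ H) :
    ∃ V, IsGreatest {O : ValuationSubring K | O.unitGroup ≤ H} V := by
  obtain ⟨V, hV_lub, hV_unit⟩ := exists_isLUB_forall_mem_unitGroup_iff_of_directedOn hval
    (supClosed_setOf_unitGroup_le H).directedOn
  refine ⟨V, fun x hx ↦ ?_, hV_lub.1⟩
  obtain ⟨A, hA, hxA⟩ := (hV_unit x).mp hx
  exact hA hxA

end ValuativeSubgroup

/-- For a valuative subgroup `H ≤ K^×` there is a unique largest valuation
subring of `K` whose unit group is contained in `H` (the valuation `v_H`). -/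
theorem stmt_1 {K : Type*} [Field K] (H : Subgroup Kˣ)
    (hval : ∃ O : ValuationSubring K, O.unitGroup ≤ H) :
    ∃! OH : ValuationSubring K, OH.unitGroup ≤ H ∧
      ∀ O : ValuationSubring K, O.unitGroup ≤ H → O ≤ OH := by
  obtain ⟨V, hV⟩ := ValuativeSubgroup.exists_isGreatest_setOf_unitGroup_le hval
  exact ⟨V, hV, fun W (hW : IsGreatest _ W) ↦ hW.unique hV⟩
end

section
/- Let K be an arbitrary field, ℓ a prime, and T a subgroup of K^× with K^{×ℓ} ⊆ T and −1 ∈ T. The following are equivalent: (1) there exists a subgroup H with T ⊆ H ⊆ K^× such that the quotient H/T is cyclic (possibly trivial), H is valuative, and 1 + m_{v_H} ⊆ T, where v_H is the coarsest valuation of K with O_{v_H}^× ⊆ H; (2) T is rigid. -/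
/-- A subgroup `T ≤ K^×` is rigid if for every `x ∈ K^× \ T` the
subgroup of `K^×/T` generated by the images of `x` and `1 - x` is cyclic. -/
def IsRigid {K : Type*} [Field K] (T : Subgroup Kˣ) : Prop :=
  ∀ x : Kˣ, x ∉ T → ∀ h : (1 : K) - (x : K) ≠ 0,
    IsCyclic ↥(Subgroup.closure {(QuotientGroup.mk x : Kˣ ⧸ T),
      QuotientGroup.mk (Units.mk0 ((1 : K) - (x : K)) h)})

/-!
Let `c` be the class map `Kˣ → Kˣ/T`, with values written additively as vectors over `ZMod ℓ`.
Rigidity says that `c (a + b)` lies on the affine line through `c a` and `c b` whenever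
`c a ≠ c b`. If `c (a + b)` differs from both `c a` and `c b`, it is the barycentre of these points
for suitable masses, and masses add and propagate: were there two such instances `1 + x` and `1 + y`
with `c x` and `c y` independent, then `1` and `n + x` would have masses `1` and `n + w` for every
natural number `n`, whereas the total mass `n + 1 + w` vanishes for some `n`. So all exceptional
classes lie on one line `W`, and for `x` outside `W` either `c (1 - x) = 0` or `c (1 - x) = c x`.
Which of the two occurs tells whether `x` or `x⁻¹` should lie in the maximal ideal, and this
determines a valuation ring whose units have their classes in `W`, as soon as `c (1 - x * y) = 0`
for all such `x` and `y` in the maximal ideal. This last condition is automatic unless `ℓ = 2`. For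
`ℓ = 2` there are no exceptional classes and the condition can fail only for `x` and `y` in a single
class, so that `W` can be chosen to contain it.
-/

/-- A homomorphism `Kˣ → V` killing `-1`, with `V` written additively. It is encoded as a function
on `K` with the junk value `0` at `0`, so that it can be applied to sums. -/
structure ClassMap (K V : Type*) [Field K] [AddCommGroup V] where
  toFun : K → V
  map_zero' : toFun 0 = 0
  map_mul' : ∀ {x y : K}, x ≠ 0 → y ≠ 0 → toFun (x * y) = toFun x + toFun y
  map_neg_one' : toFun (-1) = 0

namespace ClassMap

section Basic

variable {K V : Type*} [Field K] [AddCommGroup V]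

instance : FunLike (ClassMap K V) K V where
  coe := toFun
  coe_injective c d h := by cases c; cases d; congr

variable (c : ClassMap K V) {x y : K}

protected theorem map_zero : c 0 = 0 := c.map_zero'

protected theorem map_mul (hx : x ≠ 0) (hy : y ≠ 0) : c (x * y) = c x + c y := c.map_mul' hx hy

protected theorem map_one : c 1 = 0 := by
  simpa using c.map_mul one_ne_zero one_ne_zero

protected theorem map_neg (x : K) : c (-x) = c x := by
  obtain rfl | hx := eq_or_ne x 0
  · rw [neg_zero]
  · rw [← neg_one_mul, c.map_mul (neg_ne_zero.2 one_ne_zero) hx,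
      show c (-1) = 0 from c.map_neg_one', zero_add]

protected theorem map_inv (x : K) : c x⁻¹ = -c x := by
  obtain rfl | hx := eq_or_ne x 0
  · rw [inv_zero, c.map_zero, neg_zero]
  · rw [eq_neg_iff_add_eq_zero, ← c.map_mul (inv_ne_zero hx) hx, inv_mul_cancel₀ hx, c.map_one]

protected theorem map_div (hx : x ≠ 0) (hy : y ≠ 0) : c (x / y) = c x - c y := by
  rw [div_eq_mul_inv, c.map_mul hx (inv_ne_zero hy), c.map_inv, sub_eq_add_neg]

theorem map_mul_of_map_eq_zero (hx : x ≠ 0) (hy : y ≠ 0) (h : c y = 0) : c (x * y) = c x := by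
  rw [c.map_mul hx hy, h, add_zero]

theorem map_div_of_map_eq_zero (hx : x ≠ 0) (hy : y ≠ 0) (h : c y = 0) : c (x / y) = c x := by
  rw [c.map_div hx hy, h, sub_zero]

variable {c}

theorem ne_zero_of_map_ne_zero (hx : c x ≠ 0) : x ≠ 0 :=
  fun h => hx (h ▸ c.map_zero)

theorem one_sub_ne_zero (hx : c x ≠ 0) : 1 - x ≠ 0 :=
  fun h => hx (by rw [← sub_eq_zero.1 h, c.map_one])

theorem one_add_ne_zero (hx : c x ≠ 0) : 1 + x ≠ 0 := by
  simpa only [sub_neg_eq_add] using one_sub_ne_zero ((c.map_neg x).trans_ne hx)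

theorem map_one_sub_inv (hx : c x ≠ 0) : c (1 - x⁻¹) = c (1 - x) - c x := by
  have hx₀ := ne_zero_of_map_ne_zero hx
  rw [show 1 - x⁻¹ = -((1 - x) / x) by field_simp; ring, c.map_neg,
    c.map_div (one_sub_ne_zero hx) hx₀]

variable {W : AddSubgroup V}

theorem map_ne_zero_of_notMem (hx : c x ∉ W) : c x ≠ 0 :=
  fun h => hx (h ▸ W.zero_mem)

theorem map_inv_notMem (hx : c x ∉ W) : c x⁻¹ ∉ W := by
  rwa [c.map_inv, W.neg_mem_iff]

theorem map_mul_notMem (hx₀ : x ≠ 0) (hx : c x ∈ W) (hy : c y ∉ W) : c (x * y) ∉ W := by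
  rwa [c.map_mul hx₀ (ne_zero_of_map_ne_zero (map_ne_zero_of_notMem hy)),
    add_mem_cancel_left hx]

end Basic

section Barycentre

variable {K F V : Type*} [Field K] [Field F] [AddCommGroup V] [Module F V]

/-- Rigidity of a class map with values in an `F`-vector space: the classes of `x` and `1 - x`
span at most a line, unless `x` has trivial class. -/
def IsCollinear (F : Type*) [Field F] [Module F V] (c : ClassMap K V) : Prop :=
  ∀ x, c x ≠ 0 → c (1 - x) ∈ Submodule.span F {c x}

/-- `c (a + b)` is the barycentre of `c a` with mass `m` and `c b` with mass `n`, both masses and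
the total mass being nonzero. -/
structure HasMasses (c : ClassMap K V) (a b : K) (m n : F) : Prop where
  left_ne_zero : m ≠ 0
  right_ne_zero : n ≠ 0
  add_ne_zero : m + n ≠ 0
  smul_map_add : (m + n) • c (a + b) = m • c a + n • c b

variable {c : ClassMap K V} {a b d x y : K} {m n k w u : F}

theorem IsCollinear.exists_map_add (hc : c.IsCollinear F) (hab : c a ≠ c b) :
    ∃ t : F, c (a + b) = c a + t • (c b - c a) := by
  obtain rfl | ha := eq_or_ne a 0
  · exact ⟨1, by simp [c.map_zero]⟩
  obtain rfl | hb := eq_or_ne b 0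
  · exact ⟨0, by simp⟩
  have hdiv : c (-(b / a)) = c b - c a := by rw [c.map_neg, c.map_div hb ha]
  have hne : c (-(b / a)) ≠ 0 := by rw [hdiv]; exact sub_ne_zero.2 hab.symm
  obtain ⟨t, ht⟩ := Submodule.mem_span_singleton.1 (hc _ hne)
  refine ⟨t, ?_⟩
  rw [show a + b = a * (1 - -(b / a)) by field_simp; ring, c.map_mul ha (one_sub_ne_zero hne),
    ← ht, hdiv]

theorem IsCollinear.exists_hasMasses (hc : c.IsCollinear F) (hx : c x ≠ 0) (h₀ : c (1 - x) ≠ 0)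
    (h₁ : c (1 - x) ≠ c x) : ∃ w : F, c.HasMasses 1 (-x) 1 w := by
  obtain ⟨t, ht⟩ := Submodule.mem_span_singleton.1 (hc x hx)
  have t₀ : t ≠ 0 := by rintro rfl; exact h₀ (by rw [← ht, zero_smul])
  have t₁ : 1 - t ≠ 0 := sub_ne_zero.2 (by rintro rfl; exact h₁ (by rw [← ht, one_smul]))
  have hsum : 1 + t / (1 - t) = (1 - t)⁻¹ := by field_simp; ring
  refine ⟨t / (1 - t), one_ne_zero, div_ne_zero t₀ t₁, hsum ▸ inv_ne_zero t₁, ?_⟩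
  rw [hsum, ← sub_eq_add_neg, ← ht, c.map_one, c.map_neg, smul_zero, zero_add, smul_smul,
    inv_mul_eq_div]

namespace HasMasses

theorem symm (h : c.HasMasses a b m n) : c.HasMasses b a n m where
  left_ne_zero := h.right_ne_zero
  right_ne_zero := h.left_ne_zero
  add_ne_zero := add_comm m n ▸ h.add_ne_zero
  smul_map_add := by rw [add_comm n, add_comm b, h.smul_map_add, add_comm]

theorem map_add (h : c.HasMasses a b m n) :
    c (a + b) = c a + (n / (m + n)) • (c b - c a) := by
  refine smul_right_injective V h.add_ne_zero ?_
  simp only [h.smul_map_add, smul_add, smul_smul, mul_div_cancel₀ n h.add_ne_zero]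
  module

theorem map_one_add (h : c.HasMasses 1 x 1 w) : c (1 + x) = (w / (1 + w)) • c x := by
  simpa only [c.map_one, zero_add, sub_zero] using h.map_add

/-- The class of `a + b + d` lies on the line joining `c (a + b)` to `c d` and on the line joining
`c (a + d)` to `c b`; these meet only in the barycentre of the three classes. -/
theorem smul_map_add_add (hc : c.IsCollinear F)
    (hli : LinearIndependent F ![c b - c a, c d - c a])
    (hb : c.HasMasses a b m n) (hd : c.HasMasses a d m k) :
    m + n + k ≠ 0 ∧
      (m + n + k) • (c (a + b + d) - c a) = n • (c b - c a) + k • (c d - c a) := by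
  have hmn := hb.add_ne_zero
  have hmk := hd.add_ne_zero
  obtain ⟨e, he⟩ := hc.exists_map_add (a := a + b) (b := d) fun h => by
    rw [hb.map_add] at h
    exact one_ne_zero (hli.eq_zero_of_pair (s := -(n / (m + n))) (t := 1)
      (by rw [← h]; module)).2
  obtain ⟨e', he'⟩ := hc.exists_map_add (a := a + d) (b := b) fun h => by
    rw [hd.map_add] at h
    exact one_ne_zero (hli.eq_zero_of_pair (s := 1) (t := -(k / (m + k)))
      (by rw [← h]; module)).1
  have hcd : c (a + b + d) - c a = (n / (m + n) * (1 - e)) • (c b - c a) + e • (c d - c a) := by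
    rw [he, hb.map_add]; module
  have hcb : c (a + b + d) - c a = e' • (c b - c a) + (k / (m + k) * (1 - e')) • (c d - c a) := by
    rw [add_right_comm, he', hd.map_add]; module
  obtain ⟨h₁, h₂⟩ := hli.eq_of_pair (hcd.symm.trans hcb)
  have hek : (m + n + k) * e = k := by
    rw [← h₁] at h₂
    field_simp at h₂
    refine mul_left_cancel₀ hb.left_ne_zero ?_
    linear_combination h₂
  have hen : (m + n + k) * e' = n := by
    rw [← h₁]
    field_simp
    linear_combination -n * hek
  refine ⟨fun h => hd.right_ne_zero (by rw [← hek, h, zero_mul]), ?_⟩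
  rw [hcb, smul_add, smul_smul, smul_smul, hen, ← h₂, hek]

theorem add_left (hc : c.IsCollinear F)
    (hli : LinearIndependent F ![c b - c a, c d - c a])
    (hb : c.HasMasses a b m n) (hd : c.HasMasses a d m k) :
    c.HasMasses (a + b) d (m + n) k := by
  obtain ⟨hs, hz⟩ := smul_map_add_add hc hli hb hd
  refine ⟨hb.add_ne_zero, hd.right_ne_zero, hs, ?_⟩
  rw [hb.smul_map_add]
  linear_combination (norm := module) hz

theorem of_common_left (hc : c.IsCollinear F)
    (hli : LinearIndependent F ![c b - c a, c d - c a])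
    (hb : c.HasMasses a b m n) (hd : c.HasMasses a d m k) :
    c.HasMasses b d n k := by
  obtain ⟨-, hz⟩ := smul_map_add_add hc hli hb hd
  obtain ⟨f, hf⟩ := hc.exists_map_add (a := b) (b := d) fun h =>
    one_ne_zero (hli.eq_zero_of_pair (s := 1) (t := -1) (by rw [h]; module)).1
  have hbd : c (b + d) - c a = (1 - f) • (c b - c a) + f • (c d - c a) := by rw [hf]; module
  obtain ⟨g, hg⟩ := hc.exists_map_add (a := a) (b := b + d) fun h => by
    rw [← h, sub_self] at hbd
    obtain ⟨h₁, h₂⟩ := hli.eq_zero_of_pair hbd.symm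
    exact one_ne_zero (α := F) (by linear_combination h₁ + h₂)
  rw [add_assoc a b d, hg, add_sub_cancel_left, hbd] at hz
  obtain ⟨h₁, h₂⟩ := hli.eq_of_pair (s := (m + n + k) * g * (1 - f)) (t := (m + n + k) * g * f)
    (by rw [← hz]; module)
  have hfk : (n + k) * f = k := by linear_combination h₂ - f * (h₁ + h₂)
  refine ⟨hb.right_ne_zero, hd.right_ne_zero,
    fun h => hd.right_ne_zero (by rw [← hfk, h, zero_mul]), ?_⟩
  rw [hf, smul_add, smul_smul, hfk]
  module

theorem one_add (hc : c.IsCollinear F) (hli : LinearIndependent F ![c x, c y])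
    (hx : c.HasMasses 1 x 1 w) (hy : c.HasMasses 1 y 1 u) :
    c.HasMasses 1 (1 + x) 1 (1 + w) := by
  have hxy : c.HasMasses (1 + x) y (1 + w) u :=
    add_left hc (by simpa only [c.map_one, sub_zero] using hli) hx hy
  refine of_common_left hc ?_ hy.symm hxy.symm
  rw [LinearIndependent.pair_iff]
  intro s t hst
  rw [c.map_one, hx.map_one_add] at hst
  obtain ⟨h₁, h₂⟩ := hli.eq_zero_of_pair (s := t * (w / (1 + w))) (t := -(s + t))
    (by rw [← hst]; module)
  have ht : t = 0 :=
    (mul_eq_zero.1 h₁).resolve_right (div_ne_zero hx.right_ne_zero hx.add_ne_zero)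
  exact ⟨by linear_combination -h₂ - ht, ht⟩

end HasMasses

end Barycentre

section PrimeField

variable {K V : Type*} [Field K] [AddCommGroup V] {ℓ : ℕ} [Fact ℓ.Prime] [Module (ZMod ℓ) V]
  {c : ClassMap K V} {x y : K} {w u : ZMod ℓ}

theorem IsCollinear.hasMasses_natCast_add (hc : c.IsCollinear (ZMod ℓ))
    (hli : LinearIndependent (ZMod ℓ) ![c x, c y])
    (hx : c.HasMasses 1 x 1 w) (hy : c.HasMasses 1 y 1 u) (n : ℕ) :
    LinearIndependent (ZMod ℓ) ![c (n + x), c y] ∧ c.HasMasses 1 (n + x) 1 (n + w) := by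
  induction n with
  | zero => simpa using ⟨hli, hx⟩
  | succ n ih =>
    obtain ⟨hli, hx⟩ := ih
    rw [Nat.cast_succ, Nat.cast_succ, add_comm (n : K), add_comm (n : ZMod ℓ), add_assoc, add_assoc]
    refine ⟨?_, hx.one_add hc hli hy⟩
    have ht := div_ne_zero hx.right_ne_zero hx.add_ne_zero
    rw [hx.map_one_add, LinearIndependent.pair_iff]
    intro s t hst
    obtain ⟨h₁, h₂⟩ := hli.eq_zero_of_pair (by rwa [smul_smul] at hst)
    exact ⟨(mul_eq_zero.1 h₁).resolve_right ht, h₂⟩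

theorem IsCollinear.not_linearIndependent (hc : c.IsCollinear (ZMod ℓ))
    (hx : c.HasMasses 1 x 1 w) (hy : c.HasMasses 1 y 1 u) :
    ¬ LinearIndependent (ZMod ℓ) ![c x, c y] := by
  intro hli
  obtain ⟨n, hn⟩ := ZMod.natCast_zmod_surjective (-1 - w)
  apply (hc.hasMasses_natCast_add hli hx hy n).2.add_ne_zero
  rw [hn]
  ring

end PrimeField

section RigidOutside

variable {K V : Type*} [Field K] [AddCommGroup V] {c : ClassMap K V} {W W' : AddSubgroup V}
  {a b x y z : K}

/-- Rigidity of `c` outside a subgroup `W` in its sharpest form: for `x` with class outside `W`,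
the class of `1 - x` agrees with that of one of its two summands. -/
def IsRigidOutside (c : ClassMap K V) (W : AddSubgroup V) : Prop :=
  ∀ x, c x ∉ W → c (1 - x) = 0 ∨ c (1 - x) = c x

/-- The elements `x` with class outside `W` that are negligible against `1`. They are to be the
elements with class outside `W` of the maximal ideal under construction. -/
def smallSet (c : ClassMap K V) (W : AddSubgroup V) : Set K :=
  {x | c x ∉ W ∧ c (1 - x) = 0}

/-- The conditions under which `c` and `W` determine a valuation ring: rigidity outside `W`, and
products of two small elements are negligible against `1`. -/
structure IsPreadditive (c : ClassMap K V) (W : AddSubgroup V) : Prop where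
  isRigidOutside : c.IsRigidOutside W
  map_one_sub_mul : ∀ ⦃x⦄, x ∈ c.smallSet W → ∀ ⦃y⦄, y ∈ c.smallSet W → c (1 - x * y) = 0

theorem IsRigidOutside.mono (h : c.IsRigidOutside W) (hW : W ≤ W') : c.IsRigidOutside W' :=
  fun x hx => h x fun hx' => hx (hW hx')

theorem smallSet_anti (hW : W ≤ W') : c.smallSet W' ⊆ c.smallSet W :=
  fun _ hx => ⟨fun h => hx.1 (hW h), hx.2⟩

theorem map_ne_zero_of_mem_smallSet (hx : x ∈ c.smallSet W) : c x ≠ 0 :=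
  map_ne_zero_of_notMem hx.1

theorem ne_zero_of_mem_smallSet (hx : x ∈ c.smallSet W) : x ≠ 0 :=
  ne_zero_of_map_ne_zero (map_ne_zero_of_mem_smallSet hx)

theorem one_sub_ne_zero_of_mem_smallSet (hx : x ∈ c.smallSet W) : 1 - x ≠ 0 :=
  one_sub_ne_zero (map_ne_zero_of_mem_smallSet hx)

theorem exists_isRigidOutside_zmultiples {ℓ : ℕ} [Fact ℓ.Prime] [Module (ZMod ℓ) V]
    (hc : c.IsCollinear (ZMod ℓ)) : ∃ v : V, c.IsRigidOutside (AddSubgroup.zmultiples v) := by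
  by_contra! h
  simp only [IsRigidOutside] at h
  push Not at h
  obtain ⟨x, hx, hx₀, hx₁⟩ := h 0
  obtain ⟨y, hy, hy₀, hy₁⟩ := h (c x)
  have hx := map_ne_zero_of_notMem hx
  obtain ⟨w, hw⟩ := hc.exists_hasMasses hx hx₀ hx₁
  obtain ⟨u, hu⟩ := hc.exists_hasMasses (map_ne_zero_of_notMem hy) hy₀ hy₁
  apply hc.not_linearIndependent hw hu
  rw [c.map_neg, c.map_neg, LinearIndependent.pair_iff' hx]
  intro t ht
  obtain ⟨n, rfl⟩ := ZMod.intCast_surjective t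
  exact hy (AddSubgroup.mem_zmultiples_iff.2 ⟨n, by rw [← ht, Int.cast_smul_eq_zsmul]⟩)

namespace IsRigidOutside

theorem map_one_sub_mul_eq_zero_or_eq_left (h : c.IsRigidOutside W) (hx : x ∈ c.smallSet W)
    (hy : y ∈ c.smallSet W) : c (1 - x * y) = 0 ∨ c (1 - x * y) = c x := by
  have hx₀ := ne_zero_of_mem_smallSet hx
  have hx₁ := one_sub_ne_zero_of_mem_smallSet hx
  have hy₁ := one_sub_ne_zero_of_mem_smallSet hy
  have hz : c (-(x * (1 - y) / (1 - x))) = c x := by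
    rw [c.map_neg, c.map_div_of_map_eq_zero (mul_ne_zero hx₀ hy₁) hx₁ hx.2,
      c.map_mul_of_map_eq_zero hx₀ hy₁ hy.2]
  have hz₁ := one_sub_ne_zero (hz.trans_ne (map_ne_zero_of_mem_smallSet hx))
  have hxy : c (1 - x * y) = c (1 - -(x * (1 - y) / (1 - x))) := by
    rw [show 1 - x * y = (1 - -(x * (1 - y) / (1 - x))) * (1 - x) by field_simp; ring,
      c.map_mul_of_map_eq_zero hz₁ hx₁ hx.2]
  rw [hxy, ← hz]
  exact h _ (hz.symm ▸ hx.1)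

theorem map_one_sub_mul (h : c.IsRigidOutside W) (hx : x ∈ c.smallSet W) (hy : y ∈ c.smallSet W) :
    c (1 - x * y) = 0 ∨ c (1 - x * y) = c x ∧ c x = c y := by
  rcases h.map_one_sub_mul_eq_zero_or_eq_left hx hy with hxy | hxy
  · exact Or.inl hxy
  have hyx := h.map_one_sub_mul_eq_zero_or_eq_left hy hx
  rw [mul_comm] at hyx
  exact hyx.imp_right fun hyx => ⟨hxy, hxy.symm.trans hyx⟩

theorem isPreadditive_of_two_nsmul_mem (h : c.IsRigidOutside W)
    (hW : ∀ v : V, 2 • v ∈ W → v ∈ W) : c.IsPreadditive W where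
  isRigidOutside := h
  map_one_sub_mul x hx y hy := by
    refine (h.map_one_sub_mul hx hy).elim id fun ⟨hxy, heq⟩ => ?_
    have hmul : c (x * y) = 2 • c x := by
      rw [c.map_mul (ne_zero_of_mem_smallSet hx) (ne_zero_of_mem_smallSet hy), ← heq, two_nsmul]
    refine (h (x * y) (hmul ▸ fun hm => hx.1 (hW _ hm))).resolve_right fun hxy' => ?_
    rw [hxy, hmul, two_nsmul, left_eq_add] at hxy'
    exact map_ne_zero_of_mem_smallSet hx hxy'

theorem mul_mem_smallSet (h : c.IsRigidOutside ⊥) (h₂ : ∀ v : V, v + v = 0)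
    (hx : x ∈ c.smallSet ⊥) (hy : y ∈ c.smallSet ⊥) (hxy : c x ≠ c y) : x * y ∈ c.smallSet ⊥ := by
  refine ⟨?_, (h.map_one_sub_mul hx hy).resolve_right fun h' => hxy h'.2⟩
  rw [AddSubgroup.mem_bot, c.map_mul (ne_zero_of_mem_smallSet hx) (ne_zero_of_mem_smallSet hy)]
  intro hadd
  exact hxy (add_right_cancel (hadd.trans (h₂ (c y)).symm))

theorem mul_mul_mem_smallSet (h : c.IsRigidOutside ⊥) (h₂ : ∀ v : V, v + v = 0)
    (ha : a ∈ c.smallSet ⊥) (hb : b ∈ c.smallSet ⊥) (hx : x ∈ c.smallSet ⊥) (hab : c a = c b)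
    (hax : c a ≠ c x) : a * x * b ∈ c.smallSet ⊥ ∧ c (a * x * b) = c x := by
  have hax' := mul_mem_smallSet h h₂ ha hx hax
  have hmap : c (a * x) = c a + c x :=
    c.map_mul (ne_zero_of_mem_smallSet ha) (ne_zero_of_mem_smallSet hx)
  refine ⟨mul_mem_smallSet h h₂ hax' hb ?_, ?_⟩
  · rw [hmap, ← hab, Ne, add_eq_left]
    exact map_ne_zero_of_mem_smallSet hx
  · rw [c.map_mul (ne_zero_of_mem_smallSet hax') (ne_zero_of_mem_smallSet hb), hmap, ← hab,
      add_right_comm, h₂, zero_add]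

theorem map_one_sub_mul_mul_mul (h : c.IsRigidOutside ⊥) (h₂ : ∀ v : V, v + v = 0)
    (ha : a ∈ c.smallSet ⊥) (hb : b ∈ c.smallSet ⊥) (hx : x ∈ c.smallSet ⊥)
    (hy : y ∈ c.smallSet ⊥) (hab : c a = c b) (hxy : c x = c y) (hax : c a ≠ c x) :
    c (1 - a * b * (x * y)) = 0 := by
  obtain ⟨hmem, hmap⟩ := mul_mul_mem_smallSet h h₂ ha hb hx hab hax
  obtain ⟨hmem', hmap'⟩ := mul_mul_mem_smallSet h h₂ hx hy ha hxy hax.symm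
  have h₁ := h.map_one_sub_mul_eq_zero_or_eq_left hmem hy
  have h₁' := h.map_one_sub_mul_eq_zero_or_eq_left hmem' hb
  rw [hmap, show a * x * b * y = a * b * (x * y) by ring] at h₁
  rw [hmap', show x * a * y * b = a * b * (x * y) by ring] at h₁'
  exact h₁.elim id fun h₁ => h₁'.elim id fun h₁' => absurd (h₁'.symm.trans h₁) hax

theorem eq_of_map_one_sub_mul_ne_zero (h : c.IsRigidOutside ⊥) (h₂ : ∀ v : V, v + v = 0)
    (ha : a ∈ c.smallSet ⊥) (hb : b ∈ c.smallSet ⊥) (hx : x ∈ c.smallSet ⊥)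
    (hy : y ∈ c.smallSet ⊥) (hab : c (1 - a * b) ≠ 0) (hxy : c (1 - x * y) ≠ 0) : c a = c x := by
  by_contra hax
  obtain ⟨hab, hab'⟩ := (h.map_one_sub_mul ha hb).resolve_left hab
  obtain ⟨hxy, hxy'⟩ := (h.map_one_sub_mul hx hy).resolve_left hxy
  have ha₀ := ne_zero_of_mem_smallSet ha
  have hb₀ := ne_zero_of_mem_smallSet hb
  have hab₁ : 1 - a * b ≠ 0 := ne_zero_of_map_ne_zero (hab ▸ map_ne_zero_of_mem_smallSet ha)
  have hxy₁ : 1 - x * y ≠ 0 := ne_zero_of_map_ne_zero (hxy ▸ map_ne_zero_of_mem_smallSet hx)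
  have hr : c (-(a * b * (1 - x * y) / (1 - a * b))) = c x - c a := by
    rw [c.map_neg, c.map_div (mul_ne_zero (mul_ne_zero ha₀ hb₀) hxy₁) hab₁,
      c.map_mul (mul_ne_zero ha₀ hb₀) hxy₁, c.map_mul ha₀ hb₀, ← hab', h₂, hxy, hab, zero_add]
  have hr₀ := hr.trans_ne (sub_ne_zero.2 (Ne.symm hax))
  have hprod := map_one_sub_mul_mul_mul h h₂ ha hb hx hy hab' hxy' hax
  rw [show 1 - a * b * (x * y) = (1 - a * b) * (1 - -(a * b * (1 - x * y) / (1 - a * b))) by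
    field_simp; ring, c.map_mul hab₁ (one_sub_ne_zero hr₀), hab] at hprod
  rcases h _ hr₀ with h' | h'
  · exact map_ne_zero_of_mem_smallSet ha (by rwa [h', add_zero] at hprod)
  · exact map_ne_zero_of_mem_smallSet hx (by rwa [h', hr, add_sub_cancel] at hprod)

theorem exists_isPreadditive_zmultiples (h : c.IsRigidOutside ⊥) (h₂ : ∀ v : V, v + v = 0) :
    ∃ v : V, c.IsPreadditive (AddSubgroup.zmultiples v) := by
  by_cases hA : ∃ a ∈ c.smallSet ⊥, ∃ b ∈ c.smallSet ⊥, c (1 - a * b) ≠ 0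
  · obtain ⟨a, ha, b, hb, hab⟩ := hA
    refine ⟨c a, h.mono bot_le, fun x hx y hy => ?_⟩
    by_contra hxy
    have hax := eq_of_map_one_sub_mul_ne_zero h h₂ ha hb (smallSet_anti bot_le hx)
      (smallSet_anti bot_le hy) hab hxy
    exact hx.1 (hax ▸ AddSubgroup.mem_zmultiples (c a))
  · push Not at hA
    exact ⟨0, AddSubgroup.zmultiples_zero_eq_bot (G := V) ▸ ⟨h, fun x hx y hy => hA x hx y hy⟩⟩

end IsRigidOutside

theorem IsCollinear.exists_isPreadditive {ℓ : ℕ} [Fact ℓ.Prime] [Module (ZMod ℓ) V]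
    (hc : c.IsCollinear (ZMod ℓ)) : ∃ v : V, c.IsPreadditive (AddSubgroup.zmultiples v) := by
  obtain rfl | hℓ := eq_or_ne ℓ 2
  · refine IsRigidOutside.exists_isPreadditive_zmultiples (fun x hx => ?_) fun v => ?_
    · obtain ⟨t, ht⟩ := Submodule.mem_span_singleton.1 (hc x hx)
      rw [← ht]
      fin_cases t
      · exact Or.inl (zero_smul _ _)
      · exact Or.inr (one_smul _ _)
    · exact ZModModule.add_self v
  · obtain ⟨v, hv⟩ := exists_isRigidOutside_zmultiples hc
    refine ⟨v, hv.isPreadditive_of_two_nsmul_mem fun p hp => ?_⟩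
    obtain ⟨k, rfl⟩ := (Fact.out : ℓ.Prime).odd_of_ne_two hℓ
    have hp' : (k + 1) • 2 • p = p := by
      rw [smul_smul, show (k + 1) * 2 = 2 * k + 1 + 1 by ring, succ_nsmul,
        ZModModule.char_nsmul_eq_zero (2 * k + 1) p, zero_add]
    exact hp' ▸ AddSubgroup.nsmul_mem _ hp _

end RigidOutside

section ValuationRing

variable {K V : Type*} [Field K] [AddCommGroup V] {c : ClassMap K V} {W : AddSubgroup V}
  {O : ValuationSubring K} {a b x y : K}

theorem inv_notMem_smallSet (hx : x ∈ c.smallSet W) : x⁻¹ ∉ c.smallSet W := by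
  intro hi
  have h := map_one_sub_inv (map_ne_zero_of_mem_smallSet hx)
  rw [hi.2, hx.2, zero_sub, zero_eq_neg] at h
  exact map_ne_zero_of_mem_smallSet hx h

theorem IsRigidOutside.inv_mem_smallSet (h : c.IsRigidOutside W) (hW : c x ∉ W)
    (hx : x ∉ c.smallSet W) : x⁻¹ ∈ c.smallSet W := by
  refine ⟨map_inv_notMem hW, ?_⟩
  rw [map_one_sub_inv (map_ne_zero_of_notMem hW), (h x hW).resolve_left fun h₀ => hx ⟨hW, h₀⟩,
    sub_self]

/-- The elements with class in `W` which multiply the small elements into themselves. They are to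
be the elements with class in `W` of the valuation ring under construction, apart from `0`. -/
def stableSet (c : ClassMap K V) (W : AddSubgroup V) : Set K :=
  {x | x ≠ 0 ∧ c x ∈ W ∧ ∀ a ∈ c.smallSet W, x * a ∈ c.smallSet W}

theorem mul_mem_stableSet (hx : x ∈ c.stableSet W) (hy : y ∈ c.stableSet W) :
    x * y ∈ c.stableSet W := by
  refine ⟨mul_ne_zero hx.1 hy.1, ?_, fun a ha => ?_⟩
  · rw [c.map_mul hx.1 hy.1]
    exact W.add_mem hx.2.1 hy.2.1
  · rw [mul_assoc]
    exact hx.2.2 _ (hy.2.2 a ha)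

theorem one_mem_stableSet : 1 ∈ c.stableSet W := by
  refine ⟨one_ne_zero, ?_, fun a ha => ?_⟩
  · rw [c.map_one]
    exact W.zero_mem
  · rwa [one_mul]

theorem exists_mul_notMem_of_notMem_stableSet (hx₀ : x ≠ 0) (hW : c x ∈ W)
    (hx : x ∉ c.stableSet W) : ∃ a ∈ c.smallSet W, x * a ∉ c.smallSet W := by
  by_contra! h
  exact hx ⟨hx₀, hW, h⟩

/-- The valuation ring determined by `c` and `W`, as a set. -/
def integers (c : ClassMap K V) (W : AddSubgroup V) : Set K :=
  {x | x = 0 ∨ x ∈ c.smallSet W ∨ x ∈ c.stableSet W}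

theorem mem_smallSet_of_mem_integers (hx : x ∈ c.integers W) (hW : c x ∉ W) : x ∈ c.smallSet W :=
  (hx.resolve_left (ne_zero_of_map_ne_zero (map_ne_zero_of_notMem hW))).resolve_right
    fun h => hW h.2.1

/-- The group of the nonzero elements of `K` with class in `W`. -/
def unitsComap (c : ClassMap K V) (W : AddSubgroup V) : Subgroup Kˣ where
  carrier := {u | c (u : K) ∈ W}
  one_mem' := by simp [c.map_one]
  mul_mem' {u v} hu hv := by
    simpa [c.map_mul u.ne_zero v.ne_zero] using W.add_mem hu hv
  inv_mem' {u} hu := by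
    simpa [c.map_inv] using hu

theorem mem_nonunits_of_map_notMem (hO : O.unitGroup ≤ c.unitsComap W) (hx : x ∈ O) (hW : c x ∉ W) :
    x ∈ O.nonunits := by
  by_contra hn
  have hx₀ := ne_zero_of_map_ne_zero (map_ne_zero_of_notMem hW)
  exact hW (hO (show Units.mk0 x hx₀ ∈ O.unitGroup from
    ((O.valuation_le_one_iff x).2 hx).eq_of_not_lt hn))

namespace IsPreadditive

theorem neg_mem_smallSet (h : c.IsPreadditive W) (hx : x ∈ c.smallSet W) : -x ∈ c.smallSet W := by
  have hW : c (-x) ∉ W := (c.map_neg x).symm ▸ hx.1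
  refine ⟨hW, (h.isRigidOutside _ hW).resolve_right fun h₁ => ?_⟩
  have hsq := h.map_one_sub_mul hx hx
  rw [show 1 - x * x = (1 - -x) * (1 - x) by ring,
    c.map_mul_of_map_eq_zero (one_sub_ne_zero (map_ne_zero_of_notMem hW))
      (one_sub_ne_zero_of_mem_smallSet hx) hx.2, h₁] at hsq
  exact map_ne_zero_of_notMem hW hsq

theorem map_one_add (h : c.IsPreadditive W) (hx : x ∈ c.smallSet W) : c (1 + x) = 0 := by
  simpa only [sub_neg_eq_add] using (h.neg_mem_smallSet hx).2

theorem mem_smallSet_of_map_one_add (h : c.IsPreadditive W) (hW : c x ∉ W) (hx : c (1 + x) = 0) :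
    x ∈ c.smallSet W := by
  rw [← neg_neg x]
  exact h.neg_mem_smallSet ⟨(c.map_neg x).symm ▸ hW, by rwa [sub_neg_eq_add]⟩

theorem div_one_add_mem_smallSet (h : c.IsPreadditive W) (hx : x ∈ c.smallSet W) :
    x / (1 + x) ∈ c.smallSet W := by
  have hx₁ := one_add_ne_zero (map_ne_zero_of_mem_smallSet hx)
  have hx₂ := h.map_one_add hx
  constructor
  · rw [c.map_div_of_map_eq_zero (ne_zero_of_mem_smallSet hx) hx₁ hx₂]
    exact hx.1
  · rw [show 1 - x / (1 + x) = (1 + x)⁻¹ by field_simp; ring, c.map_inv, hx₂, neg_zero]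

theorem mul_one_sub_mem_smallSet (h : c.IsPreadditive W) (hx : x ∈ c.smallSet W)
    (hy : y ∈ c.smallSet W) : x * (1 - y) ∈ c.smallSet W := by
  have hx₁ := one_add_ne_zero (map_ne_zero_of_mem_smallSet hx)
  have hxy : c (x * (1 - y)) = c x := c.map_mul_of_map_eq_zero (ne_zero_of_mem_smallSet hx)
    (one_sub_ne_zero_of_mem_smallSet hy) hy.2
  have hxy₁ := one_add_ne_zero (hxy.trans_ne (map_ne_zero_of_mem_smallSet hx))
  refine h.mem_smallSet_of_map_one_add (hxy ▸ hx.1) ?_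
  have hmul := h.map_one_sub_mul (h.div_one_add_mem_smallSet hx) hy
  rwa [show 1 - x / (1 + x) * y = (1 + x * (1 - y)) / (1 + x) by field_simp; ring,
    c.map_div_of_map_eq_zero hxy₁ hx₁ (h.map_one_add hx)] at hmul

theorem div_one_sub_mem_smallSet (h : c.IsPreadditive W) (hx : x ∈ c.smallSet W)
    (hy : y ∈ c.smallSet W) : x / (1 - y) ∈ c.smallSet W := by
  have hx₀ := ne_zero_of_mem_smallSet hx
  have hy₁ := one_sub_ne_zero_of_mem_smallSet hy
  by_contra hn
  have hi := h.isRigidOutside.inv_mem_smallSet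
    (by rw [c.map_div_of_map_eq_zero hx₀ hy₁ hy.2]; exact hx.1) hn
  have hmul := h.map_one_sub_mul hx hi
  rw [show 1 - x * (x / (1 - y))⁻¹ = y by field_simp; ring] at hmul
  exact map_ne_zero_of_mem_smallSet hy hmul

theorem exists_one_sub_mul_eq (h : c.IsPreadditive W) (hx : x ∈ c.smallSet W)
    (hy : y ∈ c.smallSet W) : ∃ z ∈ c.smallSet W, 1 - x * y = (1 - x) * (1 - z) := by
  have hx₁ := one_sub_ne_zero_of_mem_smallSet hx
  refine ⟨-(x * (1 - y) / (1 - x)), h.neg_mem_smallSet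
    (h.div_one_sub_mem_smallSet (h.mul_one_sub_mem_smallSet hx hy) hx), ?_⟩
  field_simp
  ring

theorem one_sub_mul_ne_zero (h : c.IsPreadditive W) (hx : x ∈ c.smallSet W)
    (hy : y ∈ c.smallSet W) : 1 - x * y ≠ 0 := by
  obtain ⟨z, hz, heq⟩ := h.exists_one_sub_mul_eq hx hy
  rw [heq]
  exact mul_ne_zero (one_sub_ne_zero_of_mem_smallSet hx) (one_sub_ne_zero_of_mem_smallSet hz)

theorem mul_one_sub_mul_mem_smallSet (h : c.IsPreadditive W) (ha : a ∈ c.smallSet W)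
    (hx : x ∈ c.smallSet W) (hy : y ∈ c.smallSet W) : a * (1 - x * y) ∈ c.smallSet W := by
  obtain ⟨z, hz, heq⟩ := h.exists_one_sub_mul_eq hx hy
  rw [heq, ← mul_assoc]
  exact h.mul_one_sub_mem_smallSet (h.mul_one_sub_mem_smallSet ha hx) hz

theorem mul_mul_mem_smallSet (h : c.IsPreadditive W) (hx : x ∈ c.smallSet W)
    (hy : y ∈ c.smallSet W) (hW : c (x * y) ∈ W) (ha : a ∈ c.smallSet W) :
    x * y * a ∈ c.smallSet W := by
  have hxy₀ := mul_ne_zero (ne_zero_of_mem_smallSet hx) (ne_zero_of_mem_smallSet hy)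
  have hxy₁ := h.one_sub_mul_ne_zero hx hy
  have hxy := h.map_one_sub_mul hx hy
  have hW' : c (x * y * a / (1 - x * y)) ∉ W := by
    rw [c.map_div_of_map_eq_zero (mul_ne_zero hxy₀ (ne_zero_of_mem_smallSet ha)) hxy₁ hxy]
    exact map_mul_notMem hxy₀ hW ha.1
  have hmul := h.map_one_sub_mul (h.mul_one_sub_mem_smallSet hx ha) hy
  rw [show 1 - x * (1 - a) * y = (1 + x * y * a / (1 - x * y)) * (1 - x * y) by field_simp; ring,
    c.map_mul_of_map_eq_zero (one_add_ne_zero (map_ne_zero_of_notMem hW')) hxy₁ hxy] at hmul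
  rw [← div_mul_cancel₀ (x * y * a) hxy₁]
  exact h.mul_one_sub_mul_mem_smallSet (h.mem_smallSet_of_map_one_add hW' hmul) hx hy

theorem mul_mem_smallSet_or_stableSet (h : c.IsPreadditive W) (hx : x ∈ c.smallSet W)
    (hy : y ∈ c.smallSet W) : x * y ∈ c.smallSet W ∨ x * y ∈ c.stableSet W := by
  by_cases hW : c (x * y) ∈ W
  · exact Or.inr ⟨mul_ne_zero (ne_zero_of_mem_smallSet hx) (ne_zero_of_mem_smallSet hy), hW,
      fun a ha => h.mul_mul_mem_smallSet hx hy hW ha⟩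
  · exact Or.inl ⟨hW, h.map_one_sub_mul hx hy⟩

theorem mul_mem_integers (h : c.IsPreadditive W) (hx : x ∈ c.integers W) (hy : y ∈ c.integers W) :
    x * y ∈ c.integers W := by
  rcases hx with rfl | hx | hx <;> rcases hy with rfl | hy | hy
  · exact Or.inl (zero_mul 0)
  · exact Or.inl (zero_mul y)
  · exact Or.inl (zero_mul y)
  · exact Or.inl (mul_zero x)
  · exact Or.inr (h.mul_mem_smallSet_or_stableSet hx hy)
  · exact Or.inr (Or.inl (mul_comm x y ▸ hy.2.2 x hx))
  · exact Or.inl (mul_zero x)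
  · exact Or.inr (Or.inl (hx.2.2 y hy))
  · exact Or.inr (Or.inr (mul_mem_stableSet hx hy))

theorem neg_one_mem_stableSet (h : c.IsPreadditive W) : -1 ∈ c.stableSet W := by
  refine ⟨neg_ne_zero.2 one_ne_zero, ?_, fun a ha => ?_⟩
  · rw [c.map_neg, c.map_one]
    exact W.zero_mem
  · rw [neg_one_mul]
    exact h.neg_mem_smallSet ha

theorem neg_mem_integers (h : c.IsPreadditive W) (hx : x ∈ c.integers W) : -x ∈ c.integers W := by
  rw [← neg_one_mul]
  exact h.mul_mem_integers (Or.inr (Or.inr h.neg_one_mem_stableSet)) hx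

theorem exists_inv_mul_mem_smallSet (h : c.IsPreadditive W) (hx₀ : x ≠ 0) (hW : c x ∈ W)
    (hx : x ∉ c.stableSet W) : ∃ a ∈ c.smallSet W, (x * a)⁻¹ ∈ c.smallSet W := by
  obtain ⟨a, ha, hxa⟩ := exists_mul_notMem_of_notMem_stableSet hx₀ hW hx
  exact ⟨a, ha, h.isRigidOutside.inv_mem_smallSet (map_mul_notMem hx₀ hW ha.1) hxa⟩

theorem mem_stableSet_or_inv_mem_stableSet (h : c.IsPreadditive W) (hx₀ : x ≠ 0) (hW : c x ∈ W) :
    x ∈ c.stableSet W ∨ x⁻¹ ∈ c.stableSet W := by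
  by_contra! hn
  obtain ⟨a, ha, hxa⟩ := h.exists_inv_mul_mem_smallSet hx₀ hW hn.1
  obtain ⟨b, hb, hxb⟩ := h.exists_inv_mul_mem_smallSet (inv_ne_zero hx₀)
    ((c.map_inv x).symm ▸ W.neg_mem hW) hn.2
  have ha₀ := ne_zero_of_mem_smallSet ha
  have hb₀ := ne_zero_of_mem_smallSet hb
  have hinv := h.mul_mem_smallSet_or_stableSet hxa hxb
  rw [show (x * a)⁻¹ * (x⁻¹ * b)⁻¹ = (a * b)⁻¹ by field_simp] at hinv
  rcases hinv with hinv | hinv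
  · rcases h.mul_mem_smallSet_or_stableSet ha hb with hab | hab
    · exact inv_notMem_smallSet hab hinv
    · have hone := hab.2.2 _ hinv
      rw [mul_inv_cancel₀ (mul_ne_zero ha₀ hb₀)] at hone
      exact map_ne_zero_of_mem_smallSet hone c.map_one
  · refine inv_notMem_smallSet hb ?_
    rw [show b⁻¹ = (a * b)⁻¹ * a by field_simp]
    exact hinv.2.2 a ha

theorem mem_integers_or_inv_mem_integers (h : c.IsPreadditive W) (x : K) :
    x ∈ c.integers W ∨ x⁻¹ ∈ c.integers W := by
  obtain rfl | hx₀ := eq_or_ne x 0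
  · exact Or.inl (Or.inl rfl)
  by_cases hW : c x ∈ W
  · exact (h.mem_stableSet_or_inv_mem_stableSet hx₀ hW).imp (Or.inr ∘ Or.inr) (Or.inr ∘ Or.inr)
  by_cases hx : x ∈ c.smallSet W
  · exact Or.inl (Or.inr (Or.inl hx))
  · exact Or.inr (Or.inr (Or.inl (h.isRigidOutside.inv_mem_smallSet hW hx)))

theorem one_add_mem_stableSet (h : c.IsPreadditive W) (hx : x ∈ c.smallSet W) :
    1 + x ∈ c.stableSet W := by
  refine ⟨one_add_ne_zero (map_ne_zero_of_mem_smallSet hx), ?_, fun a ha => ?_⟩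
  · rw [h.map_one_add hx]
    exact W.zero_mem
  · rw [show (1 + x) * a = a * (1 - -x) by ring]
    exact h.mul_one_sub_mem_smallSet ha (h.neg_mem_smallSet hx)

theorem one_add_mem_stableSet_of_map_mem (h : c.IsPreadditive W) (hx : x ∈ c.stableSet W)
    (hx₁ : 1 + x ≠ 0) (hW : c (1 + x) ∈ W) : 1 + x ∈ c.stableSet W := by
  refine ⟨hx₁, hW, fun a ha => ⟨map_mul_notMem hx₁ hW ha.1, ?_⟩⟩
  have ha₁ := one_sub_ne_zero_of_mem_smallSet ha
  have hxa := h.div_one_sub_mem_smallSet (hx.2.2 a ha) ha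
  rw [show 1 - (1 + x) * a = (1 - x * a / (1 - a)) * (1 - a) by field_simp; ring,
    c.map_mul_of_map_eq_zero (one_sub_ne_zero_of_mem_smallSet hxa) ha₁ ha.2, hxa.2]

theorem one_add_mem_smallSet_of_map_notMem (h : c.IsPreadditive W) (hx : x ∈ c.stableSet W)
    (hW : c (1 + x) ∉ W) : 1 + x ∈ c.smallSet W := by
  by_contra hn
  have hi := h.isRigidOutside.inv_mem_smallSet hW hn
  have hx₁ := ne_zero_of_map_ne_zero (map_ne_zero_of_notMem hW)
  have hmul := hx.2.2 _ hi
  rw [show x * (1 + x)⁻¹ = 1 - (1 + x)⁻¹ by field_simp; ring] at hmul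
  exact map_ne_zero_of_mem_smallSet hmul hi.2

theorem one_add_mem_integers (h : c.IsPreadditive W) (hx : x ∈ c.integers W) :
    1 + x ∈ c.integers W := by
  obtain hx₁ | hx₁ := eq_or_ne (1 + x) 0
  · exact Or.inl hx₁
  rcases hx with rfl | hx | hx
  · rw [add_zero]
    exact Or.inr (Or.inr one_mem_stableSet)
  · exact Or.inr (Or.inr (h.one_add_mem_stableSet hx))
  · by_cases hW : c (1 + x) ∈ W
    · exact Or.inr (Or.inr (h.one_add_mem_stableSet_of_map_mem hx hx₁ hW))
    · exact Or.inr (Or.inl (h.one_add_mem_smallSet_of_map_notMem hx hW))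

theorem add_mem_integers (h : c.IsPreadditive W) (hx : x ∈ c.integers W) (hy : y ∈ c.integers W) :
    x + y ∈ c.integers W := by
  obtain rfl | hx₀ := eq_or_ne x 0
  · rwa [zero_add]
  obtain rfl | hy₀ := eq_or_ne y 0
  · rwa [add_zero]
  rcases h.mem_integers_or_inv_mem_integers (x / y) with hxy | hxy
  · rw [show x + y = (1 + x / y) * y by field_simp; ring]
    exact h.mul_mem_integers (h.one_add_mem_integers hxy) hy
  · rw [show x + y = (1 + (x / y)⁻¹) * x by field_simp]
    exact h.mul_mem_integers (h.one_add_mem_integers hxy) hx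

/-- The valuation ring determined by `c` and `W`. -/
def valuationSubring (h : c.IsPreadditive W) : ValuationSubring K where
  carrier := c.integers W
  mul_mem' := h.mul_mem_integers
  one_mem' := Or.inr (Or.inr one_mem_stableSet)
  add_mem' := h.add_mem_integers
  zero_mem' := Or.inl rfl
  neg_mem' := h.neg_mem_integers
  mem_or_inv_mem' := h.mem_integers_or_inv_mem_integers

theorem unitGroup_valuationSubring_le (h : c.IsPreadditive W) :
    h.valuationSubring.unitGroup ≤ c.unitsComap W := by
  intro u hu
  by_contra hW
  have hmem (v : Kˣ) (hv : v ∈ h.valuationSubring.unitGroup) : (v : K) ∈ c.integers W :=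
    (h.valuationSubring.valuation_le_one_iff v).1 (le_of_eq hv)
  refine inv_notMem_smallSet (mem_smallSet_of_mem_integers (hmem u hu) hW) ?_
  rw [← Units.val_inv_eq_inv_val]
  refine mem_smallSet_of_mem_integers (hmem u⁻¹ (inv_mem hu)) ?_
  rw [Units.val_inv_eq_inv_val]
  exact map_inv_notMem hW

theorem map_one_add_of_mem_nonunits (h : c.IsPreadditive W) (hx : x ∈ h.valuationSubring.nonunits) :
    c (1 + x) = 0 := by
  rcases h.valuationSubring.mem_nonunits_iff_or.1 hx with rfl | hi
  · rw [add_zero, c.map_one]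
  have hi₀ : x⁻¹ ≠ 0 := fun h₀ => hi (Or.inl h₀)
  rcases (h.mem_integers_or_inv_mem_integers x).resolve_right hi with rfl | hx | hx
  · rw [add_zero, c.map_one]
  · exact h.map_one_add hx
  · obtain ⟨a, ha, hxa⟩ := h.exists_inv_mul_mem_smallSet hi₀
      ((c.map_inv x).symm ▸ W.neg_mem hx.2.1) fun hs => hi (Or.inr (Or.inr hs))
    have hmul := h.map_one_sub_mul (h.neg_mem_smallSet ha) hxa
    have ha₀ := ne_zero_of_mem_smallSet ha
    rwa [show 1 - -a * (x⁻¹ * a)⁻¹ = 1 + x by field_simp; ring] at hmul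

theorem mem_smallSet_of_mem (h : c.IsPreadditive W) (hO : O.unitGroup ≤ c.unitsComap W)
    (hx : x ∈ O) (hW : c x ∉ W) : x ∈ c.smallSet W := by
  by_contra hn
  have hi := h.isRigidOutside.inv_mem_smallSet hW hn
  have hx₀ := ne_zero_of_map_ne_zero (map_ne_zero_of_notMem hW)
  have hx₁ : c (1 + x) = c x := by
    rw [show 1 + x = x * (1 + x⁻¹) by field_simp; ring, c.map_mul_of_map_eq_zero hx₀
      (one_add_ne_zero (map_ne_zero_of_mem_smallSet hi)) (h.map_one_add hi)]
  have hone := sub_mem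
    (mem_nonunits_of_map_notMem hO (add_mem (one_mem O) hx) (hx₁.symm ▸ hW))
    (mem_nonunits_of_map_notMem hO hx hW)
  rw [add_sub_cancel_right, O.mem_nonunits_iff, map_one] at hone
  exact lt_irrefl 1 hone

theorem le_valuationSubring (h : c.IsPreadditive W) (hO : O.unitGroup ≤ c.unitsComap W) :
    O ≤ h.valuationSubring := by
  have hsmall {a : K} (ha : a ∈ c.smallSet W) : a ∈ O := by
    refine (O.mem_or_inv_mem a).resolve_right fun hi => inv_notMem_smallSet ha ?_
    exact h.mem_smallSet_of_mem hO hi (map_inv_notMem ha.1)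
  intro x hx
  obtain rfl | hx₀ := eq_or_ne x 0
  · exact Or.inl rfl
  by_cases hW : c x ∈ W
  · exact Or.inr (Or.inr ⟨hx₀, hW, fun a ha => h.mem_smallSet_of_mem hO
      (mul_mem hx (hsmall ha)) (map_mul_notMem hx₀ hW ha.1)⟩)
  · exact Or.inr (Or.inl (h.mem_smallSet_of_mem hO hx hW))

end IsPreadditive

end ValuationRing

end ClassMap

section QuotientGroup

variable {G : Type*} [Group G] {a b : G}

theorem isCyclic_closure_pair {C : Subgroup G} [IsCyclic C] (ha : a ∈ C) (hb : b ∈ C) :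
    IsCyclic (Subgroup.closure {a, b}) :=
  Subgroup.isCyclic_of_le ((Subgroup.closure_le C).2 (Set.pair_subset ha hb))

theorem mem_zpowers_of_isCyclic_closure_pair {p : ℕ} (hp : p.Prime) (hG : ∀ g : G, g ^ p = 1)
    (hab : IsCyclic (Subgroup.closure {a, b})) (ha : a ≠ 1) : b ∈ Subgroup.zpowers a := by
  let a' : Subgroup.closure {a, b} := ⟨a, Subgroup.subset_closure (Set.mem_insert a {b})⟩
  let b' : Subgroup.closure {a, b} := ⟨b, Subgroup.subset_closure (Set.mem_insert_of_mem a rfl)⟩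
  have ha' : a' ≠ 1 := fun h => ha (congrArg Subtype.val h)
  have := Fact.mk hp
  have hdvd : Monoid.exponent (Subgroup.closure {a, b}) ∣ p :=
    Monoid.exponent_dvd_of_forall_pow_eq_one fun g => Subtype.ext (hG g)
  have hcard : Nat.card (Subgroup.closure {a, b}) = p := by
    rw [← IsCyclic.exponent_eq_card]
    refine ((Nat.dvd_prime hp).1 hdvd).resolve_left fun h₁ => ha' ?_
    rw [← pow_one a', ← h₁, Monoid.pow_exponent_eq_one]
  obtain ⟨n, hn⟩ := mem_zpowers_of_prime_card (g' := b') hcard ha'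
  exact ⟨n, congrArg Subtype.val hn⟩

theorem isCyclic_quotient_subgroupOf_iff {N H : Subgroup G} [N.Normal] :
    IsCyclic (H ⧸ N.subgroupOf H) ↔ IsCyclic (H.map (QuotientGroup.mk' N)) := by
  have hker : N.subgroupOf H = ((QuotientGroup.mk' N).subgroupMap H).ker := by
    rw [Subgroup.ker_subgroupMap, QuotientGroup.ker_mk']
  exact ((QuotientGroup.quotientMulEquivOfEq hker).trans
    (QuotientGroup.quotientKerEquivOfSurjective _
      ((QuotientGroup.mk' N).subgroupMap_surjective H))).isCyclic

end QuotientGroup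

section Field

variable {K : Type*} [Field K] {T H : Subgroup Kˣ} {O : ValuationSubring K}

theorem principalUnitGroup_le_iff :
    O.principalUnitGroup ≤ T ↔ ∀ a : K, O.valuation a < 1 → ∃ t ∈ T, ((t : Kˣ) : K) = 1 + a := by
  refine ⟨fun h a ha => ?_, fun h u hu => ?_⟩
  · have ha₀ : 1 + a ≠ 0 := by
      rw [← O.valuation.ne_zero_iff, O.valuation.map_one_add_of_lt ha]
      exact one_ne_zero
    refine ⟨Units.mk0 (1 + a) ha₀, h ((O.mem_principalUnitGroup_iff _).2 ?_), rfl⟩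
    rwa [Units.val_mk0, add_sub_cancel_left]
  · obtain ⟨t, ht, htu⟩ := h (u - 1) ((O.mem_principalUnitGroup_iff u).1 hu)
    rwa [← Units.ext (htu.trans (add_sub_cancel 1 (u : K)))]

theorem isRigid_of_principalUnitGroup_le (hneg : -1 ∈ T) (hcyc : IsCyclic (H ⧸ T.subgroupOf H))
    (hO : O.unitGroup ≤ H) (hT : O.principalUnitGroup ≤ T) : IsRigid T := by
  intro x hx hx₁
  rcases lt_trichotomy (O.valuation (x : K)) 1 with hv | hv | hv
  · have hmem : Units.mk0 (1 - (x : K)) hx₁ ∈ T := by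
      refine hT ((O.mem_principalUnitGroup_iff _).2 ?_)
      rwa [Units.val_mk0, sub_sub_cancel_left, Valuation.map_neg]
    refine isCyclic_closure_pair (Subgroup.mem_zpowers _) ?_
    rw [(QuotientGroup.eq_one_iff _).2 hmem]
    exact one_mem _
  · have hv₁ : O.valuation (1 - (x : K)) = 1 := by
      have hle := O.valuation.map_sub 1 (x : K)
      rw [map_one, hv, max_self] at hle
      refine hle.eq_of_not_lt fun hlt => hx (hT ((O.mem_principalUnitGroup_iff x).2 ?_))
      rwa [Valuation.map_sub_swap]
    have := isCyclic_quotient_subgroupOf_iff.1 hcyc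
    exact isCyclic_closure_pair (Subgroup.mem_map_of_mem (QuotientGroup.mk' T) (hO hv))
      (Subgroup.mem_map_of_mem (QuotientGroup.mk' T) (hO hv₁))
  · have hmem : -(x⁻¹ * Units.mk0 (1 - (x : K)) hx₁) ∈ T := by
      refine hT ((O.mem_principalUnitGroup_iff _).2 ?_)
      have hval : ((-(x⁻¹ * Units.mk0 (1 - (x : K)) hx₁) : Kˣ) : K) - 1 = -(x : K)⁻¹ := by
        push_cast
        field_simp
        simp
      rw [hval, Valuation.map_neg, map_inv₀]
      exact inv_lt_one_of_one_lt₀ hv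
    refine isCyclic_closure_pair (Subgroup.mem_zpowers _) ?_
    rw [← QuotientGroup.eq.2 (show x⁻¹ * Units.mk0 (1 - (x : K)) hx₁ ∈ T by
      simpa using mul_mem hneg hmem)]
    exact Subgroup.mem_zpowers _

end Field

namespace ClassMap

section OfSubgroup

variable {K : Type*} [Field K] {T : Subgroup Kˣ}

open Classical in
/-- The class map `Kˣ → Kˣ ⧸ T`, in additive notation and extended by `0`. -/
noncomputable def ofSubgroup (T : Subgroup Kˣ) (hneg : -1 ∈ T) :
    ClassMap K (Additive (Kˣ ⧸ T)) where
  toFun x := if hx : x = 0 then 0 else Additive.ofMul (QuotientGroup.mk (Units.mk0 x hx))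
  map_zero' := dif_pos rfl
  map_mul' {x y} hx hy := by
    rw [dif_neg hx, dif_neg hy, dif_neg (mul_ne_zero hx hy), Units.mk0_mul]
    rfl
  map_neg_one' := by
    rw [dif_neg (neg_ne_zero.2 one_ne_zero)]
    exact congrArg Additive.ofMul ((QuotientGroup.eq_one_iff _).2 (by
      rwa [show Units.mk0 (-1 : K) _ = -1 from Units.ext rfl]))

variable (hneg : -1 ∈ T)

theorem ofSubgroup_coe (u : Kˣ) :
    ofSubgroup T hneg (u : K) = Additive.ofMul (QuotientGroup.mk u) :=
  (dif_neg u.ne_zero).trans (by rw [Units.mk0_val])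

theorem ofSubgroup_coe_eq_zero_iff (u : Kˣ) : ofSubgroup T hneg (u : K) = 0 ↔ u ∈ T := by
  rw [ofSubgroup_coe, ofMul_eq_zero, QuotientGroup.eq_one_iff]

theorem isCollinear_ofSubgroup {ℓ : ℕ} [Fact ℓ.Prime] [Module (ZMod ℓ) (Additive (Kˣ ⧸ T))]
    (hT : IsRigid T) : (ofSubgroup T hneg).IsCollinear (ZMod ℓ) := by
  intro x hx
  lift x to Kˣ using (ne_zero_of_map_ne_zero hx).isUnit
  have hx₁ := one_sub_ne_zero hx
  have hxT : x ∉ T := (ofSubgroup_coe_eq_zero_iff hneg x).not.1 hx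
  have hpow (q : Kˣ ⧸ T) : q ^ ℓ = 1 := ZModModule.char_nsmul_eq_zero ℓ (Additive.ofMul q)
  obtain ⟨n, hn⟩ := mem_zpowers_of_isCyclic_closure_pair Fact.out hpow (hT x hxT hx₁)
    ((QuotientGroup.eq_one_iff x).not.2 hxT)
  refine Submodule.mem_span_singleton.2 ⟨(n : ZMod ℓ), ?_⟩
  rw [Int.cast_smul_eq_zsmul, ofSubgroup_coe, ← ofMul_zpow]
  exact (congrArg Additive.ofMul hn).trans (ofSubgroup_coe hneg (Units.mk0 _ hx₁)).symm

theorem le_unitsComap_ofSubgroup (W : AddSubgroup (Additive (Kˣ ⧸ T))) :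
    T ≤ (ofSubgroup T hneg).unitsComap W := by
  intro t ht
  change ofSubgroup T hneg (t : K) ∈ W
  rw [(ofSubgroup_coe_eq_zero_iff hneg t).2 ht]
  exact W.zero_mem

theorem isCyclic_unitsComap_ofSubgroup_quotient (v : Additive (Kˣ ⧸ T)) :
    IsCyclic ((ofSubgroup T hneg).unitsComap (AddSubgroup.zmultiples v) ⧸
      T.subgroupOf ((ofSubgroup T hneg).unitsComap (AddSubgroup.zmultiples v))) := by
  refine isCyclic_quotient_subgroupOf_iff.2
    (Subgroup.isCyclic_of_le (H' := Subgroup.zpowers v.toMul) (Subgroup.map_le_iff_le_comap.2 ?_))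
  intro u hu
  obtain ⟨n, hn⟩ := hu
  exact ⟨n, congrArg Additive.toMul (hn.trans (ofSubgroup_coe hneg u))⟩

theorem IsPreadditive.principalUnitGroup_le {W : AddSubgroup (Additive (Kˣ ⧸ T))}
    (h : (ofSubgroup T hneg).IsPreadditive W) : h.valuationSubring.principalUnitGroup ≤ T := by
  intro u hu
  rw [← ofSubgroup_coe_eq_zero_iff hneg, ← add_sub_cancel 1 (u : K)]
  exact h.map_one_add_of_mem_nonunits ((ValuationSubring.mem_principalUnitGroup_iff _ u).1 hu)

end OfSubgroup

end ClassMap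

/-- for `T ≤ K^×` with `K^{×ℓ} ⊆ T` and `-1 ∈ T`, `T` is rigid iff there is a
subgroup `T ≤ H ≤ K^×` with `H/T` cyclic, `H` valuative, and `1 + m_{v_H} ⊆ T`, where
`v_H` is the coarsest valuation whose units lie in `H` (i.e. `O_{v_H}` is the largest
valuation subring with unit group contained in `H`). -/
theorem stmt_4 {K : Type*} [Field K] (ℓ : ℕ) (hℓ : ℓ.Prime) (T : Subgroup Kˣ)
    (hpow : ∀ x : Kˣ, x ^ ℓ ∈ T) (hneg : (-1 : Kˣ) ∈ T) :
    (∃ H : Subgroup Kˣ, T ≤ H ∧ IsCyclic (↥H ⧸ T.subgroupOf H) ∧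
      ∃ O : ValuationSubring K, O.unitGroup ≤ H ∧
        (∀ O' : ValuationSubring K, O'.unitGroup ≤ H → O' ≤ O) ∧
        (∀ a : K, O.valuation a < 1 → ∃ t ∈ T, ((t : Kˣ) : K) = 1 + a)) ↔
    IsRigid T := by
  simp only [← principalUnitGroup_le_iff]
  refine ⟨fun ⟨H, _, hcyc, O, hO, _, hT⟩ => isRigid_of_principalUnitGroup_le hneg hcyc hO hT,
    fun hT => ?_⟩
  have := Fact.mk hℓ
  have hpow' (q : Kˣ ⧸ T) : q ^ ℓ = 1 := by
    induction q using QuotientGroup.induction_on with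
    | H x => exact (QuotientGroup.eq_one_iff (x ^ ℓ)).2 (hpow x)
  let _ := AddCommGroup.zmodModule (n := ℓ) (G := Additive (Kˣ ⧸ T)) hpow'
  obtain ⟨v, hv⟩ := (ClassMap.isCollinear_ofSubgroup (ℓ := ℓ) hneg hT).exists_isPreadditive
  exact ⟨(ClassMap.ofSubgroup T hneg).unitsComap (AddSubgroup.zmultiples v),
    ClassMap.le_unitsComap_ofSubgroup hneg _,
    ClassMap.isCyclic_unitsComap_ofSubgroup_quotient hneg v, hv.valuationSubring,
    hv.unitGroup_valuationSubring_le, fun _ => hv.le_valuationSubring, hv.principalUnitGroup_le⟩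
end

section
/- Let K be an arbitrary field, ℓ a prime, and T a subgroup of K^× with K^{×ℓ} ⊆ T and −1 ∈ T. Assume T = 𝐇(T). Then there exists a subgroup H with T ⊆ H ⊆ K^× such that H/T is cyclic (possibly trivial), H is valuative, and, denoting by v = v_H the coarsest valuation with O_v^× ⊆ H, one has 1 + m_v ⊆ T and O_v^× ⊆ H. -/
/-- The subgroup `𝐇(T)`: the intersection of all subgroups `H ≤ K^×` such that (i) `T ≤ H`
and `K^×/H` is cyclic, and (ii) for every `H'` with `T ≤ H'` and `K^×/H'` cyclic, `H ⊓ H'`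
is rigid. -/
def Hbold {K : Type*} [Field K] (T : Subgroup Kˣ) : Subgroup Kˣ :=
  sInf {H : Subgroup Kˣ |
    (T ≤ H ∧ IsCyclic (Kˣ ⧸ H)) ∧
    ∀ H' : Subgroup Kˣ, T ≤ H' → IsCyclic (Kˣ ⧸ H') → IsRigid (H ⊓ H')}

/-!
The condition `T = 𝐇(T)` makes `T` rigid: `1 - x` is a power of `x` modulo `T` for every `x ∉ T`.
Call `x ∉ T` bad if neither `1 - x` nor `1 - x⁻¹` lies in `T`. If `x` and `y` were bad and
independent modulo `T`, two characters of `Kˣ / T` would map `Kˣ` to the affine plane over `ZMod ℓ`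
so that `u + v` always lies on the line through `u` and `v`. After replacing `x`, `y` by their
negatives and normalizing the characters, intersecting lines shows that `n + x` has homogeneous
coordinates `[n + α : 1 : 0]` and `n + x + y` has coordinates `[n + α + β : 1 : 1]`, so that `n + x`
leaves the affine plane when `n = -α` in `ZMod ℓ`. Hence all bad elements lie in some
`H = T ⊔ ⟨u⟩`, and the construction of Arason, Elman and Jacob applies to `T ≤ H`: with `O⁻` the set
of `x ∉ H` such that `1 - x ∈ T` and `O⁺` the set of `x ∈ H` such that `x O⁻ ⊆ O⁻`, the set
`{0} ∪ O⁻ ∪ O⁺` is the desired valuation ring, unless there is an exceptional element, whose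
square lies in `H` although it does not. This can only happen for `ℓ = 2`; then there are no bad
elements, one starts from `H = T`, and adjoining one exceptional element to `H` removes the
obstruction.
-/

/-! ### Subgroups containing all `ℓ`-th powers -/

section CommGroup

open Subgroup

variable {G : Type*} [CommGroup G] {T : Subgroup G} {ℓ : ℕ}

theorem mk_mem_zpowers_mk_iff {x y : G} :
    (x : G ⧸ T) ∈ zpowers (y : G ⧸ T) ↔ x ∈ T ⊔ zpowers y := by
  have hmap : zpowers (y : G ⧸ T) = (zpowers y).map (QuotientGroup.mk' T) :=
    (MonoidHom.map_zpowers (QuotientGroup.mk' T) y).symm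
  rw [hmap, ← QuotientGroup.mk'_apply, ← mem_comap, comap_map_eq, QuotientGroup.ker_mk', sup_comm]

theorem mem_sup_zpowers_iff {x y : G} : x ∈ T ⊔ zpowers y ↔ ∃ n : ℤ, x / y ^ n ∈ T := by
  rw [mem_sup]
  refine ⟨?_, fun ⟨n, hn⟩ => ⟨_, hn, _, zpow_mem_zpowers y n, div_mul_cancel _ _⟩⟩
  rintro ⟨t, ht, _, ⟨n, rfl⟩, rfl⟩
  exact ⟨n, by simpa using ht⟩

theorem isCyclic_sup_zpowers_quotient (T : Subgroup G) (u : G) :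
    IsCyclic (↥(T ⊔ zpowers u) ⧸ T.subgroupOf (T ⊔ zpowers u)) := by
  have : IsCyclic (zpowers u ⧸ T.subgroupOf (zpowers u)) :=
    isCyclic_of_surjective (QuotientGroup.mk' _) (QuotientGroup.mk'_surjective _)
  rw [sup_comm]
  exact isCyclic_of_surjective _
    (QuotientGroup.quotientInfEquivProdNormalQuotient (zpowers u) T).surjective

theorem quotient_pow_eq_one (hpow : ∀ x : G, x ^ ℓ ∈ T) (g : G ⧸ T) : g ^ ℓ = 1 := by
  induction g using QuotientGroup.induction_on with
  | H x => rw [← QuotientGroup.mk_pow, QuotientGroup.eq_one_iff]; exact hpow x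

theorem mem_zpowers_of_isCyclic_of_forall_pow_eq_one [IsCyclic G] (hℓ : ℓ.Prime)
    (hpow : ∀ g : G, g ^ ℓ = 1) {x : G} (hx : x ≠ 1) (y : G) : y ∈ zpowers x := by
  have := Fact.mk hℓ
  have hcard : Nat.card G ∣ ℓ :=
    IsCyclic.exponent_eq_card (α := G) ▸ Monoid.exponent_dvd_of_forall_pow_eq_one hpow
  have hcard_ne : Nat.card G ≠ 1 := fun h =>
    hx (@Subsingleton.elim _ (Nat.card_eq_one_iff_unique.1 h).1 x 1)
  exact mem_zpowers_of_prime_card ((hℓ.eq_one_or_self_of_dvd _ hcard).resolve_left hcard_ne) hx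

theorem mem_zpowers_symm (hℓ : ℓ.Prime) {x y : G} (hx : x ^ ℓ = 1) (hy : y ≠ 1)
    (hyx : y ∈ zpowers x) : x ∈ zpowers y := by
  have hpow (g : zpowers x) : g ^ ℓ = 1 := by
    obtain ⟨_, n, rfl⟩ := g
    ext
    change (x ^ n) ^ ℓ = 1
    rw [← zpow_natCast, zpow_comm, zpow_natCast, hx, one_zpow]
  have := mem_zpowers_of_isCyclic_of_forall_pow_eq_one hℓ hpow (x := ⟨y, hyx⟩) (by simpa using hy)
    ⟨x, mem_zpowers x⟩
  obtain ⟨n, hn⟩ := this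
  exact ⟨n, congrArg Subtype.val hn⟩

theorem isCyclic_closure_pair_iff (hℓ : ℓ.Prime) (hpow : ∀ g : G, g ^ ℓ = 1) {x y : G}
    (hx : x ≠ 1) : IsCyclic (closure {x, y}) ↔ y ∈ zpowers x := by
  refine ⟨fun _ => ?_, fun hy => ?_⟩
  · obtain ⟨n, hn⟩ := mem_zpowers_of_isCyclic_of_forall_pow_eq_one (G := closure {x, y}) hℓ
      (fun g => Subtype.ext (hpow g)) (x := ⟨x, subset_closure (by simp)⟩) (by simpa using hx)
      ⟨y, subset_closure (by simp)⟩
    exact ⟨n, congrArg Subtype.val hn⟩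
  · have hclosure : closure {x, y} = zpowers x := by
      refine le_antisymm ((closure_le _).2 ?_) (zpowers_le.2 (subset_closure (by simp)))
      exact Set.insert_subset (mem_zpowers x) (Set.singleton_subset_iff.2 hy)
    rw [hclosure]
    infer_instance

theorem isCyclic_closure_mk_pair_iff (hℓ : ℓ.Prime) (hpow : ∀ x : G, x ^ ℓ ∈ T) {x y : G}
    (hx : x ∉ T) : IsCyclic (closure {(x : G ⧸ T), (y : G ⧸ T)}) ↔ y ∈ T ⊔ zpowers x :=
  (isCyclic_closure_pair_iff hℓ (quotient_pow_eq_one hpow)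
    (mt (QuotientGroup.eq_one_iff x).1 hx)).trans mk_mem_zpowers_mk_iff

theorem mem_sup_zpowers_of_isCyclic (hℓ : ℓ.Prime)
    (hpow : ∀ x : G, x ^ ℓ ∈ T) [IsCyclic (G ⧸ T)] {x : G} (hx : x ∉ T) (y : G) :
    y ∈ T ⊔ zpowers x :=
  mk_mem_zpowers_mk_iff.1 <| mem_zpowers_of_isCyclic_of_forall_pow_eq_one hℓ
    (quotient_pow_eq_one hpow) (mt (QuotientGroup.eq_one_iff x).1 hx) _

theorem mem_sup_zpowers_symm (hℓ : ℓ.Prime) (hpow : ∀ x : G, x ^ ℓ ∈ T) {x y : G} (hy : y ∉ T)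
    (hyx : y ∈ T ⊔ zpowers x) : x ∈ T ⊔ zpowers y :=
  mk_mem_zpowers_mk_iff.1 <| mem_zpowers_symm hℓ (quotient_pow_eq_one hpow _)
    (mt (QuotientGroup.eq_one_iff y).1 hy) (mk_mem_zpowers_mk_iff.2 hyx)

theorem zpow_mem_of_zpow_mem_of_notMem (hℓ : ℓ.Prime) {H : Subgroup G} (hTH : T ≤ H) {x : G}
    (hxT : x ^ ℓ ∈ T) (hxH : x ∉ H) {n : ℤ} (hn : x ^ n ∈ H) : x ^ n ∈ T := by
  have := Fact.mk hℓ
  have horder : orderOf (x : G ⧸ H) = ℓ :=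
    orderOf_eq_prime ((QuotientGroup.eq_one_iff _).2 (hTH hxT))
      (mt (QuotientGroup.eq_one_iff _).1 hxH)
  obtain ⟨k, rfl⟩ : (ℓ : ℤ) ∣ n :=
    horder ▸ orderOf_dvd_iff_zpow_eq_one.2 ((QuotientGroup.eq_one_iff _).2 hn)
  rw [zpow_mul, zpow_natCast]
  exact T.zpow_mem hxT k

theorem mem_sup_zpowers_iff_of_sq_mem {x y : G} (hy : y ^ 2 ∈ T) :
    x ∈ T ⊔ zpowers y ↔ x ∈ T ∨ x / y ∈ T := by
  rw [mem_sup_zpowers_iff]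
  refine ⟨?_, ?_⟩
  · rintro ⟨n, hn⟩
    obtain ⟨k, rfl | rfl⟩ := Int.even_or_odd' n
    · refine .inl ((T.mul_mem_cancel_right (T.inv_mem (T.zpow_mem hy k))).1 ?_)
      rwa [zpow_mul, zpow_ofNat, div_eq_mul_inv] at hn
    · refine .inr ((T.mul_mem_cancel_right (T.inv_mem (T.zpow_mem hy k))).1 ?_)
      rwa [zpow_add, zpow_mul, zpow_ofNat, zpow_one, div_mul_eq_div_div_swap, div_eq_mul_inv] at hn
  · rintro (h | h)
    · exact ⟨0, by simpa using h⟩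
    · exact ⟨1, by simpa using h⟩

theorem exists_addMonoidHom_zmod_of_notMem [Fact ℓ.Prime] (hpow : ∀ x : G, x ^ ℓ ∈ T) {x : G}
    (hx : x ∉ T) (c : ZMod ℓ) :
    ∃ f : Additive G →+ ZMod ℓ, (∀ t ∈ T, f (.ofMul t) = 0) ∧ f (.ofMul x) = c := by
  have : Module (ZMod ℓ) (Additive (G ⧸ T)) := AddCommGroup.zmodModule (quotient_pow_eq_one hpow)
  let mk : Additive G →+ Additive (G ⧸ T) := (QuotientGroup.mk' T).toAdditive
  have hmk (g : G) : mk (.ofMul g) = 0 ↔ g ∈ T := QuotientGroup.eq_one_iff g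
  obtain ⟨φ, hφ⟩ := Module.Projective.exists_dual_eq_one (ZMod ℓ) (x := mk (.ofMul x))
    (mt (hmk x).1 hx)
  refine ⟨(c • φ).toAddMonoidHom.comp mk, fun t ht => ?_, ?_⟩
  · simp [(hmk t).2 ht]
  · simp [hφ]

theorem map_eq_zsmul_of_div_zpow_mem {A : Type*} [AddCommGroup A] {f : Additive G →+ A}
    (hf : ∀ t ∈ T, f (.ofMul t) = 0) {x y : G} {n : ℤ} (h : y / x ^ n ∈ T) :
    f (.ofMul y) = n • f (.ofMul x) := by
  simpa [sub_eq_zero] using hf _ h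

end CommGroup

section OfUnits

theorem neg_mem_ofUnits_iff {M : Type*} [Monoid M] [HasDistribNeg M] {H : Subgroup Mˣ}
    (hneg : -1 ∈ H) {a : M} : -a ∈ H.ofUnits ↔ a ∈ H.ofUnits := by
  have neg_mem {a : M} (ha : a ∈ H.ofUnits) : -a ∈ H.ofUnits :=
    neg_one_mul a ▸ mul_mem (H.mem_ofUnits hneg (by simp)) ha
  exact ⟨fun ha => neg_neg a ▸ neg_mem ha, neg_mem⟩

variable {G₀ : Type*} [GroupWithZero G₀] {H : Subgroup G₀ˣ} {a b : G₀}

theorem ne_zero_of_mem_ofUnits (ha : a ∈ H.ofUnits) : a ≠ 0 :=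
  (H.isUnit_of_mem_ofUnits ha).ne_zero

theorem val_mem_ofUnits_iff {u : G₀ˣ} : (u : G₀) ∈ H.ofUnits ↔ u ∈ H :=
  ⟨H.mem_of_mem_val_ofUnits, fun hu => H.mem_ofUnits hu rfl⟩

theorem inv_mem_ofUnits (ha : a ∈ H.ofUnits) : a⁻¹ ∈ H.ofUnits := by
  obtain ⟨u, hu, rfl⟩ := ha
  exact H.mem_ofUnits (inv_mem hu) (Units.val_inv_eq_inv_val u)

theorem inv_mem_ofUnits_iff : a⁻¹ ∈ H.ofUnits ↔ a ∈ H.ofUnits :=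
  ⟨fun ha => inv_inv a ▸ inv_mem_ofUnits ha, inv_mem_ofUnits⟩

theorem div_mem_ofUnits (ha : a ∈ H.ofUnits) (hb : b ∈ H.ofUnits) : a / b ∈ H.ofUnits :=
  div_eq_mul_inv a b ▸ mul_mem ha (inv_mem_ofUnits hb)

theorem mul_mem_ofUnits_iff_left (hb : b ∈ H.ofUnits) : a * b ∈ H.ofUnits ↔ a ∈ H.ofUnits :=
  ⟨fun hab => mul_div_cancel_right₀ a (ne_zero_of_mem_ofUnits hb) ▸ div_mem_ofUnits hab hb,
    fun ha => mul_mem ha hb⟩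

theorem mul_mem_ofUnits_iff_right (ha : a ∈ H.ofUnits) : a * b ∈ H.ofUnits ↔ b ∈ H.ofUnits :=
  ⟨fun hab => inv_mul_cancel_left₀ (ne_zero_of_mem_ofUnits ha) b ▸
    mul_mem (inv_mem_ofUnits ha) hab, mul_mem ha⟩

end OfUnits

/-! ### The Arason–Elman–Jacob construction -/

section RigidPair

variable {K : Type*} [Field K] {T H : Subgroup Kˣ} {a b u w x y z : K}

theorem neg_eq_one_sub_div_one_sub_inv (hx0 : x ≠ 0) (hx1 : 1 - x⁻¹ ≠ 0) :
    -x = (1 - x) / (1 - x⁻¹) := by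
  rw [eq_div_iff hx1]
  field_simp
  ring

/-- The hypothesis of the Arason–Elman–Jacob construction of a valuation ring from the subgroups
`T ≤ H` of `Kˣ`: outside `H`, one of `1 - x` and `1 - x⁻¹` lies in `T`. Subsets of `K` are compared
with subgroups of `Kˣ` through the submonoid `Subgroup.ofUnits` of `K`. -/
structure IsRigidPair (T H : Subgroup Kˣ) : Prop where
  le : T ≤ H
  neg_one_mem : -1 ∈ T
  one_sub_mem : ∀ x ≠ 0, x ∉ H.ofUnits → 1 - x ∈ T.ofUnits ∨ 1 - x⁻¹ ∈ T.ofUnits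

/-- The set `O⁻` of Arason, Elman and Jacob: the part outside `H` of the valuation ring attached
to `T ≤ H`. -/
def oMinus (T H : Subgroup Kˣ) : Set K :=
  {x | x ≠ 0 ∧ x ∉ H.ofUnits ∧ 1 - x ∈ T.ofUnits}

/-- The set `O⁺` of Arason, Elman and Jacob: the part inside `H` of the valuation ring attached
to `T ≤ H`. -/
def oPlus (T H : Subgroup Kˣ) : Set K :=
  {x | x ∈ H.ofUnits ∧ ∀ a ∈ oMinus T H, x * a ∈ oMinus T H}

namespace IsRigidPair

theorem mono {H' : Subgroup Kˣ} (h : IsRigidPair T H) (hH : H ≤ H') : IsRigidPair T H' where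
  le := h.le.trans hH
  neg_one_mem := h.neg_one_mem
  one_sub_mem x hx0 hx := h.one_sub_mem x hx0 fun hxH => hx (Subgroup.ofUnits_mono hH hxH)

theorem mem_ofUnits (h : IsRigidPair T H) (hx : x ∈ T.ofUnits) : x ∈ H.ofUnits :=
  Subgroup.ofUnits_mono h.le hx

theorem neg_mem_iff (h : IsRigidPair T H) : -x ∈ H.ofUnits ↔ x ∈ H.ofUnits :=
  neg_mem_ofUnits_iff (h.le h.neg_one_mem)

theorem inv_mem_oMinus_iff (h : IsRigidPair T H) (hx0 : x ≠ 0) (hxH : x ∉ H.ofUnits) :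
    x⁻¹ ∈ oMinus T H ↔ x ∉ oMinus T H := by
  constructor
  · rintro ⟨-, -, hx'⟩ ⟨-, -, hx⟩
    have hneg := neg_eq_one_sub_div_one_sub_inv hx0 (ne_zero_of_mem_ofUnits hx')
    exact hxH (h.neg_mem_iff.1 (hneg ▸ h.mem_ofUnits (div_mem_ofUnits hx hx')))
  · intro hx
    have := (h.one_sub_mem x hx0 hxH).resolve_left fun hT => hx ⟨hx0, hxH, hT⟩
    exact ⟨inv_ne_zero hx0, mt inv_mem_ofUnits_iff.1 hxH, this⟩

theorem one_sub_mul_mem (h : IsRigidPair T H) (ha : a ∈ oMinus T H) (hb : 1 - b ∈ T.ofUnits) :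
    1 - a * b ∈ T.ofUnits ∨ (1 - a * b) / a ∈ T.ofUnits := by
  obtain ⟨ha0, haH, ha⟩ := ha
  have ha1 := ne_zero_of_mem_ofUnits ha
  have hb1 := ne_zero_of_mem_ofUnits hb
  have hzH : -(a * (1 - b) / (1 - a)) ∉ H.ofUnits := fun hz => haH <| by
    convert mul_mem (h.neg_mem_iff.1 hz) (h.mem_ofUnits (div_mem_ofUnits ha hb)) using 1
    field_simp
  have hz0 : -(a * (1 - b) / (1 - a)) ≠ 0 := by simp [ha0, ha1, hb1]
  refine (h.one_sub_mem _ hz0 hzH).imp (fun hz => ?_) fun hz => ?_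
  · convert mul_mem hz ha using 1
    field_simp
    ring
  · convert mul_mem hz hb using 1
    field_simp
    ring

theorem mul_mem_oMinus (h : IsRigidPair T H) (ha : a ∈ oMinus T H) (hb : b ∈ oMinus T H)
    (hab : a * b ∉ H.ofUnits) : a * b ∈ oMinus T H := by
  have hab0 : a * b ≠ 0 := mul_ne_zero ha.1 hb.1
  by_contra hnot
  obtain ⟨-, -, hinv⟩ := (h.inv_mem_oMinus_iff hab0 hab).2 hnot
  have hdiv := (h.one_sub_mul_mem ha hb.2.2).resolve_left fun h1 => hnot ⟨hab0, hab, h1⟩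
  have ha0 := ha.1
  have hb0 := hb.1
  have := ne_zero_of_mem_ofUnits hinv
  have hratio : -b = (1 - a * b) / a / (1 - (a * b)⁻¹) := by
    rw [eq_div_iff this]
    field_simp
    ring
  exact hb.2.1 (h.neg_mem_iff.1 (hratio ▸ h.mem_ofUnits (div_mem_ofUnits hdiv hinv)))

end IsRigidPair

/-- `T ≤ H` is a rigid pair for which `oMinus T H`, together with `0` and the multiplier set
`oPlus T H`, is a valuation ring. -/
structure IsAdmissible (T H : Subgroup Kˣ) : Prop extends IsRigidPair T H where
  mul_mem_oPlus : ∀ x ∈ oMinus T H, ∀ y ∈ oMinus T H, x * y ∈ H.ofUnits → x * y ∈ oPlus T H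
  one_sub_mem_oPlus : ∀ x ∈ oMinus T H, 1 - x ∈ oPlus T H

/-- An exceptional element of a rigid pair `T ≤ H`: an obstruction to admissibility that disappears
when `H` is enlarged to `H ⊔ ⟨u⟩`. -/
structure IsExceptional (T H : Subgroup Kˣ) (u : K) : Prop where
  mem : u ∈ oMinus T H
  sq_mem : u ^ 2 ∈ H.ofUnits
  div_mem_oMinus : ∀ w ∈ oMinus T H, w / u ∉ H.ofUnits → w / u ∈ oMinus T H

namespace IsRigidPair

theorem isExceptional_of_mul_mul_notMem (h : IsRigidPair T H) (hx : x ∈ oMinus T H)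
    (hy : y ∈ oMinus T H) (hz : z ∈ oMinus T H) (hxy : x * y ∈ H.ofUnits)
    (hxyz : x * y * z ∉ oMinus T H) : IsExceptional T H x := by
  have hxyzH : x * y * z ∉ H.ofUnits :=
    mt (mul_mem_ofUnits_iff_right hxy).1 hz.2.1
  have hx0 := hx.1
  have hy0 := hy.1
  have hz0 := hz.1
  have hxz : x * z ∈ H.ofUnits := by
    by_contra hH
    rw [mul_right_comm] at hxyz hxyzH
    exact hxyz (h.mul_mem_oMinus (h.mul_mem_oMinus hx hz hH) hy hxyzH)
  have hyz : y * z ∈ H.ofUnits := by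
    by_contra hH
    rw [mul_assoc] at hxyz hxyzH
    exact hxyz (h.mul_mem_oMinus hx (h.mul_mem_oMinus hy hz hH) hxyzH)
  refine ⟨hx, ?_, fun w hw hwx => ?_⟩
  · convert div_mem_ofUnits (mul_mem hxy hxz) hyz using 1
    field_simp
  · have hw0 := hw.1
    by_contra hnot
    have hxw : x / w ∈ oMinus T H :=
      inv_div w x ▸ (h.inv_mem_oMinus_iff (div_ne_zero hw0 hx0) hwx).2 hnot
    have hxwy : x / w * y ∈ oMinus T H := h.mul_mem_oMinus hxw hy fun hH => hw.2.1 <| by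
      convert div_mem_ofUnits hxy hH using 1
      field_simp
    have hxwyz : x / w * y * z ∈ oMinus T H := h.mul_mem_oMinus hxwy hz fun hH => hwx <| by
      convert div_mem_ofUnits hyz hH using 1
      field_simp
    have hcancel : x / w * y * z * w = x * y * z := by field_simp
    exact hxyz (hcancel ▸ h.mul_mem_oMinus hxwyz hw (hcancel ▸ hxyzH))

theorem exists_mem_oMinus_of_one_sub_mul_notMem (h : IsRigidPair T H) (hx : x ∈ oMinus T H)
    (ha : a ∈ oMinus T H) (hxa : (1 - x) * a ∉ oMinus T H) :
    ∃ d ∈ oMinus T H, a * d ∈ T.ofUnits ∧ 1 - a * d ∉ H.ofUnits ∧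
      (1 - a * d) / a ∈ T.ofUnits ∧ (1 - a * d) / d ∈ T.ofUnits := by
  obtain ⟨-, hxH, hxT⟩ := hx
  have hx1 := ne_zero_of_mem_ofUnits hxT
  have ha0 := ha.1
  have hxaH : (1 - x) * a ∉ H.ofUnits :=
    mt (mul_mem_ofUnits_iff_right (h.mem_ofUnits hxT)).1 ha.2.1
  have had : a * ((1 - x) * a)⁻¹ = (1 - x)⁻¹ := by field_simp
  have hadH : 1 - (1 - x)⁻¹ ∉ H.ofUnits := fun hH => hxH <| h.neg_mem_iff.1 <| by
    convert mul_mem hH (h.mem_ofUnits hxT) using 1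
    field_simp
    ring
  have hd := (h.inv_mem_oMinus_iff (mul_ne_zero hx1 ha0) hxaH).2 hxa
  have key_a := h.one_sub_mul_mem ha hd.2.2
  have key_d := h.one_sub_mul_mem hd ha.2.2
  refine ⟨((1 - x) * a)⁻¹, hd, ?_⟩
  rw [mul_comm _ a] at key_d
  rw [had] at key_a key_d ⊢
  exact ⟨inv_mem_ofUnits hxT, hadH, key_a.resolve_left fun hT => hadH (h.mem_ofUnits hT),
    key_d.resolve_left fun hT => hadH (h.mem_ofUnits hT)⟩

theorem isExceptional_of_one_sub_mul_notMem (h : IsRigidPair T H) (hx : x ∈ oMinus T H)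
    (ha : a ∈ oMinus T H) (hxa : (1 - x) * a ∉ oMinus T H) : IsExceptional T H a := by
  obtain ⟨d, hd, had, hadH, hdiva, hdivd⟩ := h.exists_mem_oMinus_of_one_sub_mul_notMem hx ha hxa
  have ha0 := ha.1
  have hd0 := hd.1
  have hda0 : (1 - a * d) ≠ 0 := fun h0 => ne_zero_of_mem_ofUnits hdiva (by simp [h0])
  refine ⟨ha, ?_, fun w hw hwa => ?_⟩
  · convert h.mem_ofUnits (mul_mem (div_mem_ofUnits hdivd hdiva) had) using 1
    field_simp
  · have hw0 := hw.1
    by_contra hnot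
    have haw : a / w ∈ oMinus T H :=
      inv_div w a ▸ (h.inv_mem_oMinus_iff (div_ne_zero hw0 ha0) hwa).2 hnot
    have hawd : a / w * d ∈ oMinus T H := h.mul_mem_oMinus haw hd fun hH => hw.2.1 <| by
      convert div_mem_ofUnits (h.mem_ofUnits had) hH using 1
      field_simp
    have hkey := h.one_sub_mul_mem hw hawd.2.2
    rw [show w * (a / w * d) = a * d by field_simp] at hkey
    refine hwa (h.mem_ofUnits ?_)
    convert div_mem_ofUnits hdiva (hkey.resolve_left fun hT => hadH (h.mem_ofUnits hT)) using 1
    field_simp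

theorem isAdmissible_or_exists_isExceptional (h : IsRigidPair T H) :
    IsAdmissible T H ∨ ∃ u, IsExceptional T H u := by
  by_cases hex : ∃ u, IsExceptional T H u
  · exact .inr hex
  refine .inl
    { h with
      mul_mem_oPlus := fun x hx y hy hxy => ?_
      one_sub_mem_oPlus := fun x hx => ?_ }
  · refine ⟨hxy, fun z hz => ?_⟩
    by_contra hxyz
    exact hex ⟨x, h.isExceptional_of_mul_mul_notMem hx hy hz hxy hxyz⟩
  · refine ⟨h.mem_ofUnits hx.2.2, fun a ha => ?_⟩
    by_contra hxa
    exact hex ⟨a, h.isExceptional_of_one_sub_mul_notMem hx ha hxa⟩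

end IsRigidPair

theorem IsExceptional.mul_mem_oMinus (hu : IsExceptional T H u) (h : IsRigidPair T H)
    (hw : w ∈ oMinus T H) (hwu : w / u ∉ H.ofUnits) : w * u ∈ oMinus T H := by
  refine h.mul_mem_oMinus hw hu.mem fun hH => hwu ?_
  have := hu.mem.1
  convert div_mem_ofUnits hH hu.sq_mem using 1
  field_simp

theorem mem_ofUnits_sup_zpowers_iff {u : Kˣ} (hu : (u : K) ^ 2 ∈ H.ofUnits) :
    x ∈ (H ⊔ Subgroup.zpowers u).ofUnits ↔ x ∈ H.ofUnits ∨ x / u ∈ H.ofUnits := by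
  rcases eq_or_ne x 0 with rfl | hx0
  · have h0 (H : Subgroup Kˣ) : (0 : K) ∉ H.ofUnits := fun h => ne_zero_of_mem_ofUnits h rfl
    simp [h0]
  · lift x to Kˣ using hx0.isUnit
    rw [← Units.val_pow_eq_pow_val, val_mem_ofUnits_iff] at hu
    rw [← Units.val_div_eq_div_val]
    simp only [val_mem_ofUnits_iff]
    exact mem_sup_zpowers_iff_of_sq_mem hu

theorem mem_oMinus_sup_zpowers_iff {u : Kˣ} (hu : (u : K) ^ 2 ∈ H.ofUnits) :
    x ∈ oMinus T (H ⊔ Subgroup.zpowers u) ↔ x ∈ oMinus T H ∧ x / u ∉ H.ofUnits := by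
  simp only [oMinus, Set.mem_ofPred_eq, mem_ofUnits_sup_zpowers_iff hu]
  tauto

namespace IsExceptional

variable {u : Kˣ}

theorem mul_mul_mem_oMinus (hu : IsExceptional T H (u : K)) (h : IsRigidPair T H)
    (hx : x ∈ oMinus T (H ⊔ Subgroup.zpowers u)) (hy : y ∈ oMinus T (H ⊔ Subgroup.zpowers u))
    (hz : z ∈ oMinus T (H ⊔ Subgroup.zpowers u))
    (hxy : x * y ∈ (H ⊔ Subgroup.zpowers u).ofUnits) :
    x * y * z ∈ oMinus T (H ⊔ Subgroup.zpowers u) := by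
  have hxyzH : x * y * z ∉ (H ⊔ Subgroup.zpowers u).ofUnits :=
    mt (mul_mem_ofUnits_iff_right hxy).1 hz.2.1
  rw [mem_ofUnits_sup_zpowers_iff hu.sq_mem, not_or] at hxyzH
  rw [mem_oMinus_sup_zpowers_iff hu.sq_mem] at hx hy hz ⊢
  refine ⟨?_, hxyzH.2⟩
  by_cases hH : x * y ∈ H.ofUnits
  swap
  · exact h.mul_mem_oMinus (h.mul_mem_oMinus hx.1 hy.1 hH) hz.1 hxyzH.1
  have hx0 := hx.1.1
  have hy0 := hy.1.1
  have hxuy : x / u * y ∈ oMinus T H :=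
    h.mul_mem_oMinus (hu.div_mem_oMinus x hx.1 hx.2) hy.1 fun hH' => hu.mem.2.1 <| by
      convert div_mem_ofUnits hH hH' using 1
      field_simp
  have hxuyz : x / u * y * z ∈ oMinus T H := h.mul_mem_oMinus hxuy hz.1 fun hH' => hxyzH.2 <| by
    convert hH' using 1
    field_simp
  convert hu.mul_mem_oMinus h hxuyz fun hH' => hz.1.2.1 ?_ using 1
  · field_simp
  · convert div_mem_ofUnits (mul_mem hH' hu.sq_mem) hH using 1
    field_simp

theorem one_sub_mul_mem_oMinus (hu : IsExceptional T H (u : K)) (h : IsRigidPair T H)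
    (hx : x ∈ oMinus T (H ⊔ Subgroup.zpowers u)) (ha : a ∈ oMinus T (H ⊔ Subgroup.zpowers u)) :
    (1 - x) * a ∈ oMinus T (H ⊔ Subgroup.zpowers u) := by
  by_contra hxa
  have h' : IsRigidPair T (H ⊔ Subgroup.zpowers u) := h.mono le_sup_left
  obtain ⟨d, hd, -, hadH, hdiva, -⟩ := h'.exists_mem_oMinus_of_one_sub_mul_notMem hx ha hxa
  rw [mem_oMinus_sup_zpowers_iff hu.sq_mem] at ha hd
  have ha0 := ha.1.1
  have had0 : (1 - a * d) ≠ 0 := fun h0 => ne_zero_of_mem_ofUnits hdiva (by simp [h0])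
  have hkey := h.one_sub_mul_mem (hu.div_mem_oMinus a ha.1 ha.2) (hu.mul_mem_oMinus h hd.1 hd.2).2.2
  rw [show a / u * (d * u) = a * d by field_simp] at hkey
  refine hu.mem.2.1 (h.mem_ofUnits ?_)
  convert div_mem_ofUnits (hkey.resolve_left fun hT => hadH (h'.mem_ofUnits hT)) hdiva using 1
  field_simp

theorem isAdmissible (hu : IsExceptional T H (u : K)) (h : IsRigidPair T H) :
    IsAdmissible T (H ⊔ Subgroup.zpowers u) :=
  { h.mono le_sup_left with
    mul_mem_oPlus := fun _ hx _ hy hxy =>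
      ⟨hxy, fun _ hz => hu.mul_mul_mem_oMinus h hx hy hz hxy⟩
    one_sub_mem_oPlus := fun _ hx =>
      ⟨(h.mono le_sup_left).mem_ofUnits hx.2.2, fun _ ha => hu.one_sub_mul_mem_oMinus h hx ha⟩ }

end IsExceptional

/-- The underlying set `{0} ∪ O⁻ ∪ O⁺` of the Arason–Elman–Jacob ring of `T ≤ H`. -/
def aejRing (T H : Subgroup Kˣ) : Set K :=
  {x | x = 0 ∨ x ∈ oMinus T H ∨ x ∈ oPlus T H}

theorem one_mem_oPlus : 1 ∈ oPlus T H :=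
  ⟨one_mem _, fun a ha => (one_mul a).symm ▸ ha⟩

theorem IsRigidPair.exists_mul_eq_of_inv_notMem_oPlus (h : IsRigidPair T H) (hx : x ∈ H.ofUnits)
    (hx' : x⁻¹ ∉ oPlus T H) : ∃ a ∈ oMinus T H, ∃ d ∈ oMinus T H, a * d = x := by
  have hxinv := inv_mem_ofUnits hx
  obtain ⟨a, ha, hxa⟩ : ∃ a ∈ oMinus T H, x⁻¹ * a ∉ oMinus T H := by
    by_contra! hall
    exact hx' ⟨hxinv, hall⟩
  have hx0 := ne_zero_of_mem_ofUnits hx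
  have ha0 := ha.1
  have hxaH : x⁻¹ * a ∉ H.ofUnits := mt (mul_mem_ofUnits_iff_right hxinv).1 ha.2.1
  refine ⟨a, ha, (x⁻¹ * a)⁻¹, (h.inv_mem_oMinus_iff (by positivity) hxaH).2 hxa, ?_⟩
  field_simp

namespace IsAdmissible

theorem neg_mem_oMinus (h : IsAdmissible T H) (ha : a ∈ oMinus T H) : -a ∈ oMinus T H := by
  have ha0 := ha.1
  have hnegH : -a ∉ H.ofUnits := mt h.neg_mem_iff.1 ha.2.1
  by_contra hneg
  have hinv := (h.inv_mem_oMinus_iff (neg_ne_zero.2 ha0) hnegH).2 hneg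
  by_cases hsq : a * a ∈ H.ofUnits
  · have := (h.mul_mem_oPlus a ha a ha hsq).2 _ hinv
    rw [show a * a * (-a)⁻¹ = -a by field_simp] at this
    exact hneg this
  · have hinv_sq : (-a)⁻¹ * (-a)⁻¹ = (a * a)⁻¹ := by field_simp
    have := h.mul_mem_oMinus hinv hinv (by rwa [hinv_sq, inv_mem_ofUnits_iff])
    rw [hinv_sq, h.inv_mem_oMinus_iff (mul_ne_zero ha0 ha0) hsq] at this
    exact this (h.mul_mem_oMinus ha ha hsq)

theorem mul_mem_aejRing (h : IsAdmissible T H) (hx : x ∈ aejRing T H) (hy : y ∈ aejRing T H) :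
    x * y ∈ aejRing T H := by
  rcases hx with rfl | hx | hx
  · exact .inl (zero_mul y)
  · rcases hy with rfl | hy | hy
    · exact .inl (mul_zero x)
    · by_cases hxy : x * y ∈ H.ofUnits
      · exact .inr (.inr (h.mul_mem_oPlus x hx y hy hxy))
      · exact .inr (.inl (h.mul_mem_oMinus hx hy hxy))
    · exact .inr (.inl (mul_comm y x ▸ hy.2 x hx))
  · rcases hy with rfl | hy | hy
    · exact .inl (mul_zero x)
    · exact .inr (.inl (hx.2 y hy))
    · refine .inr (.inr ⟨mul_mem hx.1 hy.1, fun a ha => ?_⟩)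
      exact (mul_assoc x y a).symm ▸ hx.2 _ (hy.2 a ha)

theorem neg_mem_aejRing (h : IsAdmissible T H) (hx : x ∈ aejRing T H) : -x ∈ aejRing T H := by
  rcases hx with rfl | hx | hx
  · exact .inl neg_zero
  · exact .inr (.inl (h.neg_mem_oMinus hx))
  · exact .inr (.inr ⟨h.neg_mem_iff.2 hx.1, fun a ha =>
      (neg_mul x a).symm ▸ h.neg_mem_oMinus (hx.2 a ha)⟩)

theorem mem_aejRing_or_inv_mem (h : IsAdmissible T H) (x : K) :
    x ∈ aejRing T H ∨ x⁻¹ ∈ aejRing T H := by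
  by_cases hx0 : x = 0
  · exact .inl (.inl hx0)
  by_cases hxH : x ∈ H.ofUnits
  · by_cases hinv : x⁻¹ ∈ oPlus T H
    · exact .inr (.inr (.inr hinv))
    · obtain ⟨a, ha, d, hd, rfl⟩ := h.exists_mul_eq_of_inv_notMem_oPlus hxH hinv
      exact .inl (h.mul_mem_aejRing (.inr (.inl ha)) (.inr (.inl hd)))
  · by_cases hx : x ∈ oMinus T H
    · exact .inl (.inr (.inl hx))
    · exact .inr (.inr (.inl ((h.inv_mem_oMinus_iff hx0 hxH).2 hx)))

theorem div_one_sub_mem_oMinus (h : IsAdmissible T H) (ha : a ∈ oMinus T H) (hb : b ∈ oMinus T H) :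
    b / (1 - a) ∈ oMinus T H := by
  have ha1 := ne_zero_of_mem_ofUnits ha.2.2
  have he : 1 - -a / (1 - a) = (1 - a)⁻¹ := by
    field_simp
    ring
  have heH : -a / (1 - a) ∉ H.ofUnits := by
    rw [div_eq_mul_inv, mul_mem_ofUnits_iff_left (inv_mem_ofUnits (h.mem_ofUnits ha.2.2)),
      h.neg_mem_iff]
    exact ha.2.1
  have hmem : -a / (1 - a) ∈ oMinus T H :=
    ⟨div_ne_zero (neg_ne_zero.2 ha.1) ha1, heH, he ▸ inv_mem_ofUnits ha.2.2⟩
  have := (h.one_sub_mem_oPlus _ hmem).2 b hb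
  rwa [he, inv_mul_eq_div] at this

theorem add_mem_oMinus (h : IsAdmissible T H) (ha : a ∈ oMinus T H) (hb : b ∈ oMinus T H)
    (hab0 : a + b ≠ 0) (habH : a + b ∉ H.ofUnits) : a + b ∈ oMinus T H := by
  refine ⟨hab0, habH, ?_⟩
  have ha1 := ne_zero_of_mem_ofUnits ha.2.2
  convert mul_mem ha.2.2 (h.div_one_sub_mem_oMinus ha hb).2.2 using 1
  field_simp
  ring

theorem one_add_mem_aejRing_of_mem_oPlus (h : IsAdmissible T H) (hx : x ∈ oPlus T H) :
    1 + x ∈ aejRing T H := by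
  by_cases hx0 : 1 + x = 0
  · exact .inl hx0
  by_cases hxH : 1 + x ∈ H.ofUnits
  · refine .inr (.inr ⟨hxH, fun a ha => ?_⟩)
    have hxa0 := mul_ne_zero hx0 ha.1
    have hxaH := mt (mul_mem_ofUnits_iff_right hxH).1 ha.2.1
    rw [one_add_mul] at hxa0 hxaH ⊢
    exact h.add_mem_oMinus ha (hx.2 a ha) hxa0 hxaH
  · refine .inr (.inl ?_)
    by_contra hnot
    have hinv := (h.inv_mem_oMinus_iff hx0 hxH).2 hnot
    have hsub : 1 - (1 + x)⁻¹ = x * (1 + x)⁻¹ := by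
      field_simp
      ring
    exact (hx.2 _ hinv).2.1 (hsub ▸ h.mem_ofUnits hinv.2.2)

theorem one_add_mem_aejRing (h : IsAdmissible T H) (hx : x ∈ aejRing T H) :
    1 + x ∈ aejRing T H := by
  rcases hx with rfl | hx | hx
  · exact .inr (.inr ((add_zero (1 : K)).symm ▸ one_mem_oPlus))
  · exact .inr (.inr (sub_neg_eq_add 1 x ▸ h.one_sub_mem_oPlus _ (h.neg_mem_oMinus hx)))
  · exact h.one_add_mem_aejRing_of_mem_oPlus hx

theorem add_mem_aejRing (h : IsAdmissible T H) (hx : x ∈ aejRing T H) (hy : y ∈ aejRing T H) :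
    x + y ∈ aejRing T H := by
  rcases eq_or_ne x 0 with rfl | hx0
  · rwa [zero_add]
  rcases eq_or_ne y 0 with rfl | hy0
  · rwa [add_zero]
  rcases h.mem_aejRing_or_inv_mem (x / y) with hxy | hyx
  · convert h.mul_mem_aejRing hy (h.one_add_mem_aejRing hxy) using 1
    field_simp
    ring
  · convert h.mul_mem_aejRing hx (h.one_add_mem_aejRing hyx) using 1
    field_simp

/-- The Arason–Elman–Jacob valuation ring `{0} ∪ O⁻ ∪ O⁺` of an admissible pair. -/
def valuationSubring (h : IsAdmissible T H) : ValuationSubring K where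
  carrier := aejRing T H
  zero_mem' := .inl rfl
  one_mem' := .inr (.inr one_mem_oPlus)
  add_mem' := h.add_mem_aejRing
  mul_mem' := h.mul_mem_aejRing
  neg_mem' := h.neg_mem_aejRing
  mem_or_inv_mem' := h.mem_aejRing_or_inv_mem

theorem mem_valuationSubring (h : IsAdmissible T H) : x ∈ h.valuationSubring ↔ x ∈ aejRing T H :=
  Iff.rfl

theorem mem_ofUnits_of_mem_aejRing_of_inv_mem (h : IsAdmissible T H) (hx0 : x ≠ 0)
    (hx : x ∈ aejRing T H) (hx' : x⁻¹ ∈ aejRing T H) : x ∈ H.ofUnits := by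
  by_contra hxH
  have hinvH := mt inv_mem_ofUnits_iff.1 hxH
  have hxm := (hx.resolve_left hx0).resolve_right fun hp => hxH hp.1
  have hxm' := (hx'.resolve_left (inv_ne_zero hx0)).resolve_right fun hp => hinvH hp.1
  exact (h.inv_mem_oMinus_iff hx0 hxH).1 hxm' hxm

theorem unitGroup_valuationSubring_le (h : IsAdmissible T H) :
    h.valuationSubring.unitGroup ≤ H := by
  intro u hu
  rw [ValuationSubring.mem_unitGroup_iff] at hu
  refine val_mem_ofUnits_iff.1 (h.mem_ofUnits_of_mem_aejRing_of_inv_mem u.ne_zero ?_ ?_)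
  · exact (h.valuationSubring.valuation_le_one_iff _).1 hu.le
  · refine (h.valuationSubring.valuation_le_one_iff _).1 ?_
    rw [map_inv₀, hu, inv_one]

end IsAdmissible

section Maximality

variable {O : ValuationSubring K}

theorem mem_ofUnits_of_valuation_eq_one (hO : O.unitGroup ≤ H) (hx : O.valuation x = 1) :
    x ∈ H.ofUnits := by
  have hx0 : x ≠ 0 := fun h0 => by simp [h0] at hx
  exact ⟨Units.mk0 x hx0, hO ((O.mem_unitGroup_iff _).2 hx), rfl⟩

namespace IsRigidPair

theorem mem_oMinus_of_unitGroup_le (h : IsRigidPair T H) (hO : O.unitGroup ≤ H) (hxO : x ∈ O)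
    (hx0 : x ≠ 0) (hxH : x ∉ H.ofUnits) : x ∈ oMinus T H := by
  have hlt : O.valuation x < 1 := ((O.valuation_le_one_iff x).2 hxO).lt_of_ne fun hx =>
    hxH (mem_ofUnits_of_valuation_eq_one hO hx)
  have hsub : 1 - x ∈ H.ofUnits :=
    mem_ofUnits_of_valuation_eq_one hO (O.valuation.map_one_sub_of_lt hlt)
  refine ⟨hx0, hxH, (h.one_sub_mem x hx0 hxH).resolve_right fun hT => hxH ?_⟩
  have hneg := neg_eq_one_sub_div_one_sub_inv hx0 (ne_zero_of_mem_ofUnits hT)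
  exact h.neg_mem_iff.1 (hneg ▸ div_mem_ofUnits hsub (h.mem_ofUnits hT))

theorem mem_of_mem_oMinus (h : IsRigidPair T H) (hO : O.unitGroup ≤ H) (hx : x ∈ oMinus T H) :
    x ∈ O := by
  refine (O.mem_or_inv_mem x).resolve_right fun hinv => ?_
  have := h.mem_oMinus_of_unitGroup_le hO hinv (inv_ne_zero hx.1) (mt inv_mem_ofUnits_iff.1 hx.2.1)
  exact (h.inv_mem_oMinus_iff hx.1 hx.2.1).1 this hx

end IsRigidPair

namespace IsAdmissible

theorem le_valuationSubring (h : IsAdmissible T H) (hO : O.unitGroup ≤ H) :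
    O ≤ h.valuationSubring := by
  intro x hx
  rw [mem_valuationSubring]
  by_cases hx0 : x = 0
  · exact .inl hx0
  by_cases hxH : x ∈ H.ofUnits
  · refine .inr (.inr ⟨hxH, fun a ha => ?_⟩)
    exact h.mem_oMinus_of_unitGroup_le hO (mul_mem hx (h.mem_of_mem_oMinus hO ha))
      (mul_ne_zero hx0 ha.1) (mt (mul_mem_ofUnits_iff_right hxH).1 ha.2.1)
  · exact .inr (.inl (h.mem_oMinus_of_unitGroup_le hO hx hx0 hxH))

theorem one_add_mem_of_valuation_lt_one (h : IsAdmissible T H)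
    (hx : h.valuationSubring.valuation x < 1) : 1 + x ∈ T.ofUnits := by
  have hadd : 1 + x ∈ H.ofUnits := mem_ofUnits_of_valuation_eq_one h.unitGroup_valuationSubring_le
    (Valuation.map_one_add_of_lt _ hx)
  rcases (ValuationSubring.valuation_le_one_iff _ x).1 hx.le with rfl | hxm | hxp
  · simp [one_mem]
  · simpa using (h.neg_mem_oMinus hxm).2.2
  · have hinv : x⁻¹ ∉ oPlus T H := fun hp => by
      have hle := (ValuationSubring.valuation_le_one_iff _ _).2
        (h.mem_valuationSubring.2 (.inr (.inr hp)))
      rw [map_inv₀, inv_le_one₀ (by simpa [zero_lt_iff] using ne_zero_of_mem_ofUnits hxp.1)] at hle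
      exact hle.not_gt hx
    obtain ⟨a, ha, d, hd, rfl⟩ := h.exists_mul_eq_of_inv_notMem_oPlus hxp.1 hinv
    have hneg := h.neg_mem_oMinus ha
    have hkey := h.one_sub_mul_mem hneg hd.2.2
    rw [neg_mul, sub_neg_eq_add, div_eq_mul_inv] at hkey
    refine hkey.resolve_right fun hdiv => hneg.2.1 ?_
    exact inv_mem_ofUnits_iff.1 ((mul_mem_ofUnits_iff_right hadd).1 (h.mem_ofUnits hdiv))

end IsAdmissible

end Maximality

end RigidPair

/-! ### Collinearity in the plane -/

section Plane

variable {K F : Type*} [Field K] [Field F] {f g : Kˣ → F} {x y z w : K} {α β γ δ a b a' b' : F}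

/-- Two functions `f g : Kˣ → F`, seen as a map from `Kˣ` to the affine plane, have collinear sums
if `u + v` is nonzero and lies on the line joining `u` and `v` whenever these are distinct points of
the plane. -/
def CollinearSums (f g : Kˣ → F) : Prop :=
  ∀ u v : Kˣ, f u ≠ f v ∨ g u ≠ g v → ∃ w : Kˣ, (w : K) = u + v ∧
    ∃ t : F, f w = f v + t * (f u - f v) ∧ g w = g v + t * (g u - g v)

/-- `z` is nonzero and `(f z, g z)` is the point of the affine plane with homogeneous coordinates
`[γ : a : b]`. -/
def HasCoords (f g : Kˣ → F) (z : K) (γ a b : F) : Prop :=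
  γ ≠ 0 ∧ ∃ u : Kˣ, (u : K) = z ∧ γ * f u = a ∧ γ * g u = b

theorem CollinearSums.swap (h : CollinearSums f g) : CollinearSums g f := fun u v huv =>
  let ⟨w, hw, t, hf, hg⟩ := h u v huv.symm
  ⟨w, hw, t, hg, hf⟩

theorem HasCoords.swap (h : HasCoords f g z γ a b) : HasCoords g f z γ b a :=
  let ⟨hγ, u, hu, ha, hb⟩ := h
  ⟨hγ, u, hu, hb, ha⟩

namespace CollinearSums

theorem exists_add_eq (h : CollinearSums f g) (hz : HasCoords f g z γ a b)
    (hw : HasCoords f g w δ a' b') (hne : a * δ ≠ a' * γ ∨ b * δ ≠ b' * γ) :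
    ∃ u : Kˣ, (u : K) = z + w ∧ ∀ l m c : F, l * a + m * b = c * γ → l * a' + m * b' = c * δ →
      l * f u + m * g u = c := by
  obtain ⟨hγ, z, rfl, rfl, rfl⟩ := hz
  obtain ⟨hδ, w, rfl, rfl, rfl⟩ := hw
  have hzw : f z ≠ f w ∨ g z ≠ g w :=
    hne.imp (fun hf heq => hf (by rw [heq]; ring)) fun hg heq => hg (by rw [heq]; ring)
  obtain ⟨u, hu, t, hfu, hgu⟩ := h z w hzw
  refine ⟨u, hu, fun l m c hz hw => ?_⟩
  have hz' : l * f z + m * g z = c := mul_right_cancel₀ hγ (by linear_combination hz)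
  have hw' : l * f w + m * g w = c := mul_right_cancel₀ hδ (by linear_combination hw)
  rw [hfu, hgu]
  linear_combination t * hz' + (1 - t) * hw'

theorem hasCoords_one_add_add (h : CollinearSums f g) (hx : HasCoords f g x α 1 0)
    (hx' : HasCoords f g (1 + x) (1 + α) 1 0) (hy : HasCoords f g y β 0 1)
    (hy' : HasCoords f g (1 + y) (1 + β) 0 1) : HasCoords f g (1 + (x + y)) (1 + (α + β)) 1 1 := by
  obtain ⟨u, hu, hline⟩ := h.exists_add_eq hx' hy (.inl (by simpa using hy.1))
  obtain ⟨u', hu', hline'⟩ := h.exists_add_eq hx hy' (.inl (by simpa using hy'.1))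
  obtain rfl : u = u' := Units.ext (by rw [hu, hu']; ring)
  have hxy := hline (1 + α) β 1 (by ring) (by ring)
  have hxy' := hline' α (1 + β) 1 (by ring) (by ring)
  have hf : (1 + (α + β)) * f u = 1 := by linear_combination (1 + β) * hxy - β * hxy'
  exact ⟨left_ne_zero_of_mul_eq_one hf, u, by rw [hu]; ring, hf,
    by linear_combination (1 + α) * hxy' - α * hxy⟩

theorem hasCoords_one_add_add_of_hasCoords_add (h : CollinearSums f g)
    (hone : HasCoords f g 1 1 0 0) (hz : HasCoords f g z γ 1 0)
    (hw' : HasCoords f g (1 + w) (1 + δ) 0 1) (hzw : HasCoords f g (z + w) (γ + δ) 1 1) :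
    HasCoords f g (1 + (z + w)) (1 + (γ + δ)) 1 1 := by
  obtain ⟨u, hu, hline⟩ := h.exists_add_eq hz hw' (.inl (by simpa using hw'.1))
  obtain ⟨u', hu', hline'⟩ := h.exists_add_eq hone hzw (.inl (by simp))
  obtain rfl : u = u' := Units.ext (by rw [hu, hu']; ring)
  have hzw := hline γ (1 + δ) 1 (by ring) (by ring)
  have hdiag := hline' 1 (-1) 0 (by ring) (by ring)
  have hf : (1 + (γ + δ)) * f u = 1 := by linear_combination hzw + (1 + δ) * hdiag
  exact ⟨left_ne_zero_of_mul_eq_one hf, u, hu', hf, by linear_combination hzw - γ * hdiag⟩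

theorem hasCoords_one_add (h : CollinearSums f g) (hone : HasCoords f g 1 1 0 0)
    (hz : HasCoords f g z γ 1 0) (hw : HasCoords f g (-w) δ 0 1)
    (hzw : HasCoords f g (1 + (z + w)) (1 + (γ + δ)) 1 1) :
    HasCoords f g (1 + z) (1 + γ) 1 0 := by
  obtain ⟨u, hu, hline⟩ := h.exists_add_eq hone hz (.inl (by simp))
  obtain ⟨u', hu', hline'⟩ := h.exists_add_eq hzw hw (.inl (by simpa using hw.1))
  obtain rfl : u = u' := Units.ext (by rw [hu, hu']; ring)
  have haxis : g u = 0 := by simpa using hline 0 1 0 (by ring) (by ring)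
  have hf : (1 + γ) * f u = 1 := by
    linear_combination hline' (1 + γ) δ 1 (by ring) (by ring) - δ * haxis
  exact ⟨left_ne_zero_of_mul_eq_one hf, u, hu, hf, by rw [haxis, mul_zero]⟩

theorem hasCoords_natCast_add (h : CollinearSums f g) (hone : HasCoords f g 1 1 0 0)
    (hx : HasCoords f g x α 1 0) (hnx : HasCoords f g (-x) α 1 0)
    (hx' : HasCoords f g (1 + x) (1 + α) 1 0) (hy : HasCoords f g y β 0 1)
    (hny : HasCoords f g (-y) β 0 1) (hy' : HasCoords f g (1 + y) (1 + β) 0 1) (n : ℕ) :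
    HasCoords f g (n + x) (n + α) 1 0 := by
  suffices HasCoords f g (n + x) (n + α) 1 0 ∧ HasCoords f g (n + y) (n + β) 0 1 ∧
      HasCoords f g (1 + (n + x + y)) (1 + (n + α + β)) 1 1 from this.1
  induction n with
  | zero => simpa using ⟨hx, hy, h.hasCoords_one_add_add hx hx' hy hy'⟩
  | succ n ih =>
    obtain ⟨hnx_n, hny_n, hxy_n⟩ := ih
    have hx_succ := h.hasCoords_one_add hone hnx_n hny hxy_n
    have hy_succ := (h.swap.hasCoords_one_add hone.swap hny_n.swap hnx.swap
      (by convert hxy_n.swap using 1 <;> ring)).swap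
    have hxy_succ := h.hasCoords_one_add_add_of_hasCoords_add hone hx_succ hy'
      (by convert hxy_n using 1 <;> ring)
    refine ⟨?_, ?_, ?_⟩
    · convert hx_succ using 1 <;> push_cast <;> ring
    · convert hy_succ using 1 <;> push_cast <;> ring
    · convert hxy_succ using 1 <;> push_cast <;> ring

end CollinearSums

end Plane

/-! ### Rigid subgroups -/

section Bad

open Subgroup

variable {K : Type*} [Field K] {T : Subgroup Kˣ} {ℓ : ℕ} {x y : Kˣ}

theorem isRigid_iff (hℓ : ℓ.Prime) (hpow : ∀ x : Kˣ, x ^ ℓ ∈ T) :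
    IsRigid T ↔ ∀ x ∉ T, ∀ y : Kˣ, (y : K) = 1 - x → y ∈ T ⊔ zpowers x := by
  refine ⟨fun h x hx y hy => ?_, fun h x hx _ =>
    (isCyclic_closure_mk_pair_iff hℓ hpow hx).2 (h x hx _ rfl)⟩
  have hy_mk : Units.mk0 (1 - (x : K)) (hy ▸ y.ne_zero) = y := Units.ext hy.symm
  exact hy_mk ▸ (isCyclic_closure_mk_pair_iff hℓ hpow hx).1 (h x hx _)

theorem isRigid_of_eq_Hbold (hℓ : ℓ.Prime) (hpow : ∀ x : Kˣ, x ^ ℓ ∈ T) (hHT : T = Hbold T) :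
    IsRigid T := by
  have exists_notMem (z : Kˣ) (hz : z ∉ T) : ∃ H : Subgroup Kˣ, ((T ≤ H ∧ IsCyclic (Kˣ ⧸ H)) ∧
      ∀ H' : Subgroup Kˣ, T ≤ H' → IsCyclic (Kˣ ⧸ H') → IsRigid (H ⊓ H')) ∧ z ∉ H := by
    rw [hHT, Hbold, mem_sInf] at hz
    push Not at hz
    exact hz
  refine (isRigid_iff hℓ hpow).2 fun x hx y hy => ?_
  obtain ⟨H, ⟨⟨hTH, hcyc⟩, hrig⟩, hxH⟩ := exists_notMem x hx
  obtain ⟨n, hn⟩ := mem_sup_zpowers_iff.1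
    (mem_sup_zpowers_of_isCyclic hℓ (fun z => hTH (hpow z)) hxH y)
  refine mem_sup_zpowers_iff.2 ⟨n, by_contra fun hnT => ?_⟩
  obtain ⟨H', ⟨⟨hTH', hcyc'⟩, -⟩, hnH'⟩ := exists_notMem _ hnT
  have hrig' := (isRigid_iff hℓ fun z => le_inf hTH hTH' (hpow z)).1 (hrig H' hTH' hcyc')
  obtain ⟨m, hmH, hmH'⟩ := mem_sup_zpowers_iff.1 (hrig' x (fun hx => hxH hx.1) y hy)
  have hquot : y / x ^ n / (y / x ^ m) = x ^ (m - n) := by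
    rw [zpow_sub, div_div_div_cancel_left, div_eq_mul_inv]
  have hT : x ^ (m - n) ∈ T :=
    zpow_mem_of_zpow_mem_of_notMem hℓ hTH (hpow x) hxH (hquot ▸ H.div_mem hn hmH)
  exact hnH' ((div_mul_cancel (y / x ^ n) (y / x ^ m)).symm ▸
    H'.mul_mem (hquot.symm ▸ hTH' hT) hmH')

theorem map_neg_of_neg_one_mem {A : Type*} [AddCommGroup A] (hneg : -1 ∈ T)
    {f : Additive Kˣ →+ A} (hf : ∀ t ∈ T, f (.ofMul t) = 0) (u : Kˣ) :
    f (.ofMul (-u)) = f (.ofMul u) := by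
  rw [← neg_one_mul, ofMul_mul, map_add, hf _ hneg, zero_add]

-- The sum `u + v` is the multiple by `v` of `1 - x` for `x = -(u / v)`, and `1 - x` is a power of
-- `x` modulo `T`.
theorem IsRigid.collinearSums {F : Type*} [Field F] (hℓ : ℓ.Prime)
    (hpow : ∀ x : Kˣ, x ^ ℓ ∈ T) (hneg : -1 ∈ T) (hrig : IsRigid T) {f g : Additive Kˣ →+ F}
    (hf : ∀ t ∈ T, f (.ofMul t) = 0) (hg : ∀ t ∈ T, g (.ofMul t) = 0) :
    CollinearSums (fun u => f (.ofMul u)) (fun u => g (.ofMul u)) := by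
  intro u v huv
  have hxT : -(u / v) ∉ T := fun hx => by
    have huvT : u / v ∈ T := by simpa using T.mul_mem hneg hx
    have hfuv := hf _ huvT
    have hguv := hg _ huvT
    simp only [ofMul_div, map_sub, sub_eq_zero] at hfuv hguv
    exact huv.elim (· hfuv) (· hguv)
  have hval : (1 : K) - (-(u / v) : Kˣ) = (u + v) / v := by
    have := v.ne_zero
    push_cast
    field_simp
    ring
  have hsum : (u + v : K) ≠ 0 := fun h0 => hxT <| by
    convert T.one_mem
    ext
    have := v.ne_zero
    push_cast
    rw [eq_neg_of_add_eq_zero_left h0]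
    field_simp
  obtain ⟨n, hn⟩ := mem_sup_zpowers_iff.1 <| (isRigid_iff hℓ hpow).1 hrig _ hxT
    (Units.mk0 _ hsum / v) (by rw [hval]; simp)
  have map_sum {f : Additive Kˣ →+ F} (hf : ∀ t ∈ T, f (.ofMul t) = 0) :
      f (.ofMul (Units.mk0 _ hsum)) = f (.ofMul v) + n * (f (.ofMul u) - f (.ofMul v)) := by
    have := map_eq_zsmul_of_div_zpow_mem hf hn
    rw [map_neg_of_neg_one_mem hneg hf, ofMul_div, ofMul_div, map_sub, map_sub,
      zsmul_eq_mul] at this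
    linear_combination this
  exact ⟨_, rfl, n, map_sum hf, map_sum hg⟩

/-- The elements of `Kˣ` at which `IsRigidPair T T` fails. -/
structure IsBad (T : Subgroup Kˣ) (x : Kˣ) : Prop where
  notMem : x ∉ T
  one_sub_notMem : 1 - (x : K) ∉ T.ofUnits
  one_sub_inv_notMem : 1 - (x : K)⁻¹ ∉ T.ofUnits

namespace IsBad

theorem one_sub_ne_zero (hx : IsBad T x) : 1 - (x : K) ≠ 0 := fun h0 => hx.notMem <| by
  convert T.one_mem
  exact Units.ext (sub_eq_zero.1 h0).symm

theorem intCast_ne_zero_and_ne_one (hpow : ∀ x : Kˣ, x ^ ℓ ∈ T) (hneg : -1 ∈ T) (hx : IsBad T x)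
    {w : Kˣ} (hw : (w : K) = 1 - x) {n : ℤ} (hn : w / x ^ n ∈ T) :
    (n : ZMod ℓ) ≠ 0 ∧ (n : ZMod ℓ) ≠ 1 := by
  have zpow_mem {m : ℤ} (hm : (m : ZMod ℓ) = 0) : x ^ m ∈ T := by
    obtain ⟨k, rfl⟩ := (ZMod.intCast_zmod_eq_zero_iff_dvd m ℓ).1 hm
    rw [zpow_mul, zpow_natCast]
    exact T.zpow_mem (hpow x) k
  refine ⟨fun h0 => hx.one_sub_notMem ?_, fun h1 => hx.one_sub_inv_notMem ?_⟩
  · rw [← hw, val_mem_ofUnits_iff]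
    exact div_mul_cancel w (x ^ n) ▸ T.mul_mem hn (zpow_mem h0)
  · have hwx : w / x ∈ T := by
      convert T.mul_mem hn (zpow_mem (m := n - 1) (by simp [h1])) using 1
      rw [zpow_sub_one, div_mul_eq_mul_div, mul_div_assoc, mul_div_cancel_left, div_eq_mul_inv]
    rw [← neg_mem_ofUnits_iff hneg]
    convert val_mem_ofUnits_iff.2 hwx using 1
    have := x.ne_zero
    push_cast
    rw [hw]
    field_simp
    ring

-- If `1 - x ∈ x ^ n T`, the choice `f x = (1 - n) / n` makes the coordinate `α = n / (1 - n)` of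
-- `x` increase by one from `x` to `1 - x`.
theorem exists_addMonoidHom [Fact ℓ.Prime] (hpow : ∀ x : Kˣ, x ^ ℓ ∈ T) (hneg : -1 ∈ T)
    (hrig : IsRigid T) (hx : IsBad T x) (hxy : x ∉ T ⊔ zpowers y) :
    ∃ (f : Additive Kˣ →+ ZMod ℓ) (α : ZMod ℓ), (∀ t ∈ T ⊔ zpowers y, f (.ofMul t) = 0) ∧
      α * f (.ofMul x) = 1 ∧
      ∃ w ∈ T ⊔ zpowers x, (w : K) = 1 - x ∧ (1 + α) * f (.ofMul w) = 1 := by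
  have hw :=
    (isRigid_iff Fact.out hpow).1 hrig x hx.notMem (Units.mk0 _ hx.one_sub_ne_zero) rfl
  obtain ⟨n, hn⟩ := mem_sup_zpowers_iff.1 hw
  obtain ⟨hn0, hn1⟩ := hx.intCast_ne_zero_and_ne_one hpow hneg rfl hn
  have hn1' : 1 - (n : ZMod ℓ) ≠ 0 := sub_ne_zero.2 hn1.symm
  obtain ⟨f, hf, hfx⟩ := exists_addMonoidHom_zmod_of_notMem
    (fun z => le_sup_left (a := T) (hpow z)) hxy ((1 - (n : ZMod ℓ)) / n)
  refine ⟨f, n / (1 - n), hf, ?_, _, hw, rfl, ?_⟩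
  · rw [hfx]
    field_simp
  · rw [map_eq_zsmul_of_div_zpow_mem (fun t ht => hf t (mem_sup_left ht)) hn, hfx, zsmul_eq_mul]
    field_simp
    ring

theorem mem_sup_zpowers (hℓ : ℓ.Prime) (hpow : ∀ x : Kˣ, x ^ ℓ ∈ T) (hneg : -1 ∈ T)
    (hrig : IsRigid T) (hx : IsBad T x) (hy : IsBad T y) : x ∈ T ⊔ zpowers y := by
  have := Fact.mk hℓ
  by_contra hxy
  have hyx : y ∉ T ⊔ zpowers x := fun h => hxy (mem_sup_zpowers_symm hℓ hpow hy.notMem h)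
  obtain ⟨f, α, hf, hfx, w, hw, hwx, hfw⟩ := hx.exists_addMonoidHom hpow hneg hrig hxy
  obtain ⟨g, β, hg, hgy, w', hw', hwy, hgw⟩ := hy.exists_addMonoidHom hpow hneg hrig hyx
  have hfT t (ht : t ∈ T) := hf t (mem_sup_left ht)
  have hgT t (ht : t ∈ T) := hg t (mem_sup_left ht)
  have hxg := hg x (mem_sup_right (mem_zpowers x))
  have hyf := hf y (mem_sup_right (mem_zpowers y))
  have hα := left_ne_zero_of_mul_eq_one hfx
  have hβ := left_ne_zero_of_mul_eq_one hgy
  have hsums := hrig.collinearSums hℓ hpow hneg hfT hgT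
  have hcoords := hsums.hasCoords_natCast_add
    (x := -(x : K)) (y := -(y : K)) (α := α) (β := β)
    ⟨one_ne_zero, 1, by simp⟩
    ⟨hα, -x, by simp, by simp [map_neg_of_neg_one_mem hneg hfT, hfx],
      by simp [map_neg_of_neg_one_mem hneg hgT, hxg]⟩
    ⟨hα, x, by simp, hfx, by simp [hxg]⟩
    ⟨left_ne_zero_of_mul_eq_one hfw, w, by rw [hwx]; ring, hfw, by simp [hg w hw]⟩
    ⟨hβ, -y, by simp, by simp [map_neg_of_neg_one_mem hneg hfT, hyf],
      by simp [map_neg_of_neg_one_mem hneg hgT, hgy]⟩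
    ⟨hβ, y, by simp, by simp [hyf], hgy⟩
    ⟨left_ne_zero_of_mul_eq_one hgw, w', by rw [hwy]; ring, by simp [hf w' hw'], hgw⟩
  exact (hcoords (-α).val).1 (by simp)

end IsBad

theorem IsRigidPair.of_forall_isBad_mem {H : Subgroup Kˣ} (hTH : T ≤ H) (hneg : -1 ∈ T)
    (hbad : ∀ x, IsBad T x → x ∈ H) : IsRigidPair T H where
  le := hTH
  neg_one_mem := hneg
  one_sub_mem x hx0 hxH := by
    by_contra! hx
    lift x to Kˣ using hx0.isUnit
    rw [val_mem_ofUnits_iff] at hxH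
    exact hxH (hbad x ⟨fun hxT => hxH (hTH hxT), hx.1, hx.2⟩)

theorem IsRigid.not_isBad_of_sq_mem (hsq : ∀ x : Kˣ, x ^ 2 ∈ T) (hneg : -1 ∈ T)
    (hrig : IsRigid T) : ¬ IsBad T x := fun hx => by
  obtain ⟨n, hn⟩ := mem_sup_zpowers_iff.1 <|
    (isRigid_iff Nat.prime_two hsq).1 hrig x hx.notMem (Units.mk0 _ hx.one_sub_ne_zero) rfl
  obtain ⟨hn0, hn1⟩ := hx.intCast_ne_zero_and_ne_one hsq hneg rfl hn
  generalize (n : ZMod 2) = c at hn0 hn1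
  fin_cases c
  · exact hn0 rfl
  · exact hn1 rfl

theorem IsRigid.exists_isRigidPair (hℓ : ℓ.Prime) (hpow : ∀ x : Kˣ, x ^ ℓ ∈ T) (hneg : -1 ∈ T)
    (hrig : IsRigid T) : ∃ u, IsRigidPair T (T ⊔ zpowers u) := by
  by_cases hbad : ∃ u, IsBad T u
  · obtain ⟨u, hu⟩ := hbad
    exact ⟨u, .of_forall_isBad_mem le_sup_left hneg fun x hx =>
      hx.mem_sup_zpowers hℓ hpow hneg hrig hu⟩
  · exact ⟨1, .of_forall_isBad_mem le_sup_left hneg fun x hx => (hbad ⟨x, hx⟩).elim⟩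

theorem IsRigidPair.isAdmissible_of_odd (hℓ : Odd ℓ) (hpow : ∀ x : Kˣ, x ^ ℓ ∈ T) {H : Subgroup Kˣ}
    (h : IsRigidPair T H) : IsAdmissible T H := by
  refine h.isAdmissible_or_exists_isExceptional.resolve_right ?_
  rintro ⟨u, hu⟩
  lift u to Kˣ using hu.mem.1.isUnit
  have hsq : u ^ 2 ∈ H := val_mem_ofUnits_iff.1 (by simpa using hu.sq_mem)
  obtain ⟨k, rfl⟩ := hℓ
  have hodd := h.le (hpow u)
  rw [pow_succ, pow_mul, H.mul_mem_cancel_left (H.pow_mem hsq k)] at hodd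
  exact hu.mem.2.1 (val_mem_ofUnits_iff.2 hodd)

theorem IsRigid.exists_isAdmissible (hℓ : ℓ.Prime) (hpow : ∀ x : Kˣ, x ^ ℓ ∈ T) (hneg : -1 ∈ T)
    (hrig : IsRigid T) : ∃ u, IsAdmissible T (T ⊔ zpowers u) := by
  rcases hℓ.eq_two_or_odd' with rfl | hodd
  · have hpair : IsRigidPair T T :=
      .of_forall_isBad_mem le_rfl hneg fun x hx => (hrig.not_isBad_of_sq_mem hpow hneg hx).elim
    rcases hpair.isAdmissible_or_exists_isExceptional with hadm | ⟨u, hu⟩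
    · exact ⟨1, by simpa using hadm⟩
    · lift u to Kˣ using hu.mem.1.isUnit
      exact ⟨u, hu.isAdmissible hpair⟩
  · obtain ⟨u, hu⟩ := hrig.exists_isRigidPair hℓ hpow hneg
    exact ⟨u, hu.isAdmissible_of_odd hodd hpow⟩

end Bad

/-- if `K^{×ℓ} ⊆ T`, `-1 ∈ T` and `T = 𝐇(T)`, then there is a subgroup
`T ≤ H ≤ K^×` with `H/T` cyclic, `H` valuative, and denoting `v = v_H` the coarsest
valuation with `O_v^× ⊆ H` (so `O_v` is the largest valuation subring with unit group
contained in `H`), one has `1 + m_v ⊆ T` and `O_v^× ⊆ H`. -/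
theorem stmt_6 {K : Type*} [Field K] (ℓ : ℕ) (hℓ : ℓ.Prime) (T : Subgroup Kˣ)
    (hpow : ∀ x : Kˣ, x ^ ℓ ∈ T) (hneg : (-1 : Kˣ) ∈ T)
    (hHT : T = Hbold T) :
    ∃ H : Subgroup Kˣ, T ≤ H ∧ IsCyclic (↥H ⧸ T.subgroupOf H) ∧
      ∃ O : ValuationSubring K, O.unitGroup ≤ H ∧
        (∀ O' : ValuationSubring K, O'.unitGroup ≤ H → O' ≤ O) ∧
        (∀ a : K, O.valuation a < 1 → ∃ t ∈ T, ((t : Kˣ) : K) = 1 + a) := by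
  have hrig := isRigid_of_eq_Hbold hℓ hpow hHT
  obtain ⟨u, hadm⟩ := hrig.exists_isAdmissible hℓ hpow hneg
  exact ⟨_, le_sup_left, isCyclic_sup_zpowers_quotient T u, hadm.valuationSubring,
    hadm.unitGroup_valuationSubring_le, fun _ => hadm.le_valuationSubring,
    fun _ => hadm.one_add_mem_of_valuation_lt_one⟩
end

section
/- Let K be an arbitrary field, ℓ a prime, and T a subgroup of K^× with K^{×ℓ} ⊆ T and −1 ∈ T. Assume T ≠ 𝐇(T) and set H = 𝐇(T). Then H is valuative and, denoting by v = v_H the coarsest valuation with O_v^× ⊆ H, one has 1 + m_v ⊆ T and T·O_v^× = H. -/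
/-!
Regard `Kˣ / T` as a vector space over the field with `ℓ` elements. Rigidity fails exactly at the
decompositions `x + y = 1` whose members have linearly independent classes. A linear form is
rigid together with every other linear form if and only if it vanishes at all these classes, so
`𝐇(T) / T` is the subspace which they span.

If this subspace is nonzero, fix such a decomposition `p + q = 1`. For `x ∉ 𝐇(T)`, comparing the
two expressions `1 + x = (x + p) + q` forces `1 + x ∈ T ∪ x T`. Hence the valuation ring can be
recovered as `A ∪ B`, where `A` consists of the `x ∉ 𝐇(T)` with `1 + x ∈ T` (and of `0`), and `B`
of the elements of `𝐇(T)` which multiply `A` into itself; the elements `p` and `q` decide the cases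
in which a sum or a product of two elements of `A` could leave `A ∪ B`. Since `1 + 𝔪 ⊆ T`, neither
member of an independent decomposition nor its inverse lies in `𝔪`, so such members are units and
`T · 𝒪ˣ` is all of `𝐇(T)`.
-/

section CyclicQuotients

theorem isCyclic_closure_pair_iff_s7 {G : Type*} [Group G] {a b : G} :
    IsCyclic (Subgroup.closure {a, b}) ↔
      ∃ e : G, a ∈ Subgroup.zpowers e ∧ b ∈ Subgroup.zpowers e := by
  constructor
  · intro h
    obtain ⟨e, he⟩ := (Subgroup.isCyclic_iff_exists_zpowers_eq_top _).1 h
    exact ⟨e, he ▸ Subgroup.subset_closure (Set.mem_insert a {b}),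
      he ▸ Subgroup.subset_closure (Set.mem_insert_of_mem a rfl)⟩
  · rintro ⟨e, ha, hb⟩
    exact Subgroup.isCyclic_of_le (Subgroup.closure_le _ |>.2 (Set.pair_subset ha hb))

theorem exists_injective_monoidHom_zmod {Q : Type*} [Group Q] [IsCyclic Q] {ℓ : ℕ}
    [Fact ℓ.Prime] (hpow : ∀ x : Q, x ^ ℓ = 1) :
    ∃ f : Q →* Multiplicative (ZMod ℓ), Function.Injective f := by
  have hdvd : Nat.card Q ∣ ℓ := by
    rw [← IsCyclic.exponent_eq_card]
    exact Monoid.exponent_dvd_of_forall_pow_eq_one hpow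
  rcases (Nat.dvd_prime (Fact.out : ℓ.Prime)).1 hdvd with hcard | hcard
  · have : Subsingleton Q := (Nat.card_eq_one_iff_unique.1 hcard).1
    exact ⟨1, Function.injective_of_subsingleton _⟩
  · subst hcard
    exact ⟨(zmodCyclicMulEquiv ‹IsCyclic Q›).symm, MulEquiv.injective _⟩

variable {G : Type*} [Group G]

theorem ker_comp_of_injective {M N : Type*} [Group M] [Group N] {f : M →* N}
    (hf : Function.Injective f) (g : G →* M) : (f.comp g).ker = g.ker := by
  rw [← MonoidHom.comap_ker, (MonoidHom.ker_eq_bot_iff f).2 hf, MonoidHom.comap_bot]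

theorem exists_monoidHom_zmod_ker_eq (H : Subgroup G) [H.Normal] [IsCyclic (G ⧸ H)] {ℓ : ℕ}
    [Fact ℓ.Prime] (hpow : ∀ x : G, x ^ ℓ ∈ H) : ∃ χ : G →* Multiplicative (ZMod ℓ), χ.ker = H := by
  obtain ⟨f, hf⟩ := exists_injective_monoidHom_zmod (Q := G ⧸ H) (ℓ := ℓ) fun x => by
    obtain ⟨x, rfl⟩ := QuotientGroup.mk_surjective x
    rw [← QuotientGroup.mk_pow]
    exact (QuotientGroup.eq_one_iff _).2 (hpow x)
  refine ⟨f.comp (QuotientGroup.mk' H), ?_⟩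
  rw [ker_comp_of_injective hf, QuotientGroup.ker_mk']

theorem isCyclic_quotient_ker {C : Type*} [Group C] [IsCyclic C] (f : G →* C) :
    IsCyclic (G ⧸ f.ker) :=
  isCyclic_of_injective (QuotientGroup.kerLift f) (QuotientGroup.kerLift_injective f)

theorem exists_forall_mem_zpowers_quotient_inf (H H' : Subgroup G) [H.Normal] [H'.Normal]
    [IsCyclic (G ⧸ H')] :
    ∃ e : G ⧸ (H ⊓ H'), ∀ x ∈ H, (x : G ⧸ (H ⊓ H')) ∈ Subgroup.zpowers e := by
  obtain ⟨g, hg⟩ := (Subgroup.isCyclic_iff_exists_zpowers_eq_top (H.map (QuotientGroup.mk' H'))).1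
    inferInstance
  obtain ⟨h, hH, rfl⟩ : g ∈ H.map (QuotientGroup.mk' H') := hg ▸ Subgroup.mem_zpowers g
  refine ⟨h, fun x hx => ?_⟩
  obtain ⟨n, hn⟩ := Subgroup.mem_zpowers_iff.1 (hg ▸ Subgroup.mem_map_of_mem _ hx)
  refine Subgroup.mem_zpowers_iff.2 ⟨n, ?_⟩
  rw [QuotientGroup.mk'_apply, ← QuotientGroup.mk_zpow, QuotientGroup.mk'_apply,
    QuotientGroup.eq] at hn
  rw [← QuotientGroup.mk_zpow, QuotientGroup.eq]
  exact ⟨H.mul_mem (H.inv_mem (H.zpow_mem hH n)) hx, hn⟩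

theorem exists_zmod_module_monoidHom_ker_eq.{u} {G : Type u} [CommGroup G] (T : Subgroup G) {ℓ : ℕ}
    (hpow : ∀ x : G, x ^ ℓ ∈ T) :
    ∃ (V : Type u) (_ : AddCommGroup V) (_ : Module (ZMod ℓ) V) (v : G →* Multiplicative V),
      v.ker = T := by
  have htor (a : Additive (G ⧸ T)) : ℓ • a = 0 := by
    obtain ⟨x, hx⟩ := QuotientGroup.mk_surjective a.toMul
    rw [← toMul_eq_one, toMul_nsmul, ← hx, ← QuotientGroup.mk_pow, QuotientGroup.eq_one_iff]
    exact hpow x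
  let e : G ⧸ T ≃* Multiplicative (Additive (G ⧸ T)) := MulEquiv.toMultiplicative_toAdditive
  refine ⟨Additive (G ⧸ T), inferInstance, AddCommGroup.zmodModule htor,
    e.toMonoidHom.comp (QuotientGroup.mk' T), ?_⟩
  rw [ker_comp_of_injective (f := e.toMonoidHom) e.injective, QuotientGroup.ker_mk']

end CyclicQuotients

section ValuationRing

variable {K Γ Δ : Type*} [Field K] [GroupWithZero Γ] [GroupWithZero Δ]

/-- The candidate for the elements of the valuation ring on which `ψ ≠ 1`: those `x` for which `φ`
takes the value `1` at `1 + x`. The element `0` belongs to it because `ψ 0 = 0`. -/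
def smallElements (φ : K →*₀ Γ) (ψ : K →*₀ Δ) : Set K :=
  {x | ψ x ≠ 1 ∧ φ (1 + x) = 1}

/-- The candidate for the elements of the valuation ring on which `ψ = 1`: those which map
`smallElements φ ψ` into itself. -/
def smallStabilizer (φ : K →*₀ Γ) (ψ : K →*₀ Δ) : Submonoid K where
  carrier := {b | ψ b = 1 ∧ ∀ a ∈ smallElements φ ψ, b * a ∈ smallElements φ ψ}
  one_mem' := ⟨map_one ψ, fun a ha => by rwa [one_mul]⟩
  mul_mem' := fun ⟨hb, hbA⟩ ⟨hc, hcA⟩ =>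
    ⟨by rw [map_mul, hb, hc, one_mul], fun a ha => by
      rw [mul_assoc]; exact hbA _ (hcA a ha)⟩

/-- A pair of multiplicative maps to groups with zero, where `ψ` is coarser than `φ` and `φ` is
rigid outside the kernel of `ψ`, together with a decomposition `p + q = 1` inside the kernel of
`ψ` which `φ` separates. This is the input from which a valuation ring is constructed. -/
structure RigidityDatum (φ : K →*₀ Γ) (ψ : K →*₀ Δ) (p q : K) : Prop where
  map_eq_one_of_map_eq_one : ∀ {x}, φ x = 1 → ψ x = 1
  map_one_add_eq_or : ∀ {x}, ψ x ≠ 1 → φ (1 + x) = 1 ∨ φ (1 + x) = φ x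
  add_eq_one : p + q = 1
  map_left_ne_one : φ p ≠ 1
  map_right_ne_one : φ q ≠ 1
  map_ne_map : φ p ≠ φ q
  neg_one_mem : -1 ∈ smallStabilizer φ ψ
  left_mem : p ∈ smallStabilizer φ ψ
  left_inv_mem : p⁻¹ ∈ smallStabilizer φ ψ
  right_mem : q ∈ smallStabilizer φ ψ

namespace RigidityDatum

variable {φ : K →*₀ Γ} {ψ : K →*₀ Δ} {p q : K} (D : RigidityDatum φ ψ p q)
include D

theorem map_add_eq_or {x y : K} (hx : φ x = 1) (hy : ψ y ≠ 1) :
    φ (x + y) = 1 ∨ φ (x + y) = φ y := by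
  have hx0 : x ≠ 0 := fun h => by simp [h] at hx
  have hyx : ψ (y / x) ≠ 1 := by rwa [map_div₀, D.map_eq_one_of_map_eq_one hx, div_one]
  have hsum : φ (x + y) = φ (1 + y / x) := by
    rw [← one_mul (φ (1 + y / x)), ← hx, ← map_mul, mul_add, mul_one, mul_div_cancel₀ y hx0]
  simpa only [hsum, map_div₀, hx, div_one] using D.map_one_add_eq_or hyx

theorem mem_or_inv_mem_smallElements {x : K} (hx : ψ x ≠ 1) :
    x ∈ smallElements φ ψ ∨ x⁻¹ ∈ smallElements φ ψ := by
  refine (D.map_one_add_eq_or hx).imp (fun h => ⟨hx, h⟩) fun h => ?_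
  have hψ : ψ x⁻¹ ≠ 1 := by rwa [map_inv₀, ne_eq, inv_eq_one]
  refine ⟨hψ, ?_⟩
  rcases eq_or_ne x 0 with rfl | hx0
  · rw [inv_zero, add_zero, map_one]
  · rw [show 1 + x⁻¹ = (1 + x) / x by field_simp; ring, map_div₀, h,
      div_self ((map_ne_zero φ).2 hx0)]

theorem inv_notMem_smallElements {x : K} (hx0 : x ≠ 0) (hx : x ∈ smallElements φ ψ) :
    x⁻¹ ∉ smallElements φ ψ := by
  intro hx'
  refine hx.1 (D.map_eq_one_of_map_eq_one ?_)
  have hprod : 1 + x = x * (1 + x⁻¹) := by field_simp; ring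
  rw [← hx.2, hprod, map_mul, hx'.2, mul_one]

theorem neg_mem_smallElements {x : K} (hx : x ∈ smallElements φ ψ) :
    -x ∈ smallElements φ ψ := by
  rw [← neg_one_mul]
  exact D.neg_one_mem.2 x hx

theorem map_one_sub_eq_one {x : K} (hx : x ∈ smallElements φ ψ) : φ (1 - x) = 1 := by
  rw [sub_eq_add_neg]
  exact (D.neg_mem_smallElements hx).2

theorem map_one_add_add_eq_one_of_map_ne {x y : K} (hx : x ∈ smallElements φ ψ)
    (hy : y ∈ smallElements φ ψ) (hxy : φ x ≠ φ y) : φ (1 + x + y) = 1 := by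
  rcases D.map_add_eq_or hx.2 hy.1 with h | h
  · exact h
  rcases D.map_add_eq_or hy.2 hx.1 with h' | h'
  · rwa [add_right_comm]
  · rw [add_right_comm, h] at h'
    exact absurd h'.symm hxy

theorem map_one_add_add_eq_one {x y : K} (hx : x ∈ smallElements φ ψ) (hy : y ∈ smallElements φ ψ) :
    φ (1 + x + y) = 1 := by
  by_cases hxy : φ x = φ y
  swap
  · exact D.map_one_add_add_eq_one_of_map_ne hx hy hxy
  rcases eq_or_ne y 0 with rfl | hy0
  · rw [add_zero, hx.2]
  have hφy : φ y ≠ 0 := (map_ne_zero φ).2 hy0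
  have hpy := D.left_mem.2 y hy
  have hqy := D.right_mem.2 y hy
  have hp : φ (1 + x + p * y) = 1 := D.map_one_add_add_eq_one_of_map_ne hx hpy <| by
    rw [hxy, map_mul]
    exact (right_eq_mul₀ hφy).not.2 D.map_left_ne_one
  have hq : φ (1 + x + q * y) = 1 := D.map_one_add_add_eq_one_of_map_ne hx hqy <| by
    rw [hxy, map_mul]
    exact (right_eq_mul₀ hφy).not.2 D.map_right_ne_one
  have hsum : 1 + x + p * y + q * y = 1 + x + y := by linear_combination y * D.add_eq_one
  have hsum' : 1 + x + q * y + p * y = 1 + x + y := by linear_combination y * D.add_eq_one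
  rcases hsum ▸ D.map_add_eq_or hp hqy.1 with h | h
  · exact h
  rcases hsum' ▸ D.map_add_eq_or hq hpy.1 with h' | h'
  · exact h'
  · rw [h, map_mul, map_mul] at h'
    exact absurd (mul_right_cancel₀ hφy h').symm D.map_ne_map

theorem map_one_sub_mul_eq_or {x u : K} (hx : x ∈ smallElements φ ψ) (hu : φ (1 - u) = 1) :
    φ (1 - x * u) = 1 ∨ φ (1 - x * u) = φ x := by
  have hψ : ψ (x * (1 - u)) ≠ 1 := by
    rw [map_mul, D.map_eq_one_of_map_eq_one hu, mul_one]
    exact hx.1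
  have hsum : 1 - x + x * (1 - u) = 1 - x * u := by ring
  simpa only [hsum, map_mul, hu, mul_one] using D.map_add_eq_or (D.map_one_sub_eq_one hx) hψ

-- Compare the constraints coming from the factorizations `x * u` and `(p * x) * (p⁻¹ * u)`.
theorem map_one_sub_mul_eq_one_of_map_one_sub {x u : K} (hx : x ∈ smallElements φ ψ)
    (hu : φ (1 - u) = 1) (hpu : φ (1 - p⁻¹ * u) = 1) : φ (1 - x * u) = 1 := by
  rcases eq_or_ne x 0 with rfl | hx0
  · rw [zero_mul, sub_zero, map_one]
  have hp0 : p ≠ 0 := fun h => by simpa [h] using D.left_mem.1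
  rcases D.map_one_sub_mul_eq_or hx hu with h | h
  · exact h
  have hpx := D.map_one_sub_mul_eq_or (D.left_mem.2 x hx) hpu
  rw [show p * x * (p⁻¹ * u) = x * u by field_simp] at hpx
  rcases hpx with h' | h'
  · exact h'
  · rw [h, map_mul] at h'
    exact absurd ((right_eq_mul₀ ((map_ne_zero φ).2 hx0)).1 h') D.map_left_ne_one

theorem map_one_sub_mul_eq_one {x y : K} (hx : x ∈ smallElements φ ψ) (hy : y ∈ smallElements φ ψ) :
    φ (1 - x * y) = 1 :=
  D.map_one_sub_mul_eq_one_of_map_one_sub hx (D.map_one_sub_eq_one hy)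
    (D.map_one_sub_eq_one (D.left_inv_mem.2 y hy))

theorem map_one_add_mul_eq_one {x y : K} (hx : x ∈ smallElements φ ψ) (hy : y ∈ smallElements φ ψ) :
    φ (1 + x * y) = 1 := by
  simpa only [neg_mul, sub_neg_eq_add] using
    D.map_one_sub_mul_eq_one (D.neg_mem_smallElements hx) hy

theorem map_one_add_mul_mul_eq_one {x y z : K} (hx : x ∈ smallElements φ ψ)
    (hy : y ∈ smallElements φ ψ) (hz : z ∈ smallElements φ ψ) : φ (1 + x * (y * z)) = 1 := by
  have hpyz : φ (1 - p⁻¹ * (y * z)) = 1 := by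
    rw [← mul_assoc]
    exact D.map_one_sub_mul_eq_one (D.left_inv_mem.2 y hy) hz
  simpa only [neg_mul, sub_neg_eq_add] using
    D.map_one_sub_mul_eq_one_of_map_one_sub (D.neg_mem_smallElements hx)
      (D.map_one_sub_mul_eq_one hy hz) hpyz

theorem mul_mem_of_mem_smallElements {x y : K} (hx : x ∈ smallElements φ ψ)
    (hy : y ∈ smallElements φ ψ) : x * y ∈ smallElements φ ψ ∪ smallStabilizer φ ψ := by
  by_cases hxy : ψ (x * y) = 1
  · refine Or.inr ⟨hxy, fun z hz => ⟨?_, ?_⟩⟩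
    · rw [map_mul, hxy, one_mul]
      exact hz.1
    · rw [mul_assoc]
      exact D.map_one_add_mul_mul_eq_one hx hy hz
  · exact Or.inl ⟨hxy, D.map_one_add_mul_eq_one hx hy⟩

theorem mul_mem {x y : K} (hx : x ∈ smallElements φ ψ ∪ smallStabilizer φ ψ)
    (hy : y ∈ smallElements φ ψ ∪ smallStabilizer φ ψ) :
    x * y ∈ smallElements φ ψ ∪ smallStabilizer φ ψ := by
  rcases hx with hx | hx <;> rcases hy with hy | hy
  · exact D.mul_mem_of_mem_smallElements hx hy
  · rw [mul_comm]
    exact Or.inl (hy.2 x hx)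
  · exact Or.inl (hx.2 y hy)
  · exact Or.inr (Submonoid.mul_mem _ hx hy)

theorem exists_mem_smallElements_of_notMem_smallStabilizer {x : K} (hx : ψ x = 1)
    (hxB : x ∉ smallStabilizer φ ψ) :
    ∃ a ∈ smallElements φ ψ, a ≠ 0 ∧ (x * a)⁻¹ ∈ smallElements φ ψ := by
  obtain ⟨a, ha, hxa⟩ : ∃ a ∈ smallElements φ ψ, x * a ∉ smallElements φ ψ := by
    by_contra! h
    exact hxB ⟨hx, h⟩
  have hψ : ψ (x * a) ≠ 1 := by
    rw [map_mul, hx, one_mul]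
    exact ha.1
  refine ⟨a, ha, ?_, (D.mem_or_inv_mem_smallElements hψ).resolve_left hxa⟩
  rintro rfl
  exact hxa (by rwa [mul_zero])

theorem mem_or_inv_mem (x : K) :
    x ∈ smallElements φ ψ ∪ smallStabilizer φ ψ ∨
      x⁻¹ ∈ smallElements φ ψ ∪ smallStabilizer φ ψ := by
  by_cases hx : ψ x = 1
  swap
  · exact (D.mem_or_inv_mem_smallElements hx).imp Or.inl Or.inl
  by_contra! h
  have hx' : ψ x⁻¹ = 1 := by rw [map_inv₀, hx, inv_one]
  have hx0 : x ≠ 0 := fun h => by simp [h] at hx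
  obtain ⟨a, ha, ha0, hxa⟩ := D.exists_mem_smallElements_of_notMem_smallStabilizer hx
    fun hB => h.1 (Or.inr hB)
  obtain ⟨b, hb, hb0, hxb⟩ := D.exists_mem_smallElements_of_notMem_smallStabilizer hx'
    fun hB => h.2 (Or.inr hB)
  have hbinv : b⁻¹ ∈ smallElements φ ψ ∪ smallStabilizer φ ψ := by
    rw [show b⁻¹ = (x * a)⁻¹ * (x⁻¹ * b)⁻¹ * a by field_simp]
    exact D.mul_mem (D.mul_mem_of_mem_smallElements hxa hxb) (Or.inl ha)
  refine hbinv.elim (D.inv_notMem_smallElements hb0 hb) fun hB => hb.1 ?_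
  simpa only [map_inv₀, inv_eq_one] using hB.1

theorem neg_div_one_add_mem_smallElements {y : K} (hy : y ∈ smallElements φ ψ) :
    -(y / (1 + y)) ∈ smallElements φ ψ := by
  have hy0 : 1 + y ≠ 0 := fun h => by simpa [h] using hy.2
  refine ⟨?_, ?_⟩
  · rw [← neg_div, map_div₀, D.map_eq_one_of_map_eq_one hy.2, div_one]
    exact (D.neg_mem_smallElements hy).1
  · rw [show 1 + -(y / (1 + y)) = (1 + y)⁻¹ by field_simp; ring, map_inv₀, hy.2, inv_one]

theorem one_add_mem_smallStabilizer {x : K} (hx : x ∈ smallElements φ ψ) :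
    1 + x ∈ smallStabilizer φ ψ := by
  have hψ := D.map_eq_one_of_map_eq_one hx.2
  refine ⟨hψ, fun y hy => ⟨?_, ?_⟩⟩
  · rw [map_mul, hψ, one_mul]
    exact hy.1
  · have hy0 : 1 + y ≠ 0 := fun h => by simpa [h] using hy.2
    have hprod := D.map_one_sub_mul_eq_one hx (D.neg_div_one_add_mem_smallElements hy)
    rw [show 1 + (1 + x) * y = (1 + y) * (1 - x * -(y / (1 + y))) by field_simp; ring,
      map_mul, hy.2, hprod, one_mul]

theorem one_add_mem_of_mem_smallStabilizer {x : K} (hx : x ∈ smallStabilizer φ ψ) :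
    1 + x ∈ smallElements φ ψ ∪ smallStabilizer φ ψ := by
  by_cases hψ : ψ (1 + x) = 1
  · refine Or.inr ⟨hψ, fun y hy => ⟨?_, ?_⟩⟩
    · rw [map_mul, hψ, one_mul]
      exact hy.1
    · rw [add_mul, one_mul, ← add_assoc]
      exact D.map_one_add_add_eq_one hy (hx.2 y hy)
  · refine Or.inl ((D.mem_or_inv_mem_smallElements hψ).elim id fun hinv => ?_)
    rcases eq_or_ne (1 + x) 0 with h0 | h0
    · rwa [h0, inv_zero, ← h0] at hinv
    have hψ' := D.map_eq_one_of_map_eq_one (D.map_one_sub_eq_one hinv)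
    rw [show 1 - (1 + x)⁻¹ = x * (1 + x)⁻¹ by field_simp; ring, map_mul, hx.1, one_mul] at hψ'
    exact absurd hψ' hinv.1

theorem one_add_mem {x : K} (hx : x ∈ smallElements φ ψ ∪ smallStabilizer φ ψ) :
    1 + x ∈ smallElements φ ψ ∪ smallStabilizer φ ψ :=
  hx.elim (fun h => Or.inr (D.one_add_mem_smallStabilizer h)) D.one_add_mem_of_mem_smallStabilizer

theorem add_mem {x y : K} (hx : x ∈ smallElements φ ψ ∪ smallStabilizer φ ψ)
    (hy : y ∈ smallElements φ ψ ∪ smallStabilizer φ ψ) :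
    x + y ∈ smallElements φ ψ ∪ smallStabilizer φ ψ := by
  rcases eq_or_ne x 0 with rfl | hx0
  · rwa [zero_add]
  rcases eq_or_ne y 0 with rfl | hy0
  · rwa [add_zero]
  rcases D.mem_or_inv_mem (y / x) with h | h
  · rw [show x + y = x * (1 + y / x) by field_simp]
    exact D.mul_mem hx (D.one_add_mem h)
  · rw [inv_div] at h
    rw [show x + y = y * (1 + x / y) by field_simp; ring]
    exact D.mul_mem hy (D.one_add_mem h)

/-- The valuation ring attached to a rigidity datum. -/
def valuationSubring : ValuationSubring K where
  carrier := smallElements φ ψ ∪ smallStabilizer φ ψ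
  mul_mem' := D.mul_mem
  one_mem' := Or.inr (Submonoid.one_mem _)
  add_mem' := D.add_mem
  zero_mem' := Or.inl (by simp [smallElements])
  neg_mem' := fun {x} hx => by
    rw [← neg_one_mul]
    exact D.mul_mem (Or.inr D.neg_one_mem) hx
  mem_or_inv_mem' := D.mem_or_inv_mem

theorem map_eq_one_of_valuation_eq_one {x : K} (hx : D.valuationSubring.valuation x = 1) :
    ψ x = 1 := by
  by_contra hψ
  have hx0 : x ≠ 0 := fun h => by simp [h] at hx
  have hmem : x ∈ D.valuationSubring := (ValuationSubring.valuation_le_one_iff _ _).1 hx.le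
  have hinv : x⁻¹ ∈ D.valuationSubring := by
    rw [← ValuationSubring.valuation_le_one_iff, map_inv₀, hx, inv_one]
  have hψ' : ψ x⁻¹ ≠ 1 := by rwa [map_inv₀, ne_eq, inv_eq_one]
  exact D.inv_notMem_smallElements hx0 (hmem.resolve_right fun hB => hψ hB.1)
    (hinv.resolve_right fun hB => hψ' hB.1)

theorem map_one_add_eq_one_of_valuation_lt_one {x : K} (hx : D.valuationSubring.valuation x < 1) :
    φ (1 + x) = 1 := by
  have hmem : x ∈ D.valuationSubring := (ValuationSubring.valuation_le_one_iff _ _).1 hx.le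
  rcases hmem with hA | hB
  · exact hA.2
  have hx0 : x ≠ 0 := fun h => by simpa [h] using hB.1
  have hinv : x⁻¹ ∉ smallStabilizer φ ψ := fun h =>
    ((ValuationSubring.mem_nonunits_iff_or _).1 hx).resolve_left hx0 (Or.inr h)
  obtain ⟨a, ha, ha0, hxa⟩ := D.exists_mem_smallElements_of_notMem_smallStabilizer
    (by rw [map_inv₀, hB.1, inv_one]) hinv
  rw [show x = a * (x⁻¹ * a)⁻¹ by field_simp]
  exact D.map_one_add_mul_eq_one ha hxa

variable {O : ValuationSubring K}

theorem mem_smallElements_of_mem_of_map_ne_one (hO : ∀ x, O.valuation x = 1 → ψ x = 1) {x : K}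
    (hx : x ∈ O) (hψ : ψ x ≠ 1) : x ∈ smallElements φ ψ := by
  refine ⟨hψ, (D.map_one_add_eq_or hψ).resolve_right fun h => hψ ?_⟩
  have hlt : O.valuation x < 1 :=
    ((O.valuation_le_one_iff x).2 hx).lt_of_ne fun hx1 => hψ (hO x hx1)
  have hone : ψ (1 + x) = 1 := hO _ (O.valuation.map_one_add_of_lt hlt)
  have hx0 : x ≠ 0 := by
    rintro rfl
    simp at h
  have hdiv : ψ ((1 + x) / x) = 1 :=
    D.map_eq_one_of_map_eq_one (by rw [map_div₀, h, div_self ((map_ne_zero φ).2 hx0)])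
  rwa [map_div₀, hone, one_div, inv_eq_one] at hdiv

theorem mem_of_mem_smallElements (hO : ∀ x, O.valuation x = 1 → ψ x = 1) {x : K}
    (hx : x ∈ smallElements φ ψ) : x ∈ O := by
  rcases eq_or_ne x 0 with rfl | hx0
  · exact O.zero_mem
  refine (O.mem_or_inv_mem x).resolve_right fun hinv => ?_
  refine D.inv_notMem_smallElements hx0 hx (D.mem_smallElements_of_mem_of_map_ne_one hO hinv ?_)
  rw [map_inv₀, ne_eq, inv_eq_one]
  exact hx.1

theorem le_valuationSubring (hO : ∀ x, O.valuation x = 1 → ψ x = 1) :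
    O ≤ D.valuationSubring := by
  intro x hx
  by_cases hψ : ψ x = 1
  swap
  · exact Or.inl (D.mem_smallElements_of_mem_of_map_ne_one hO hx hψ)
  refine Or.inr ⟨hψ, fun a ha => D.mem_smallElements_of_mem_of_map_ne_one hO
    (O.mul_mem _ _ hx (D.mem_of_mem_smallElements hO ha)) ?_⟩
  rw [map_mul, hψ, one_mul]
  exact ha.1

end RigidityDatum

end ValuationRing

section RigidityDefect

theorem map_neg_of_map_neg_one {M N : Type*} [Monoid M] [HasDistribNeg M] [Monoid N] {f : M →* N}
    (hneg : f (-1) = 1) (x : M) : f (-x) = f x := by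
  rw [← neg_one_mul, map_mul, hneg, one_mul]

variable {K V : Type*} (F : Type*) [Field K] [AddCommGroup V] [Field F] [Module F V]
  (v : Kˣ →* Multiplicative V)

/-- A decomposition `p + q = 1` violating rigidity: the classes of `p` and `q` are linearly
independent in the `F`-vector space `V`. The class of a unit is given by a homomorphism `v` to `V`,
which is written multiplicatively. -/
structure IsIndependentPair (p q : Kˣ) : Prop where
  add_eq_one : (p : K) + q = 1
  linearIndependent : LinearIndependent F ![(v p).toAdd, (v q).toAdd]

/-- The subspace of `V` spanned by the classes of all units which occur in an independent pair. It
measures the failure of rigidity. -/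
def rigidityDefect : Submodule F V :=
  Submodule.span F {a | ∃ x y : Kˣ, IsIndependentPair F v x y ∧ (v x).toAdd = a}

/-- The homomorphism sending a unit to its class modulo `rigidityDefect F v`. -/
def mkDefect : Kˣ →* Multiplicative (V ⧸ rigidityDefect F v) :=
  (rigidityDefect F v).mkQ.toAddMonoidHom.toMultiplicative.comp v

/-- The subgroup of the units whose class lies in `rigidityDefect F v`. When `F` is the prime field
with `ℓ` elements, it is the group `𝐇(T)` for `T = v.ker`. -/
def defectSubgroup : Subgroup Kˣ :=
  (mkDefect F v).ker

variable {F v}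

theorem mem_defectSubgroup {x : Kˣ} :
    x ∈ defectSubgroup F v ↔ (v x).toAdd ∈ rigidityDefect F v :=
  Submodule.Quotient.mk_eq_zero _

theorem ker_le_defectSubgroup : v.ker ≤ defectSubgroup F v := fun x hx => by
  rw [mem_defectSubgroup, MonoidHom.mem_ker.1 hx, toAdd_one]
  exact Submodule.zero_mem _

namespace IsIndependentPair

variable {p q : Kˣ}

theorem symm (h : IsIndependentPair F v p q) : IsIndependentPair F v q p :=
  ⟨by rw [add_comm, h.add_eq_one], LinearIndependent.pair_symm_iff.1 h.linearIndependent⟩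

theorem inv (hneg : v (-1) = 1) (h : IsIndependentPair F v p q) :
    IsIndependentPair F v p⁻¹ (-(q / p)) where
  add_eq_one := by
    have hp := p.ne_zero
    push_cast
    field_simp
    linear_combination -h.add_eq_one
  linearIndependent := by
    have hpq := LinearIndependent.pair_iff.1 h.linearIndependent
    refine LinearIndependent.pair_iff.2 fun s t hst => ?_
    rw [map_neg_of_map_neg_one hneg, map_inv, map_div, toAdd_inv, toAdd_div] at hst
    obtain ⟨hs, rfl⟩ := hpq (-s - t) t (by rw [← hst]; module)
    exact ⟨by linear_combination -hs, rfl⟩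

theorem map_left_ne_one (h : IsIndependentPair F v p q) : v p ≠ 1 :=
  h.linearIndependent.ne_zero 0

theorem map_ne_map (h : IsIndependentPair F v p q) : v p ≠ v q :=
  h.linearIndependent.injective.ne zero_ne_one

theorem left_mem (h : IsIndependentPair F v p q) : p ∈ defectSubgroup F v :=
  mem_defectSubgroup.2 <| Submodule.subset_span ⟨p, q, h, rfl⟩

theorem right_mem (h : IsIndependentPair F v p q) : q ∈ defectSubgroup F v :=
  h.symm.left_mem

end IsIndependentPair

theorem ker_eq_defectSubgroup_of_rigidityDefect_eq_bot (h : rigidityDefect F v = ⊥) :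
    v.ker = defectSubgroup F v := by
  ext x
  rw [mem_defectSubgroup, h, Submodule.mem_bot, toAdd_eq_zero, MonoidHom.mem_ker]

theorem exists_isIndependentPair_of_ne_bot (h : rigidityDefect F v ≠ ⊥) :
    ∃ p q : Kˣ, IsIndependentPair F v p q := by
  by_contra! hpq
  exact h (by simp [rigidityDefect, hpq])

theorem exists_smul_eq_or_isIndependentPair {x y : Kˣ} (hxy : (x : K) + y = 1)
    (hx : v x ≠ 1) :
    (∃ c : F, c • (v x).toAdd = (v y).toAdd) ∨ IsIndependentPair F v x y := by
  by_cases h : LinearIndependent F ![(v x).toAdd, (v y).toAdd]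
  · exact Or.inr ⟨hxy, h⟩
  · rw [LinearIndependent.pair_iff' (toAdd_eq_zero.not.2 hx)] at h
    push Not at h
    exact Or.inl h

theorem exists_smul_eq_of_notMem {x y : Kˣ} (hxy : (x : K) + y = 1)
    (hx : x ∉ defectSubgroup F v) : ∃ c : F, c • (v x).toAdd = (v y).toAdd :=
  (exists_smul_eq_or_isIndependentPair hxy fun h => hx (ker_le_defectSubgroup h)).resolve_right
    fun h => hx h.left_mem

theorem mem_defectSubgroup_of_add_eq_one {x y : Kˣ} (hxy : (x : K) + y = 1)
    (hx : x ∈ defectSubgroup F v) (hx1 : v x ≠ 1) : y ∈ defectSubgroup F v := by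
  rcases exists_smul_eq_or_isIndependentPair (F := F) hxy hx1 with ⟨c, hc⟩ | h
  · rw [mem_defectSubgroup, ← hc]
    exact Submodule.smul_mem _ _ (mem_defectSubgroup.1 hx)
  · exact h.right_mem

section Sum

variable {a b c : Kˣ}

theorem neg_div_add_div_eq_one (habc : (a : K) + b = c) :
    ((-(a / b) : Kˣ) : K) + (c / b : Kˣ) = 1 := by
  have hb := b.ne_zero
  push_cast
  field_simp
  linear_combination -habc

theorem exists_eq_smul_add_smul_of_notMem (hneg : v (-1) = 1) (habc : (a : K) + b = c)
    (hab : (v a).toAdd - (v b).toAdd ∉ rigidityDefect F v) :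
    ∃ n : F, (v c).toAdd = n • (v a).toAdd + (1 - n) • (v b).toAdd := by
  have hnot : -(a / b) ∉ defectSubgroup F v := by
    rwa [mem_defectSubgroup, map_neg_of_map_neg_one hneg, map_div]
  obtain ⟨n, hn⟩ := exists_smul_eq_of_notMem (neg_div_add_div_eq_one habc) hnot
  rw [map_neg_of_map_neg_one hneg, map_div v a, map_div v c, toAdd_div, toAdd_div] at hn
  exact ⟨n, (eq_add_of_sub_eq hn.symm).trans (by module)⟩

theorem sub_mem_rigidityDefect (hneg : v (-1) = 1) (habc : (a : K) + b = c)
    (hab : (v a).toAdd - (v b).toAdd ∈ rigidityDefect F v) (hne : v a ≠ v b) :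
    (v c).toAdd - (v b).toAdd ∈ rigidityDefect F v := by
  have hmem : -(a / b) ∈ defectSubgroup F v := by
    rwa [mem_defectSubgroup, map_neg_of_map_neg_one hneg, map_div]
  have hne' : v (-(a / b)) ≠ 1 := by
    rwa [map_neg_of_map_neg_one hneg, map_div, ne_eq, div_eq_one]
  have h := mem_defectSubgroup_of_add_eq_one (neg_div_add_div_eq_one habc) hmem hne'
  rwa [mem_defectSubgroup, map_div] at h

end Sum

theorem eq_one_of_smul_eq_of_notMem {W : Submodule F V} {x p q : V} {c s t : F} (hx : x ∉ W)
    (hp : p ∈ W) (hq : q ∈ W) (hpq : LinearIndependent F ![p, q])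
    (h : c • x = t • (s • x + (1 - s) • p) + (1 - t) • q) : c = 1 ∧ s = 1 := by
  have hrel : (c - t * s) • x = (t * (1 - s)) • p + (1 - t) • q := by
    rw [sub_smul, h]
    module
  have hcts : c - t * s = 0 := by
    by_contra hne
    refine hx ((W.smul_mem_iff hne).1 ?_)
    rw [hrel]
    exact W.add_mem (W.smul_mem _ hp) (W.smul_mem _ hq)
  rw [hcts, zero_smul] at hrel
  obtain ⟨hts, ht⟩ := LinearIndependent.pair_iff.1 hpq _ _ hrel.symm
  obtain rfl : t = 1 := (sub_eq_zero.1 ht).symm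
  obtain rfl : s = 1 := by linear_combination -hts
  exact ⟨by linear_combination hcts, rfl⟩

theorem IsIndependentPair.map_one_add_eq_or_of_notMem (hneg : v (-1) = 1) {x w y p q : Kˣ}
    (hpq : IsIndependentPair F v p q) (hx : x ∉ defectSubgroup F v) (hw : (1 : K) + x = w)
    (hy : (x : K) + p = y) : v w = 1 ∨ v w = v x ∧ v y = v x := by
  set W := rigidityDefect F v
  rw [mem_defectSubgroup] at hx
  have hyq : (y : K) + q = w := by linear_combination hw - hy + hpq.add_eq_one
  have hxw : ((-x : Kˣ) : K) + w = 1 := by push_cast; linear_combination -hw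
  have smul_mem_iff {n : F} : n • (v x).toAdd ∈ W ↔ n = 0 :=
    ⟨fun h => by_contra fun hn => hx ((W.smul_mem_iff hn).1 h), fun h => by simp [h]⟩
  have hpW : (v p).toAdd ∈ W := mem_defectSubgroup.1 hpq.left_mem
  have hqW : (v q).toAdd ∈ W := mem_defectSubgroup.1 hpq.right_mem
  obtain ⟨c, hc⟩ : ∃ c : F, c • (v x).toAdd = (v w).toAdd := by
    have hx' : -x ∉ defectSubgroup F v := by
      rwa [mem_defectSubgroup, map_neg_of_map_neg_one hneg]
    simpa only [map_neg_of_map_neg_one hneg] using exists_smul_eq_of_notMem hxw hx'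
  obtain ⟨s, hs⟩ := exists_eq_smul_add_smul_of_notMem hneg hy
    fun h => hx ((W.sub_mem_iff_left hpW).1 h)
  have hyq_mem : (v y).toAdd - (v q).toAdd ∈ W ↔ s = 0 := by
    rw [W.sub_mem_iff_left hqW, hs, W.add_mem_iff_left (W.smul_mem _ hpW), smul_mem_iff]
  by_cases hs0 : s = 0
  · have hyp : v y = v p := by
      rwa [hs0, zero_smul, zero_add, sub_zero, one_smul] at hs
    have hwW := sub_mem_rigidityDefect hneg hyq (hyq_mem.2 hs0) (hyp ▸ hpq.map_ne_map)
    rw [W.sub_mem_iff_left hqW, ← hc, smul_mem_iff] at hwW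
    rw [hwW, zero_smul] at hc
    exact Or.inl hc.symm
  · obtain ⟨t, ht⟩ := exists_eq_smul_add_smul_of_notMem hneg hyq (hyq_mem.not.2 hs0)
    rw [← hc, hs] at ht
    obtain ⟨rfl, rfl⟩ := eq_one_of_smul_eq_of_notMem hx hpW hqW hpq.linearIndependent ht
    rw [one_smul] at hc
    rw [one_smul, sub_self, zero_smul, add_zero] at hs
    exact Or.inr ⟨hc.symm, hs⟩

section ExtendZero

variable {M : Type*} [Group M]

open scoped Classical in
/-- The extension of a homomorphism on `Kˣ` to a map of groups with zero on `K`. -/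
noncomputable def extendZero (f : Kˣ →* M) : K →*₀ WithZero M :=
  (WithZero.map' f).comp (MonoidWithZeroHom.ofClass WithZero.withZeroUnitsEquiv.symm)

theorem extendZero_coe (f : Kˣ →* M) (x : Kˣ) : extendZero f (x : K) = (f x : WithZero M) := by
  classical
  simp [extendZero]

theorem extendZero_coe_eq_one_iff {f : Kˣ →* M} {x : Kˣ} : extendZero f (x : K) = 1 ↔ f x = 1 := by
  rw [extendZero_coe, ← WithZero.coe_one, WithZero.coe_inj]

theorem exists_unit_of_extendZero_eq_one {f : Kˣ →* M} {a : K} (h : extendZero f a = 1) :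
    ∃ x : Kˣ, (x : K) = a ∧ f x = 1 := by
  have ha : a ≠ 0 := fun ha => by simp [ha] at h
  exact ⟨Units.mk0 a ha, rfl, extendZero_coe_eq_one_iff.1 h⟩

end ExtendZero

namespace IsIndependentPair

variable {p q : Kˣ}

theorem exists_units_of_notMem (hneg : v (-1) = 1) (h : IsIndependentPair F v p q) {x : Kˣ}
    (hx : x ∉ defectSubgroup F v) :
    ∃ w y : Kˣ, (w : K) = 1 + x ∧ (y : K) = x + p ∧ (v w = 1 ∨ v w = v x ∧ v y = v x) := by
  have hw : (1 : K) + x ≠ 0 := fun h0 => hx <| by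
    obtain rfl : x = -1 := Units.ext (by push_cast; linear_combination h0)
    exact ker_le_defectSubgroup hneg
  have hy : (x : K) + p ≠ 0 := fun h0 => hx <| by
    obtain rfl : x = -p := Units.ext (by push_cast; linear_combination h0)
    rw [mem_defectSubgroup, map_neg_of_map_neg_one hneg, ← mem_defectSubgroup]
    exact h.left_mem
  exact ⟨Units.mk0 _ hw, Units.mk0 _ hy, rfl, rfl, h.map_one_add_eq_or_of_notMem hneg hx rfl rfl⟩

theorem extendZero_one_add_eq_or (hneg : v (-1) = 1) (h : IsIndependentPair F v p q) {x : K}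
    (hx : extendZero (mkDefect F v) x ≠ 1) :
    extendZero v (1 + x) = 1 ∨ extendZero v (1 + x) = extendZero v x := by
  rcases eq_or_ne x 0 with rfl | hx0
  · exact Or.inl (by rw [add_zero, map_one])
  lift x to Kˣ using hx0.isUnit
  obtain ⟨w, y, hw, -, hwx⟩ := h.exists_units_of_notMem hneg (extendZero_coe_eq_one_iff.not.1 hx)
  rw [← hw, extendZero_coe_eq_one_iff, extendZero_coe, extendZero_coe, WithZero.coe_inj]
  exact hwx.imp id And.left

theorem mem_smallStabilizer (hneg : v (-1) = 1) (h : IsIndependentPair F v p q) :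
    (p : K) ∈ smallStabilizer (extendZero v) (extendZero (mkDefect F v)) := by
  have hp : extendZero (mkDefect F v) (p : K) = 1 := extendZero_coe_eq_one_iff.2 h.left_mem
  refine ⟨hp, fun a ha => ⟨by rw [map_mul, hp, one_mul]; exact ha.1, ?_⟩⟩
  rcases eq_or_ne a 0 with rfl | ha0
  · rw [mul_zero, add_zero, map_one]
  lift a to Kˣ using ha0.isUnit
  have ha' : a ∉ defectSubgroup F v := extendZero_coe_eq_one_iff.not.1 ha.1
  obtain ⟨w, y, hw, hy, hwy⟩ := h.exists_units_of_notMem hneg (inv_mem_iff.not.2 ha')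
  have hva : v a ≠ 1 := fun h1 => ha' (ker_le_defectSubgroup h1)
  have haw : v (a * w) = 1 := by
    rw [← extendZero_coe_eq_one_iff, ← ha.2]
    congr 1
    rw [Units.val_mul, hw, Units.val_inv_eq_inv_val]
    field_simp
    ring
  have hy' : v y = v a⁻¹ := by
    refine (hwy.resolve_left fun hw1 => hva ?_).2
    rwa [map_mul, hw1, mul_one] at haw
  have hay : 1 + (p : K) * a = (a * y : Kˣ) := by
    rw [Units.val_mul, hy, Units.val_inv_eq_inv_val]
    field_simp
  rw [hay, extendZero_coe_eq_one_iff, map_mul, hy', map_inv, mul_inv_cancel]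

theorem rigidityDatum (hneg : v (-1) = 1) (h : IsIndependentPair F v p q) :
    RigidityDatum (extendZero v) (extendZero (mkDefect F v)) (p : K) q where
  map_eq_one_of_map_eq_one hx := by
    obtain ⟨x, rfl, hvx⟩ := exists_unit_of_extendZero_eq_one hx
    exact extendZero_coe_eq_one_iff.2 (ker_le_defectSubgroup hvx)
  map_one_add_eq_or := h.extendZero_one_add_eq_or hneg
  add_eq_one := h.add_eq_one
  map_left_ne_one := extendZero_coe_eq_one_iff.not.2 h.map_left_ne_one
  map_right_ne_one := extendZero_coe_eq_one_iff.not.2 h.symm.map_left_ne_one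
  map_ne_map := by
    rw [extendZero_coe, extendZero_coe, ne_eq, WithZero.coe_inj]
    exact h.map_ne_map
  neg_one_mem := by
    have hmul : (-1 : K) = p * ((-(q / p) : Kˣ) : K) * (q⁻¹ : Kˣ) := by
      have hp := p.ne_zero
      have hq := q.ne_zero
      push_cast
      field_simp
    rw [hmul]
    exact mul_mem (mul_mem (h.mem_smallStabilizer hneg)
      ((h.inv hneg).symm.mem_smallStabilizer hneg)) ((h.symm.inv hneg).mem_smallStabilizer hneg)
  left_mem := h.mem_smallStabilizer hneg
  left_inv_mem := by
    rw [← Units.val_inv_eq_inv_val]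
    exact (h.inv hneg).mem_smallStabilizer hneg
  right_mem := h.symm.mem_smallStabilizer hneg

theorem mem_unitGroup (hneg : v (-1) = 1) {O : ValuationSubring K}
    (hO : ∀ a : K, O.valuation a < 1 → ∃ t ∈ v.ker, (t : K) = 1 + a)
    (h : IsIndependentPair F v p q) : p ∈ O.unitGroup := by
  have not_val_lt {x y : Kˣ} (hxy : IsIndependentPair F v x y) : ¬ O.valuation x < 1 := by
    intro hlt
    obtain ⟨t, ht, hty⟩ := hO (-x) (by rwa [Valuation.map_neg])
    obtain rfl : t = y := Units.ext (by rw [hty]; linear_combination -hxy.add_eq_one)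
    exact hxy.symm.map_left_ne_one ht
  rw [ValuationSubring.mem_unitGroup_iff]
  refine le_antisymm (not_lt.1 fun hlt => not_val_lt (h.inv hneg) ?_) (not_lt.1 (not_val_lt h))
  rw [Units.val_inv_eq_inv_val, map_inv₀]
  exact inv_lt_one_of_one_lt₀ hlt

end IsIndependentPair

theorem exists_valuationSubring_of_rigidityDefect_ne_bot (hneg : v (-1) = 1)
    (hW : rigidityDefect F v ≠ ⊥) :
    ∃ O : ValuationSubring K, O.unitGroup ≤ defectSubgroup F v ∧
      (∀ O' : ValuationSubring K, O'.unitGroup ≤ defectSubgroup F v → O' ≤ O) ∧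
      (∀ a : K, O.valuation a < 1 → ∃ t ∈ v.ker, (t : K) = 1 + a) ∧
      ∀ x y : Kˣ, IsIndependentPair F v x y → x ∈ O.unitGroup := by
  obtain ⟨p, q, hpq⟩ := exists_isIndependentPair_of_ne_bot hW
  set D := hpq.rigidityDatum hneg
  have hker (a : K) (ha : D.valuationSubring.valuation a < 1) : ∃ t ∈ v.ker, (t : K) = 1 + a := by
    obtain ⟨t, hta, ht⟩ :=
      exists_unit_of_extendZero_eq_one (D.map_one_add_eq_one_of_valuation_lt_one ha)
    exact ⟨t, ht, hta⟩
  refine ⟨D.valuationSubring, fun x hx => ?_, fun O' hO' => ?_, hker,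
    fun x y hxy => hxy.mem_unitGroup hneg hker⟩
  · exact extendZero_coe_eq_one_iff.1 <|
      D.map_eq_one_of_valuation_eq_one ((ValuationSubring.mem_unitGroup_iff _ _).1 hx)
  · refine D.le_valuationSubring fun x hx => ?_
    have hx0 : x ≠ 0 := fun h => by simp [h] at hx
    lift x to Kˣ using hx0.isUnit
    exact extendZero_coe_eq_one_iff.2 (hO' ((ValuationSubring.mem_unitGroup_iff _ _).2 hx))

end RigidityDefect

section Rigid

variable {K : Type*} [Field K]

theorem isRigid_iff_exists_mem_zpowers {N : Subgroup Kˣ} :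
    IsRigid N ↔ ∀ x y : Kˣ, (x : K) + y = 1 → ∃ e : Kˣ ⧸ N,
      (x : Kˣ ⧸ N) ∈ Subgroup.zpowers e ∧ (y : Kˣ ⧸ N) ∈ Subgroup.zpowers e := by
  constructor
  · intro h x y hxy
    by_cases hx : x ∈ N
    · rw [(QuotientGroup.eq_one_iff x).2 hx]
      exact ⟨y, one_mem _, Subgroup.mem_zpowers _⟩
    · have hy : 1 - (x : K) = y := by linear_combination -hxy
      have hy0 : 1 - (x : K) ≠ 0 := hy ▸ y.ne_zero
      obtain rfl : Units.mk0 _ hy0 = y := Units.ext hy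
      exact isCyclic_closure_pair_iff_s7.1 (h x hx hy0)
  · intro h x _ hy
    exact isCyclic_closure_pair_iff_s7.2 (h x (Units.mk0 _ hy) (by simp))

theorem IsRigid.mul_eq_mul {R : Type*} [CommRing R] {χ η : Kˣ →* Multiplicative R}
    (h : IsRigid (χ.ker ⊓ η.ker)) {x y : Kˣ} (hxy : (x : K) + y = 1) :
    (χ x).toAdd * (η y).toAdd = (χ y).toAdd * (η x).toAdd := by
  obtain ⟨e, hx, hy⟩ := isRigid_iff_exists_mem_zpowers.1 h x y hxy
  obtain ⟨g, rfl⟩ := QuotientGroup.mk_surjective e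
  have map_eq {z : Kˣ} (hz : (z : Kˣ ⧸ χ.ker ⊓ η.ker) ∈ Subgroup.zpowers (g : Kˣ ⧸ _)) :
      ∃ n : ℤ, χ z = χ g ^ n ∧ η z = η g ^ n := by
    obtain ⟨n, hn⟩ := Subgroup.mem_zpowers_iff.1 hz
    rw [← QuotientGroup.mk_zpow, QuotientGroup.eq] at hn
    refine ⟨n, ?_, ?_⟩
    · rw [← map_zpow]
      exact (MonoidHom.eq_iff χ).2 hn.1
    · rw [← map_zpow]
      exact (MonoidHom.eq_iff η).2 hn.2
  obtain ⟨m, hχx, hηx⟩ := map_eq hx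
  obtain ⟨n, hχy, hηy⟩ := map_eq hy
  rw [hχx, hηx, hχy, hηy]
  simp only [toAdd_zpow, zsmul_eq_mul]
  ring

end Rigid

section Hbold

variable {K V : Type*} [Field K] [AddCommGroup V] {ℓ : ℕ} [Fact ℓ.Prime] [Module (ZMod ℓ) V]
  {v : Kˣ →* Multiplicative V}

theorem defectSubgroup_le {N : Subgroup Kˣ} (hker : v.ker ≤ N)
    (hN : ∀ x y : Kˣ, IsIndependentPair (ZMod ℓ) v x y → x ∈ N) :
    defectSubgroup (ZMod ℓ) v ≤ N := by
  intro x hx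
  have hle : rigidityDefect (ZMod ℓ) v ≤
      AddSubgroup.toZModSubmodule ℓ (Subgroup.toAddSubgroup' (N.map v)) := by
    refine Submodule.span_le.2 ?_
    rintro _ ⟨x, y, hxy, rfl⟩
    exact Subgroup.mem_map_of_mem v (hN x y hxy)
  rw [← Subgroup.comap_map_eq_self hker]
  exact hle (mem_defectSubgroup.1 hx)

theorem isRigid_inf_of_defectSubgroup_le {H H' : Subgroup Kˣ}
    (hH : defectSubgroup (ZMod ℓ) v ≤ H) (hH' : v.ker ≤ H') [IsCyclic (Kˣ ⧸ H')] :
    IsRigid (H ⊓ H') := by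
  have hker : v.ker ≤ H ⊓ H' := le_inf (ker_le_defectSubgroup.trans hH) hH'
  refine isRigid_iff_exists_mem_zpowers.2 fun x y hxy => ?_
  by_cases hx : v x = 1
  · rw [(QuotientGroup.eq_one_iff x).2 (hker hx)]
    exact ⟨y, one_mem _, Subgroup.mem_zpowers _⟩
  rcases exists_smul_eq_or_isIndependentPair (F := ZMod ℓ) hxy hx with ⟨c, hc⟩ | hpair
  · have hvy : v y = v (x ^ c.val) := Multiplicative.toAdd.injective <| by
      rw [← hc, map_pow, toAdd_pow, ← Nat.cast_smul_eq_nsmul (ZMod ℓ), ZMod.natCast_zmod_val]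
    have hmk : ((x ^ c.val : Kˣ) : Kˣ ⧸ H ⊓ H') = y :=
      QuotientGroup.eq.2 (hker ((MonoidHom.eq_iff v).1 hvy))
    refine ⟨x, Subgroup.mem_zpowers _, ?_⟩
    rw [← hmk, QuotientGroup.mk_pow]
    exact Subgroup.npow_mem_zpowers _ _
  · obtain ⟨e, he⟩ := exists_forall_mem_zpowers_quotient_inf H H'
    exact ⟨e, he x (hH hpair.left_mem), he y (hH hpair.right_mem)⟩

/-- The character of `Kˣ` obtained by composing `v` with a linear form. -/
def dualCharacter (v : Kˣ →* Multiplicative V) (f : Module.Dual (ZMod ℓ) V) :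
    Kˣ →* Multiplicative (ZMod ℓ) :=
  f.toAddMonoidHom.toMultiplicative.comp v

theorem toAdd_dualCharacter (f : Module.Dual (ZMod ℓ) V) (x : Kˣ) :
    (dualCharacter v f x).toAdd = f (v x).toAdd :=
  rfl

theorem mem_ker_dualCharacter {f : Module.Dual (ZMod ℓ) V} {x : Kˣ} :
    x ∈ (dualCharacter v f).ker ↔ f (v x).toAdd = 0 :=
  Iff.rfl

theorem ker_le_ker_dualCharacter (f : Module.Dual (ZMod ℓ) V) : v.ker ≤ (dualCharacter v f).ker :=
  fun x hx => by rw [mem_ker_dualCharacter, MonoidHom.mem_ker.1 hx, toAdd_one, map_zero]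

theorem hbold_ker_le_defectSubgroup : Hbold v.ker ≤ defectSubgroup (ZMod ℓ) v := by
  intro x hx
  rw [mem_defectSubgroup]
  by_contra hxW
  obtain ⟨f, hfx, hWf⟩ := Submodule.exists_le_ker_of_notMem hxW
  have hle : defectSubgroup (ZMod ℓ) v ≤ (dualCharacter v f).ker := fun y hy =>
    hWf (mem_defectSubgroup.1 hy)
  exact hfx <| Subgroup.mem_sInf.1 hx (dualCharacter v f).ker
    ⟨⟨ker_le_ker_dualCharacter f, isCyclic_quotient_ker _⟩,
      fun _ hH' _ => isRigid_inf_of_defectSubgroup_le hle hH'⟩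

theorem map_eq_one_of_forall_isRigid_inf {χ : Kˣ →* Multiplicative (ZMod ℓ)}
    (hχ : ∀ f : Module.Dual (ZMod ℓ) V, IsRigid (χ.ker ⊓ (dualCharacter v f).ker)) {x y : Kˣ}
    (hxy : IsIndependentPair (ZMod ℓ) v x y) : χ x = 1 := by
  have hrel : -(χ y).toAdd • (v x).toAdd + (χ x).toAdd • (v y).toAdd = 0 := by
    refine (Module.forall_dual_apply_eq_zero_iff (ZMod ℓ) _).1 fun f => ?_
    have hmul := (hχ f).mul_eq_mul hxy.add_eq_one
    rw [toAdd_dualCharacter, toAdd_dualCharacter] at hmul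
    rw [map_add, map_smul, map_smul, smul_eq_mul, smul_eq_mul]
    linear_combination hmul
  exact (LinearIndependent.pair_iff.1 hxy.linearIndependent _ _ hrel).2

theorem defectSubgroup_le_hbold_ker : defectSubgroup (ZMod ℓ) v ≤ Hbold v.ker := by
  refine le_sInf fun H ⟨⟨hker, hcyc⟩, hrig⟩ => defectSubgroup_le hker fun x y hxy => ?_
  have hpow (z : Kˣ) : z ^ ℓ ∈ H := hker <| by
    rw [MonoidHom.mem_ker, map_pow]
    exact ZModModule.char_nsmul_eq_zero ℓ (v z).toAdd
  obtain ⟨χ, rfl⟩ := exists_monoidHom_zmod_ker_eq H hpow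
  exact map_eq_one_of_forall_isRigid_inf
    (fun f => hrig _ (ker_le_ker_dualCharacter f) (isCyclic_quotient_ker _)) hxy

theorem hbold_ker_eq_defectSubgroup : Hbold v.ker = defectSubgroup (ZMod ℓ) v :=
  le_antisymm hbold_ker_le_defectSubgroup defectSubgroup_le_hbold_ker

end Hbold

/-- if `K^{×ℓ} ⊆ T`, `-1 ∈ T` and `T ≠ 𝐇(T)`, then `H := 𝐇(T)` is valuative
and, denoting `v = v_H` the coarsest valuation with `O_v^× ⊆ H` (so `O_v` is the largest
valuation subring with unit group contained in `H`), one has `1 + m_v ⊆ T` and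
`T · O_v^× = H`. -/
theorem stmt_7 {K : Type*} [Field K] (ℓ : ℕ) (hℓ : ℓ.Prime) (T : Subgroup Kˣ)
    (hpow : ∀ x : Kˣ, x ^ ℓ ∈ T) (hneg : (-1 : Kˣ) ∈ T)
    (hHT : T ≠ Hbold T) :
    ∃ O : ValuationSubring K, O.unitGroup ≤ Hbold T ∧
      (∀ O' : ValuationSubring K, O'.unitGroup ≤ Hbold T → O' ≤ O) ∧
      (∀ a : K, O.valuation a < 1 → ∃ t ∈ T, ((t : Kˣ) : K) = 1 + a) ∧
      T ⊔ O.unitGroup = Hbold T := by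
  have : Fact ℓ.Prime := ⟨hℓ⟩
  obtain ⟨V, _, _, v, rfl⟩ := exists_zmod_module_monoidHom_ker_eq T hpow
  rw [hbold_ker_eq_defectSubgroup (ℓ := ℓ)] at hHT ⊢
  have hW : rigidityDefect (ZMod ℓ) v ≠ ⊥ := fun hbot =>
    hHT (ker_eq_defectSubgroup_of_rigidityDefect_eq_bot hbot)
  obtain ⟨O, hO, hmax, hker, hunit⟩ := exists_valuationSubring_of_rigidityDefect_ne_bot hneg hW
  exact ⟨O, hO, hmax, hker, le_antisymm (sup_le ker_le_defectSubgroup hO) <|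
    defectSubgroup_le le_sup_left fun x y hxy => le_sup_right (a := v.ker) (hunit x y hxy)⟩
end
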